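/- arXiv:2303.13061 — 9 statements merged into one kernel-verified Lean document; each statement's English description precedes it below -/
import Mathlib

section
/- Let P and Q be disjoint finite posets and let P ⊕ Q be their ordinal sum. Then the Hibi ring 𝕜[P ⊕ Q] is isomorphic as a 𝕜-algebra to the tensor product 𝕜[P] ⊗_𝕜 𝕜[Q]; in particular 𝕜[P ⊕ Q] ≅ 𝕜[Q ⊕ P]. -/
/-!
STATEMENT 1: For disjoint finite posets `P`, `Q`, the Hibi ring of the ordinal
sum `P ⊕ Q` (poset on `P ⊔ {z} ⊔ Q` with everything of `P` below `z` below
everything of `Q`) is isomorphic to `𝕜[P] ⊗_𝕜 𝕜[Q]`; in particular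
`𝕜[P ⊕ Q] ≅ 𝕜[Q ⊕ P]`.  The ordinal sum is modelled by the lexicographic sum
`α ⊕ₗ PUnit ⊕ₗ β`.
-/

open scoped NNReal TensorProduct

noncomputable section

def latticeA {α : Type*} (L : Set (α → ℤ)) : Set ((α → ℤ) × ℤ) :=
  (fun v => (v, (1 : ℤ))) '' L

/-- The toric ring `𝕜[P]` of an integral polytope with lattice point set `L`. -/
abbrev toricRing (𝕜 : Type*) [Field 𝕜] {α : Type*} (L : Set (α → ℤ)) : Type _ :=
  AddMonoidAlgebra 𝕜 (AddSubmonoid.closure (latticeA L))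

/-- The order polytope `O_Π ⊆ ℝ^Π` of a poset `Π`. -/
def orderPolytope (α : Type*) [PartialOrder α] : Set (α → ℝ) :=
  {x | (∀ i j : α, i ≤ j → x j ≤ x i) ∧ ∀ i, 0 ≤ x i ∧ x i ≤ 1}

/-- The lattice points of the order polytope, as integer vectors. -/
def orderLatticePts (α : Type*) [PartialOrder α] : Set (α → ℤ) :=
  {v | (fun i => (v i : ℝ)) ∈ orderPolytope α}

/-- The Hibi ring `𝕜[Π]`: the toric ring of the order polytope of `Π`. -/
abbrev hibiRing (𝕜 : Type*) [Field 𝕜] (α : Type*) [PartialOrder α] : Type _ :=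
  toricRing 𝕜 (orderLatticePts α)

def sumFun {α β γ : Type*} (x : α → γ) (z : γ) (y : β → γ) : α ⊕ₗ PUnit ⊕ₗ β → γ :=
  fun i => Sum.elim x (fun j => Sum.elim (fun _ => z) y (ofLex j)) (ofLex i)

/-- The unimodular map of ambient lattices. -/
def ambEquiv (α β : Type*) :
    (((α → ℤ) × ℤ) × ((β → ℤ) × ℤ)) ≃+ ((α ⊕ₗ PUnit ⊕ₗ β → ℤ) × ℤ) where
  toFun p := (sumFun (fun i => p.1.1 i + p.2.2) p.2.2 p.2.1, p.1.2 + p.2.2)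
  invFun q := ((fun i => q.1 (Sum.inlₗ i) - q.1 (Sum.inrₗ (Sum.inlₗ PUnit.unit)),
      q.2 - q.1 (Sum.inrₗ (Sum.inlₗ PUnit.unit))),
    (fun j => q.1 (Sum.inrₗ (Sum.inrₗ j)), q.1 (Sum.inrₗ (Sum.inlₗ PUnit.unit))))
  left_inv p := by
    obtain ⟨⟨x, a⟩, ⟨y, b⟩⟩ := p
    simp [sumFun]
  right_inv q := by
    obtain ⟨f, n⟩ := q
    refine Prod.ext ?_ (by simp)
    funext i
    rcases i with i | i | i <;> simp [sumFun] <;> rfl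
  map_add' p q := by
    refine Prod.ext ?_ (by simp; ring)
    funext i
    rcases i with i | i | i
    · exact add_add_add_comm (p.1.1 i) (q.1.1 i) p.2.2 q.2.2
    · rfl
    · rfl

lemma mem_pts {α : Type*} [PartialOrder α] (v : α → ℤ) :
    v ∈ orderLatticePts α ↔ (∀ i j : α, i ≤ j → v j ≤ v i) ∧ ∀ i, 0 ≤ v i ∧ v i ≤ 1 := by
  simp only [orderLatticePts, orderPolytope, Set.mem_ofPred_eq]
  norm_cast

lemma sumFun_mem {α β : Type*} [PartialOrder α] [PartialOrder β] (x : α → ℤ) (z : ℤ)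
    (y : β → ℤ) : sumFun x z y ∈ orderLatticePts (α ⊕ₗ PUnit ⊕ₗ β) ↔
      x ∈ orderLatticePts α ∧ y ∈ orderLatticePts β ∧ (0 ≤ z ∧ z ≤ 1) ∧
        (∀ i, z ≤ x i) ∧ (∀ j, y j ≤ z) := by
  simp only [mem_pts]
  constructor
  · rintro ⟨h1, h2⟩
    refine ⟨⟨fun i j h => ?_, fun i => h2 (Sum.inlₗ i)⟩,
      ⟨fun i j h => ?_, fun i => h2 (Sum.inrₗ (Sum.inrₗ i))⟩,
      h2 (Sum.inrₗ (Sum.inlₗ PUnit.unit)), fun i => ?_, fun j => ?_⟩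
    · exact h1 (Sum.inlₗ i) (Sum.inlₗ j) (by simpa using h)
    · exact h1 (Sum.inrₗ (Sum.inrₗ i)) (Sum.inrₗ (Sum.inrₗ j)) (by simpa using h)
    · exact h1 (Sum.inlₗ i) (Sum.inrₗ (Sum.inlₗ PUnit.unit)) (Sum.Lex.inl_le_inr _ _)
    · exact h1 (Sum.inrₗ (Sum.inlₗ PUnit.unit)) (Sum.inrₗ (Sum.inrₗ j))
        (by simpa using Sum.Lex.inl_le_inr _ _)
  · rintro ⟨⟨hx, hx'⟩, ⟨hy, hy'⟩, hz, hzx, hyz⟩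
    refine ⟨fun i j h => ?_, fun i => ?_⟩
    · rcases i with i | i | i <;> rcases j with j | j | j
      · exact hx i j (Sum.Lex.inl_le_inl_iff.1 h)
      · exact hzx i
      · exact (hyz j).trans (hzx i)
      · exact absurd h Sum.Lex.not_inr_le_inl
      · exact le_rfl
      · exact hyz j
      · exact absurd h Sum.Lex.not_inr_le_inl
      · exact absurd (Sum.Lex.inr_le_inr_iff.1 h) Sum.Lex.not_inr_le_inl
      · exact hy i j (Sum.Lex.inr_le_inr_iff.1 (Sum.Lex.inr_le_inr_iff.1 h))
    · rcases i with i | i | i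
      · exact hx' i
      · exact hz
      · exact hy' i

lemma sumFun_eta {α β γ : Type*} (f : α ⊕ₗ PUnit ⊕ₗ β → γ) :
    f = sumFun (fun i => f (Sum.inlₗ i)) (f (Sum.inrₗ (Sum.inlₗ PUnit.unit)))
      (fun j => f (Sum.inrₗ (Sum.inrₗ j))) := by
  funext i
  rcases i with i | i | i <;> rfl

lemma map_closure (α β : Type*) [PartialOrder α] [PartialOrder β] :
    ((AddSubmonoid.closure (latticeA (orderLatticePts α))).prod
      (AddSubmonoid.closure (latticeA (orderLatticePts β)))).map (ambEquiv α β) =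
    AddSubmonoid.closure (latticeA (orderLatticePts (α ⊕ₗ PUnit ⊕ₗ β))) := by
  apply le_antisymm
  · rw [AddSubmonoid.map_le_iff_le_comap, ← AddSubmonoid.prod_bot_sup_bot_prod,
      ← AddSubmonoid.closure_prod_zero, ← AddSubmonoid.closure_zero_prod]
    refine sup_le ?_ ?_ <;> rw [AddSubmonoid.closure_le]
    · rintro ⟨_, _⟩ ⟨⟨x, hx, rfl⟩, rfl⟩
      refine AddSubmonoid.subset_closure ⟨sumFun x 0 0, ?_, ?_⟩
      · rw [sumFun_mem]
        refine ⟨hx, ?_, by simp, fun i => ((mem_pts x).1 hx).2 i |>.1, by simp⟩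
        simp [mem_pts]
      · simp [ambEquiv]
    · rintro ⟨_, _⟩ ⟨rfl, ⟨y, hy, rfl⟩⟩
      refine AddSubmonoid.subset_closure ⟨sumFun 1 1 y, ?_, ?_⟩
      · rw [sumFun_mem]
        refine ⟨?_, hy, by simp, by simp, fun i => ((mem_pts y).1 hy).2 i |>.2⟩
        simp [mem_pts]
      · simp [ambEquiv]; rfl
  · rw [AddSubmonoid.closure_le]
    rintro _ ⟨f, hf, rfl⟩
    rw [sumFun_eta f] at hf ⊢
    generalize (fun i => f (Sum.inlₗ i)) = x at hf ⊢
    generalize (fun j => f (Sum.inrₗ (Sum.inrₗ j))) = y at hf ⊢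
    generalize f (Sum.inrₗ (Sum.inlₗ PUnit.unit)) = z at hf ⊢
    rw [sumFun_mem] at hf
    obtain ⟨hx, hy, hz, hzx, hyz⟩ := hf
    have hx' := (mem_pts x).1 hx
    have hy' := (mem_pts y).1 hy
    obtain rfl | rfl : z = 0 ∨ z = 1 := by omega
    · obtain rfl : y = 0 := funext fun j => le_antisymm (hyz j) (hy'.2 j).1
      refine ⟨((x, 1), 0), ⟨AddSubmonoid.subset_closure ⟨x, hx, rfl⟩, zero_mem _⟩, ?_⟩
      simp [ambEquiv]
    · obtain rfl : x = 1 := funext fun j => le_antisymm (hx'.2 j).2 (hzx j)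
      refine ⟨(0, (y, 1)), ⟨zero_mem _, AddSubmonoid.subset_closure ⟨y, hy, rfl⟩⟩, ?_⟩
      simp [ambEquiv]; rfl

def tensorAlg (𝕜 : Type*) [Field 𝕜] (M N : Type*) [AddCommMonoid M] [AddCommMonoid N] :
    (AddMonoidAlgebra 𝕜 M ⊗[𝕜] AddMonoidAlgebra 𝕜 N) ≃ₐ[𝕜] AddMonoidAlgebra 𝕜 (M × N) :=
  Algebra.TensorProduct.algEquivOfLinearEquivTensorProduct (AddMonoidAlgebra.tensorEquiv 𝕜)
    (by
      intro a₁ a₂ b₁ b₂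
      induction a₁ using AddMonoidAlgebra.induction_linear with
      | zero => simp
      | add f g hf hg => simp only [add_mul, TensorProduct.add_tmul, map_add, hf, hg]
      | single m r =>
      induction a₂ using AddMonoidAlgebra.induction_linear with
      | zero => simp
      | add f g hf hg => simp only [mul_add, TensorProduct.add_tmul, map_add, hf, hg]
      | single m' r' =>
      induction b₁ using AddMonoidAlgebra.induction_linear with
      | zero => simp
      | add f g hf hg => simp only [add_mul, TensorProduct.tmul_add, map_add, hf, hg]
      | single n s =>
      induction b₂ using AddMonoidAlgebra.induction_linear with
      | zero => simp
      | add f g hf hg => simp only [mul_add, TensorProduct.tmul_add, map_add, hf, hg]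
      | single n' s' =>
        simp [AddMonoidAlgebra.single_mul_single, mul_mul_mul_comm])
    (by simp [AddMonoidAlgebra.one_def]; rfl)

def hibiEquiv (𝕜 : Type*) [Field 𝕜] (α β : Type*) [PartialOrder α] [PartialOrder β] :
    hibiRing 𝕜 (α ⊕ₗ PUnit ⊕ₗ β) ≃ₐ[𝕜] (hibiRing 𝕜 α ⊗[𝕜] hibiRing 𝕜 β) :=
  ((tensorAlg 𝕜 _ _).trans (AddMonoidAlgebra.domCongr 𝕜 𝕜
    (((AddSubmonoid.prodEquiv _ _).symm.trans
      ((ambEquiv α β).addSubmonoidMap _)).trans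
        (AddEquiv.addSubmonoidCongr (map_closure α β))))).symm

theorem stmt_1 (𝕜 : Type*) [Field 𝕜] (α β : Type*) [Fintype α] [Fintype β]
    [PartialOrder α] [PartialOrder β] :
    Nonempty (hibiRing 𝕜 (α ⊕ₗ PUnit ⊕ₗ β) ≃ₐ[𝕜]
        (hibiRing 𝕜 α ⊗[𝕜] hibiRing 𝕜 β)) ∧
      Nonempty (hibiRing 𝕜 (α ⊕ₗ PUnit ⊕ₗ β) ≃ₐ[𝕜] hibiRing 𝕜 (β ⊕ₗ PUnit ⊕ₗ α)) := by
  exact ⟨⟨hibiEquiv 𝕜 α β⟩, ⟨(hibiEquiv 𝕜 α β).trans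
    ((Algebra.TensorProduct.comm 𝕜 _ _).trans (hibiEquiv 𝕜 β α).symm)⟩⟩

end
end

section
/- Work in the facet-data setup below and assume ℤA(P) = ℤ^{d+1}. Let φ : 𝓕 → ℤ^r be a group homomorphism with φ(w_v) = 0 for every v ∈ P ∩ ℤ^d, and set β_F = φ(ε_F) ∈ ℤ^r, writing β_F^{(j)} for the j-th coordinate of β_F. Then for every j ∈ {1,…,r} one has ∑_{F ∈ Ψ(P)} β_F^{(j)} a_F = 0 in ℝ^d and ∑_{F ∈ Ψ(P)} β_F^{(j)} b_F = 0. -/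
/-!
STATEMENT 2: facet-data setup.  `P = conv(intCast '' L) ⊆ ℝ^d` is a
full-dimensional integral polytope whose lattice points are exactly `L`; the
facets of `P` are indexed by a finite type `ι` via supporting data
`a : ι → ℝ^d`, `b : ι → ℝ` satisfying (d1) and (d2) (the integer facet heights
being `D i v`).  Assume `ℤA(P) = ℤ^{d+1}` and let `φ : 𝓕 = ℤ^ι → ℤ^r` be a
group homomorphism vanishing on every `w_v = (D i v)_i`, `v ∈ L`, with
`β i = φ(ε_i)`.  Then `∑_i β_i^{(j)} a_i = 0` and `∑_i β_i^{(j)} b_i = 0` for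
every `j`.
-/

open scoped NNReal

noncomputable section

def intCast {α : Type*} (v : α → ℤ) : α → ℝ := fun i => (v i : ℝ)

/-- A facet of `P`: a nonempty exposed face of dimension `dim P − 1`. -/
def IsFacet {α : Type*} [Fintype α] (P F : Set (α → ℝ)) : Prop :=
  IsExposed ℝ P F ∧ F.Nonempty ∧
    Module.finrank ℝ (affineSpan ℝ F).direction + 1 =
      Module.finrank ℝ (affineSpan ℝ P).direction

theorem stmt_2 (d r : ℕ)
    (L : Finset (Fin d → ℤ)) (hLne : L.Nonempty)
    (P : Set (Fin d → ℝ)) (hP : P = convexHull ℝ (intCast '' (L : Set (Fin d → ℤ))))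
    (hlat : ∀ w : Fin d → ℤ, intCast w ∈ P ↔ w ∈ L)
    (hfull : affineSpan ℝ P = ⊤)
    -- the facets of `P`, indexed by a finite type `ι`, with their supporting data
    (ι : Type*) [Fintype ι] [DecidableEq ι]
    (a : ι → Fin d → ℝ) (b : ι → ℝ)
    -- (d1): each affine functional is nonnegative on `P` and cuts out a facet,
    -- and every facet arises from exactly one index
    (hd1 : ∀ i : ι, ∀ x ∈ P, 0 ≤ (∑ j, x j * a i j) + b i)
    (hfacet : ∀ i : ι, IsFacet P (P ∩ {x | (∑ j, x j * a i j) + b i = 0}))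
    (hall : ∀ F : Set (Fin d → ℝ), IsFacet P F →
      ∃! i : ι, F = P ∩ {x | (∑ j, x j * a i j) + b i = 0})
    -- (d2): the facet heights `d_F(v)` of lattice points are integers `D i v`
    (D : ι → (Fin d → ℤ) → ℤ)
    (hD : ∀ i : ι, ∀ v ∈ L, (D i v : ℝ) = (∑ j, (v j : ℝ) * a i j) + b i)
    -- `ℤA(P) = ℤ^{d+1}`
    (hZA : AddSubgroup.closure (latticeA (L : Set (Fin d → ℤ))) = ⊤)
    -- `φ : 𝓕 → ℤ^r` vanishing on each `w_v`
    (φ : (ι → ℤ) →+ (Fin r → ℤ))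
    (hφ : ∀ v ∈ L, φ (fun i => D i v) = 0)
    (β : ι → Fin r → ℤ) (hβ : ∀ i, β i = φ (Pi.single i 1)) :
    ∀ j : Fin r,
      (∑ i : ι, (β i j : ℝ) • a i) = 0 ∧ (∑ i : ι, (β i j : ℝ) * b i) = 0 := by
  intro j
  have key : ∀ v ∈ L, ∑ i, D i v * β i j = 0 := by
    intro v hv
    have h1 : (fun i => D i v) = ∑ i, D i v • (Pi.single i (1 : ℤ) : ι → ℤ) := by
      funext k
      simp [Finset.sum_apply, Pi.single_apply]
    have h2 := hφ v hv
    rw [h1, map_sum] at h2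
    have h3 := congrFun h2 j
    simp only [map_zsmul, ← hβ, Finset.sum_apply, Pi.smul_apply, smul_eq_mul, Pi.zero_apply] at h3
    exact h3
  let Ψ : ((Fin d → ℤ) × ℤ) →+ ℝ := AddMonoidHom.mk'
    (fun p => ∑ i, (β i j : ℝ) * ((∑ k, (p.1 k : ℝ) * a i k) + (p.2 : ℝ) * b i)) (by
      intro p q
      rw [← Finset.sum_add_distrib]
      refine Finset.sum_congr rfl fun i _ => ?_
      simp only [Prod.fst_add, Prod.snd_add, Pi.add_apply, Int.cast_add, add_mul,
        Finset.sum_add_distrib]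
      ring)
  have hΨ : ∀ p, Ψ p = 0 := by
    intro p
    have hle : AddSubgroup.closure (latticeA (L : Set (Fin d → ℤ))) ≤ Ψ.ker := by
      rw [AddSubgroup.closure_le]
      rintro _ ⟨v, hv, rfl⟩
      change ∑ i, (β i j : ℝ) * ((∑ k, (v k : ℝ) * a i k) + ((1 : ℤ) : ℝ) * b i) = 0
      have h4 : ((∑ i, D i v * β i j : ℤ) : ℝ) = 0 := by rw [key v hv]; simp
      rw [← h4, Int.cast_sum]
      refine Finset.sum_congr rfl fun i _ => ?_
      rw [Int.cast_mul, hD i v hv]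
      push_cast
      ring
    rw [hZA] at hle
    exact hle (AddSubgroup.mem_top p)
  constructor
  · funext k
    have h : ∑ i, (β i j : ℝ) * ((∑ l, (((Pi.single k 1 : Fin d → ℤ) l : ℤ) : ℝ) * a i l)
        + ((0 : ℤ) : ℝ) * b i) = 0 := hΨ (Pi.single k 1, 0)
    simpa [Pi.single_apply, Finset.sum_apply] using h
  · have h : ∑ i, (β i j : ℝ) * ((∑ l, (((0 : Fin d → ℤ) l : ℤ) : ℝ) * a i l)
        + ((1 : ℤ) : ℝ) * b i) = 0 := hΨ (0, 1)
    simpa using h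

end
end

section
/- Work in the facet-data setup below; assume P is normal and ℤA(P) = ℤ^{d+1}, and let φ : 𝓕 → ℤ^r be a surjective group homomorphism whose kernel is exactly the subgroup S generated by {w_v : v ∈ P ∩ ℤ^d}; set β_F = φ(ε_F). Let u ∈ ℝ^d be such that 0 lies in the interior of P + u, and put b'_F = b_F − ⟨a_F, u⟩ (so b'_F > 0 for every F ∈ Ψ(P)). Then the r vectors b^{(j)} := (b'_F β_F^{(j)})_{F ∈ Ψ(P)} ∈ ℝ^{Ψ(P)}, j = 1,…,r, form a basis of the linear subspace D = {α ∈ ℝ^{Ψ(P)} : ∑_{F ∈ Ψ(P)} α_F · (a_F / b'_F) = 0 in ℝ^d and ∑_{F ∈ Ψ(P)} α_F = 0}. (D is the space of affine dependencies among the vertices a_F/b'_F of the polar dual (P+u)°, so this says that (b'_F β_F)_{F ∈ Ψ(P)} is a Gale-transform of the dual polytope of P.) -/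
/-!
STATEMENT 3: in the facet-data setup, with `P` normal, `ℤA(P) = ℤ^{d+1}`, and
`φ : 𝓕 → ℤ^r` a surjective homomorphism with kernel exactly the subgroup `S`
generated by the `w_v`, set `β i = φ(ε_i)`.  If `0` is interior to `P + u` and
`b' i = b i − ⟨a i, u⟩` (so `b' i > 0`), then the `r` vectors
`(b' i * β i j)_{i ∈ ι}` (`j = 1,…,r`) form a basis of the space `D` of affine
dependencies among the vertices `a i / b' i` of the polar dual of `P + u`:
they are linearly independent and span exactly
`D = {α : ℝ^ι | ∑ i α i • (a i / b' i) = 0 and ∑ i α i = 0}`.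
-/

open scoped NNReal Pointwise

noncomputable section

def prodCast {α : Type*} (x : (α → ℤ) × ℤ) : (α → ℝ) × ℝ :=
  (intCast x.1, (x.2 : ℝ))

/-- Normality of an integral polytope: `ℕA(P) = ℤA(P) ∩ ℝ≥0A(P)`. -/
def IsNormalPolytope {α : Type*} (L : Set (α → ℤ)) : Prop :=
  ∀ x : (α → ℤ) × ℤ,
    x ∈ AddSubmonoid.closure (latticeA L) ↔
      x ∈ AddSubgroup.closure (latticeA L) ∧
        prodCast x ∈ Submodule.span ℝ≥0 (prodCast '' latticeA L)

theorem stmt_3 (d r : ℕ)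
    (L : Finset (Fin d → ℤ)) (hLne : L.Nonempty)
    (P : Set (Fin d → ℝ)) (hP : P = convexHull ℝ (intCast '' (L : Set (Fin d → ℤ))))
    (hlat : ∀ w : Fin d → ℤ, intCast w ∈ P ↔ w ∈ L)
    (hfull : affineSpan ℝ P = ⊤)
    -- the facets of `P`, indexed by a finite type `ι`, with their supporting data
    (ι : Type*) [Fintype ι] [DecidableEq ι]
    (a : ι → Fin d → ℝ) (b : ι → ℝ)
    (hd1 : ∀ i : ι, ∀ x ∈ P, 0 ≤ (∑ j, x j * a i j) + b i)
    (hfacet : ∀ i : ι, IsFacet P (P ∩ {x | (∑ j, x j * a i j) + b i = 0}))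
    (hall : ∀ F : Set (Fin d → ℝ), IsFacet P F →
      ∃! i : ι, F = P ∩ {x | (∑ j, x j * a i j) + b i = 0})
    (D : ι → (Fin d → ℤ) → ℤ)
    (hD : ∀ i : ι, ∀ v ∈ L, (D i v : ℝ) = (∑ j, (v j : ℝ) * a i j) + b i)
    -- `P` is normal and `ℤA(P) = ℤ^{d+1}`
    (hnormal : IsNormalPolytope (L : Set (Fin d → ℤ)))
    (hZA : AddSubgroup.closure (latticeA (L : Set (Fin d → ℤ))) = ⊤)
    -- `φ : 𝓕 → ℤ^r` surjective with kernel exactly `S = ⟨w_v : v ∈ L⟩`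
    (φ : (ι → ℤ) →+ (Fin r → ℤ)) (hsurj : Function.Surjective φ)
    (hker : ∀ y : ι → ℤ, φ y = 0 ↔
      y ∈ AddSubgroup.closure {w | ∃ v ∈ L, w = fun i => D i v})
    (β : ι → Fin r → ℤ) (hβ : ∀ i, β i = φ (Pi.single i 1))
    -- `0` is interior to `P + u`, and `b' i = b i − ⟨a i, u⟩ > 0`
    (u : Fin d → ℝ) (hu : (0 : Fin d → ℝ) ∈ interior ((fun x => x + u) '' P))
    (b' : ι → ℝ) (hb' : ∀ i, b' i = b i - ∑ j, a i j * u j)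
    (hb'pos : ∀ i, 0 < b' i) :
    LinearIndependent ℝ (fun j : Fin r => (fun i => b' i * (β i j : ℝ) : ι → ℝ)) ∧
      ∀ α : ι → ℝ,
        α ∈ Submodule.span ℝ
            (Set.range (fun j : Fin r => (fun i => b' i * (β i j : ℝ) : ι → ℝ))) ↔
          ((∑ i : ι, α i • ((b' i)⁻¹ • a i)) = 0 ∧ (∑ i : ι, α i) = 0) := by
  have hphi : ∀ (y : ι → ℤ) (j : Fin r), φ y j = ∑ i, y i * β i j := by
    intro y j
    have h1 : y = ∑ i, y i • (Pi.single i (1 : ℤ) : ι → ℤ) := by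
      funext k
      simp [Finset.sum_apply, Pi.single_apply]
    conv_lhs => rw [h1]
    rw [map_sum, Finset.sum_apply]
    refine Finset.sum_congr rfl fun i _ => ?_
    rw [map_zsmul, ← hβ]
    simp
  choose s hs using fun k : Fin r => hsurj (Pi.single k 1)
  have hsβ : ∀ k j : Fin r, (∑ i, (s k i : ℝ) * (β i j : ℝ)) = if j = k then 1 else 0 := by
    intro k j
    have h1 := hphi (s k) j
    rw [hs, Pi.single_apply] at h1
    have h2 := congrArg (fun z : ℤ => (z : ℝ)) h1
    push_cast at h2
    exact h2.symm
  have hne : ∀ i, b' i ≠ 0 := fun i => (hb'pos i).ne'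
  have horth : ∀ j : Fin r, ∀ v ∈ L, (∑ i, (β i j : ℝ) * ((∑ k, (v k : ℝ) * a i k) + b i)) = 0 := by
    intro j v hv
    have h1 := (hker (fun i => D i v)).2 (AddSubgroup.subset_closure ⟨v, hv, rfl⟩)
    have h2 := hphi (fun i => D i v) j
    rw [h1] at h2
    have h3 := congrArg (fun z : ℤ => (z : ℝ)) h2
    push_cast at h3
    rw [Pi.zero_apply] at h3
    rw [show (∑ i, (β i j : ℝ) * ((∑ k, (v k : ℝ) * a i k) + b i)) =
      ∑ i, (D i v : ℝ) * (β i j : ℝ) from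
        Finset.sum_congr rfl fun i _ => by rw [hD i v hv, mul_comm]]
    simpa using h3.symm
  have hdep : ∀ γ : ι → ℝ,
      (∀ v ∈ L, (∑ i, γ i * ((∑ k, (v k : ℝ) * a i k) + b i)) = 0) →
        (∀ k, ∑ i, γ i * a i k = 0) ∧ ∑ i, γ i * b i = 0 := by
    intro γ hγ
    let g : ((Fin d → ℤ) × ℤ) →+ ℝ :=
      { toFun := fun x => ∑ i, γ i * ((∑ k, (x.1 k : ℝ) * a i k) + (x.2 : ℝ) * b i)
        map_zero' := by simp
        map_add' := by
          intro x y
          rw [← Finset.sum_add_distrib]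
          refine Finset.sum_congr rfl fun i _ => ?_
          simp only [Prod.fst_add, Prod.snd_add, Pi.add_apply, Int.cast_add, add_mul,
            Finset.sum_add_distrib]
          ring }
    have hg : ∀ x, g x = 0 := by
      intro x
      have hx : x ∈ AddSubgroup.closure (latticeA (L : Set (Fin d → ℤ))) := by
        rw [hZA]; trivial
      have hle : AddSubgroup.closure (latticeA (L : Set (Fin d → ℤ))) ≤ g.ker := by
        rw [AddSubgroup.closure_le]
        rintro _ ⟨v, hv, rfl⟩
        have := hγ v hv
        simpa [g, AddMonoidHom.mem_ker] using this
      exact hle hx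
    constructor
    · intro k
      have := hg (Pi.single k 1, 0)
      simpa [g, Pi.single_apply] using this
    · have := hg (0, 1)
      simpa [g] using this
  have hexp : ∀ (γ : ι → ℝ) (x : Fin d → ℝ), (∀ k, ∑ i, γ i * a i k = 0) →
      ∑ i, γ i * (∑ k, a i k * x k) = 0 := by
    intro γ x h
    simp_rw [Finset.mul_sum]
    rw [Finset.sum_comm]
    refine Finset.sum_eq_zero fun k _ => ?_
    have := h k
    calc ∑ i, γ i * (a i k * x k) = (∑ i, γ i * a i k) * x k := by
          rw [Finset.sum_mul]
          exact Finset.sum_congr rfl fun i _ => by ring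
      _ = 0 := by rw [this, zero_mul]
  constructor
  · rw [Fintype.linearIndependent_iff]
    intro c hc k
    have h1 : ∀ i, ∑ j, c j * (β i j : ℝ) = 0 := by
      intro i
      have := congrFun hc i
      simp only [Finset.sum_apply, Pi.smul_apply, smul_eq_mul, Pi.zero_apply] at this
      have h2 : b' i * ∑ j, c j * (β i j : ℝ) = 0 := by
        rw [Finset.mul_sum, ← this]
        exact Finset.sum_congr rfl fun j _ => by ring
      exact (mul_eq_zero.1 h2).resolve_left (hne i)
    have h2 : ∑ i, (s k i : ℝ) * ∑ j, c j * (β i j : ℝ) = c k := by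
      simp_rw [Finset.mul_sum]
      rw [Finset.sum_comm]
      calc ∑ j, ∑ i, (s k i : ℝ) * (c j * (β i j : ℝ))
          = ∑ j, c j * ∑ i, (s k i : ℝ) * (β i j : ℝ) := by
            refine Finset.sum_congr rfl fun j _ => ?_
            rw [Finset.mul_sum]
            exact Finset.sum_congr rfl fun i _ => by ring
        _ = c k := by simp [hsβ]
    rw [← h2]
    simp [h1]
  · intro α
    constructor
    · intro hα
      induction hα using Submodule.span_induction with
      | mem x hx =>
        obtain ⟨j, rfl⟩ := hx
        obtain ⟨h1, h2⟩ := hdep (fun i => (β i j : ℝ)) (horth j)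
        constructor
        · funext k
          simp only [Finset.sum_apply, Pi.smul_apply, smul_eq_mul, Pi.zero_apply]
          rw [← h1 k]
          refine Finset.sum_congr rfl fun i _ => ?_
          have := hne i
          field_simp
        · have h3 := hexp (fun i => (β i j : ℝ)) u h1
          calc ∑ i, b' i * (β i j : ℝ)
              = ∑ i, (β i j : ℝ) * b i - ∑ i, (β i j : ℝ) * ∑ k, a i k * u k := by
                rw [← Finset.sum_sub_distrib]
                exact Finset.sum_congr rfl fun i _ => by rw [hb']; ring
            _ = 0 := by rw [h2, h3, sub_zero]
      | zero => simp
      | add x y _ _ hx hy =>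
        simp only [Pi.add_apply, add_smul, Finset.sum_add_distrib]
        rw [hx.1, hy.1, hx.2, hy.2]
        simp
      | smul t x _ hx =>
        simp only [Pi.smul_apply, smul_assoc, ← Finset.smul_sum]
        rw [hx.1, hx.2]
        simp
    · rintro ⟨hα1, hα2⟩
      let γ : ι → ℝ := fun i => α i * (b' i)⁻¹
      have hαγ : ∀ i, α i = b' i * γ i := by
        intro i
        have := hne i
        simp only [γ]
        field_simp
      have h1 : ∀ k, ∑ i, γ i * a i k = 0 := by
        intro k
        have := congrFun hα1 k
        simp only [Finset.sum_apply, Pi.smul_apply, smul_eq_mul, Pi.zero_apply] at this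
        rw [← this]
        exact Finset.sum_congr rfl fun i _ => by simp only [γ]; ring
      have h2 : ∑ i, γ i * b i = 0 := by
        have h3 := hexp γ u h1
        calc ∑ i, γ i * b i = ∑ i, α i + ∑ i, γ i * ∑ k, a i k * u k := by
              rw [← Finset.sum_add_distrib]
              exact Finset.sum_congr rfl fun i _ => by rw [hαγ, hb']; ring
          _ = 0 := by rw [hα2, h3, add_zero]
      have hS : ∀ y : ι → ℤ, φ y = 0 → ∑ i, γ i * (y i : ℝ) = 0 := by
        intro y hy
        rw [hker] at hy
        induction hy using AddSubgroup.closure_induction with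
        | mem x hx =>
          obtain ⟨v, hv, rfl⟩ := hx
          have h3 := hexp γ (fun k => (v k : ℝ)) h1
          calc ∑ i, γ i * (D i v : ℝ)
              = ∑ i, γ i * (∑ k, a i k * (v k : ℝ)) + ∑ i, γ i * b i := by
                rw [← Finset.sum_add_distrib]
                refine Finset.sum_congr rfl fun i _ => ?_
                rw [hD i v hv, mul_add]
                simp_rw [mul_comm (a i _)]
            _ = 0 := by rw [h3, h2, add_zero]
        | zero => simp
        | add x y _ _ hx hy =>
          simp only [Pi.add_apply, Int.cast_add, mul_add, Finset.sum_add_distrib]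
          rw [hx, hy, add_zero]
        | neg x _ hx =>
          simp only [Pi.neg_apply, Int.cast_neg, mul_neg, Finset.sum_neg_distrib]
          rw [hx, neg_zero]
      have hrep : ∀ i, γ i = ∑ j, (∑ l, γ l * (s j l : ℝ)) * (β i j : ℝ) := by
        intro i
        have h3 := hS (Pi.single i 1 - ∑ j, β i j • s j) (by
          rw [map_sub, map_sum, ← hβ]
          simp_rw [map_zsmul, hs]
          funext k
          simp [Finset.sum_apply, Pi.single_apply])
        simp only [Pi.sub_apply, Finset.sum_apply, Pi.smul_apply, smul_eq_mul, Int.cast_sub,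
          Int.cast_sum, Int.cast_mul, mul_sub, Finset.sum_sub_distrib] at h3
        have h4 : ∑ x, γ x * (((Pi.single i 1 : ι → ℤ) x : ℤ) : ℝ) = γ i := by
          simp [Pi.single_apply]
        rw [h4, sub_eq_zero] at h3
        refine h3.trans ?_
        simp_rw [Finset.mul_sum, Finset.sum_mul]
        rw [Finset.sum_comm]
        exact Finset.sum_congr rfl fun j _ => Finset.sum_congr rfl fun l _ => by ring
      have hsum : α = ∑ j, (∑ l, γ l * (s j l : ℝ)) •
          (fun i => b' i * (β i j : ℝ) : ι → ℝ) := by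
        funext i
        rw [hαγ, hrep i]
        simp only [Finset.sum_apply, Pi.smul_apply, smul_eq_mul, Finset.mul_sum]
        exact Finset.sum_congr rfl fun j _ => by ring
      rw [hsum]
      exact Submodule.sum_mem _ fun j _ =>
        Submodule.smul_mem _ _ (Submodule.subset_span ⟨j, rfl⟩)


end
end

section
/- For all positive integers n_1,…,n_k, the polytope P_{n_1,…,n_k} has the half-space representation P_{n_1,…,n_k} = {x ∈ ℝ^d : x_i ≥ 0 for every i ∈ {1,…,d}, and ⟨x, f_p⟩ + 1 ≥ 0 for every p ∈ {1,…,k}}, and this representation is irreducible: each of the d hyperplanes {x_i = 0} and each of the k hyperplanes {⟨x, f_p⟩ + 1 = 0} cuts out a facet of P_{n_1,…,n_k}, so P_{n_1,…,n_k} has exactly d + k facets. -/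
/-!
STATEMENT 4: the half-space representation of `P_{n₁,…,n_k}`.  Coordinates are
indexed by `ι = Σ p : Fin k, Fin (n p)` (the blocks `B_{n_p}`).  The polytope
`P = conv({0} ∪ B_d ∪ B_{n₁,…,n_k})` equals
`{x : x_i ≥ 0 for all i, and ⟨x, f_p⟩ + 1 ≥ 0 for all p}`, each of the `d + k`
hyperplanes cuts out a facet, these facets are pairwise distinct, and `P` has
exactly `d + k` facets.
-/

open scoped NNReal

noncomputable section

/-- The coordinate index type: the disjoint union of the blocks `B_{n_p}`. -/
abbrev blockIdx (k : ℕ) (n : Fin k → ℕ) : Type := (p : Fin k) × Fin (n p)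

/-- The vertex `i₁ + ⋯ + i_k ∈ B_{n₁,…,n_k}` selecting `c p ∈ B_{n_p}` in each block. -/
def chooseVec {k : ℕ} {n : Fin k → ℕ} (c : ∀ p, Fin (n p)) : blockIdx k n → ℝ :=
  fun j => if c j.1 = j.2 then 1 else 0

/-- The vertex set `V_{n₁,…,n_k} = {0} ∪ B_d ∪ B_{n₁,…,n_k}`. -/
def vertexSet (k : ℕ) (n : Fin k → ℕ) : Set (blockIdx k n → ℝ) :=
  {0} ∪ {v | ∃ j : blockIdx k n, v = Pi.single j 1} ∪ {v | ∃ c : ∀ p, Fin (n p), v = chooseVec c}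

/-- The polytope `P_{n₁,…,n_k}`. -/
def polyP (k : ℕ) (n : Fin k → ℕ) : Set (blockIdx k n → ℝ) :=
  convexHull ℝ (vertexSet k n)

/-- The vector `f_p = (k−2)·1_p − ∑_{q ≠ p} 1_q`. -/
def fvec {k : ℕ} {n : Fin k → ℕ} (p : Fin k) : blockIdx k n → ℝ :=
  fun j => if j.1 = p then (k : ℝ) - 2 else -1

lemma aux_direction_top {α : Type*} [Fintype α] [DecidableEq α] (V : Submodule ℝ (α → ℝ))
    (h : ∀ j, Pi.single j (1 : ℝ) ∈ V) : V = ⊤ := by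
  rw [eq_top_iff]
  intro x _
  rw [pi_eq_sum_univ' x]
  refine Submodule.sum_mem _ fun j _ => Submodule.smul_mem _ _ ?_
  have := h j
  convert this using 1

lemma aux_isFacet {α : Type*} [Fintype α] [DecidableEq α] (P : Set (α → ℝ))
    (φ : (α → ℝ) →L[ℝ] ℝ) (c : ℝ)
    (hP : ∀ x ∈ P, 0 ≤ φ x + c)
    (hdim : Module.finrank ℝ (affineSpan ℝ P).direction = Fintype.card α)
    (hne : (P ∩ {x | φ x + c = 0}).Nonempty) (w : α → ℝ) (hw : φ w ≠ 0)
    (hspan : ∀ j, Pi.single j (1 : ℝ) ∈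
      vectorSpan ℝ (P ∩ {x | φ x + c = 0}) ⊔ Submodule.span ℝ {w}) :
    IsFacet P (P ∩ {x | φ x + c = 0}) := by
  refine ⟨fun _ => ⟨-φ, ?_⟩, hne, ?_⟩
  · obtain ⟨g, hgP, hg⟩ := hne
    have hg' : φ g + c = 0 := hg
    ext x
    constructor
    · rintro ⟨hx, hx0⟩
      have hx0' : φ x + c = 0 := hx0
      refine ⟨hx, fun y hy => ?_⟩
      have := hP y hy
      simp only [neg_apply]
      linarith
    · rintro ⟨hx, hx0⟩
      refine ⟨hx, ?_⟩
      have h1 := hx0 g hgP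
      have h2 := hP x hx
      simp only [neg_apply] at h1
      show φ x + c = 0
      linarith
  · rw [hdim, direction_affineSpan]
    set V := vectorSpan ℝ (P ∩ {x | φ x + c = 0}) with hV
    have htop := aux_direction_top _ hspan
    have h1 : Fintype.card α ≤ Module.finrank ℝ V + 1 := by
      have h2 := Submodule.finrank_add_le_finrank_add_finrank V (Submodule.span ℝ {w})
      have hw0 : w ≠ 0 := by rintro rfl; simp at hw
      rw [htop, finrank_top, finrank_span_singleton hw0, Module.finrank_fintype_fun_eq_card] at h2
      exact h2
    have hker : V ≤ LinearMap.ker (φ : (α → ℝ) →ₗ[ℝ] ℝ) := by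
      rw [hV, vectorSpan_def, Submodule.span_le]
      rintro _ ⟨x, ⟨_, hx⟩, y, ⟨_, hy⟩, rfl⟩
      have hx' : φ x + c = 0 := hx
      have hy' : φ y + c = 0 := hy
      simp only [SetLike.mem_coe, LinearMap.mem_ker, vsub_eq_sub, map_sub,
        ContinuousLinearMap.coe_coe]
      linarith
    have h3 := Submodule.finrank_mono hker
    have hφ : (φ : (α → ℝ) →ₗ[ℝ] ℝ) ≠ 0 := by
      intro h
      exact hw (by simpa using congrArg (fun f => f w) h)
    have h4 := Module.Dual.finrank_ker_add_one_of_ne_zero hφ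
    rw [Module.finrank_fintype_fun_eq_card] at h4
    omega

lemma aux_classify {α ι : Type*} [Fintype α] [Fintype ι] [Nonempty ι] (P : Set (α → ℝ))
    (hconv : Convex ℝ P)
    (φ : ι → (α → ℝ) →L[ℝ] ℝ) (c : ι → ℝ)
    (hP : P = {x | ∀ h, 0 ≤ φ h x + c h})
    (hG : ∀ h, IsFacet P (P ∩ {x | φ h x + c h = 0})) (F : Set (α → ℝ)) (hF : IsFacet P F) :
    ∃ h, P ∩ {x | φ h x + c h = 0} = F := by
  obtain ⟨hexp, hne, hrank⟩ := hF
  have hFconv : Convex ℝ F := hexp.convex hconv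
  have hFP : F ⊆ P := hexp.subset
  obtain ⟨l, hl⟩ := hexp hne
  have key : ∃ h, F ⊆ {x | φ h x + c h = 0} := by
    by_contra! hcon
    have hpos : ∀ h, ∃ x ∈ F, 0 < φ h x + c h := by
      intro h
      obtain ⟨x, hx, hx'⟩ := Set.not_subset.1 (hcon h)
      have h1 : ∀ h, 0 ≤ φ h x + c h := by
        have := hFP hx
        rw [hP] at this
        exact this
      exact ⟨x, hx, lt_of_le_of_ne (h1 h) (fun e => hx' e.symm)⟩
    choose X hXF hXpos using hpos
    have hcard : (0 : ℝ) < Fintype.card ι := by exact_mod_cast Fintype.card_pos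
    let y : α → ℝ := ∑ h : ι, ((Fintype.card ι : ℝ)⁻¹) • X h
    have hyF : y ∈ F := by
      refine hFconv.sum_mem (fun _ _ => by positivity) ?_ (fun i _ => hXF i)
      simp [hcard.ne']
    have hypos : ∀ h, 0 < φ h y + c h := by
      intro h
      have e : φ h y + c h = ∑ i : ι, (Fintype.card ι : ℝ)⁻¹ * (φ h (X i) + c h) := by
        simp only [y, map_sum, map_smul, smul_eq_mul, mul_add, Finset.sum_add_distrib]
        simp [hcard.ne']
      rw [e]
      refine Finset.sum_pos' (fun i _ => ?_) ⟨h, Finset.mem_univ _, ?_⟩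
      · have := hFP (hXF i)
        rw [hP] at this
        exact mul_nonneg (by positivity) (this h)
      · exact mul_pos (by positivity) (hXpos h)
    have hev : ∀ᶠ z in nhds y, z ∈ P := by
      have : ∀ᶠ z in nhds y, ∀ h, 0 < φ h z + c h := by
        rw [Filter.eventually_all]
        intro h
        have hc : Continuous fun z => φ h z + c h := by fun_prop
        exact hc.continuousAt.eventually (lt_mem_nhds (hypos h))
      filter_upwards [this] with z hz
      rw [hP]
      exact fun h => (hz h).le
    have hymax : ∀ z ∈ P, l z ≤ l y := by
      have := hyF
      rw [hl] at this
      exact this.2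
    have hloc : IsLocalMax l y := by
      filter_upwards [hev] with z hz using hymax z hz
    have hl0 : l = 0 := hloc.hasFDerivAt_eq_zero l.hasFDerivAt
    have hFeq : F = P := by
      rw [hl, hl0]
      ext x
      simp
    rw [hFeq] at hrank
    omega
  obtain ⟨h, hh⟩ := key
  refine ⟨h, ?_⟩
  have hsub : F ⊆ P ∩ {x | φ h x + c h = 0} := fun x hx => ⟨hFP hx, hh hx⟩
  refine Set.Subset.antisymm ?_ hsub
  obtain ⟨_, hGne, hGrank⟩ := hG h
  have hle : affineSpan ℝ F ≤ affineSpan ℝ (P ∩ {x | φ h x + c h = 0}) := affineSpan_mono ℝ hsub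
  have hdir := Submodule.eq_of_le_of_finrank_eq (AffineSubspace.direction_le hle) (by omega)
  have heq := AffineSubspace.eq_of_direction_eq_of_nonempty_of_le hdir
    (hne.mono (subset_affineSpan ℝ F)) hle
  obtain ⟨f, hf⟩ := hne
  have hf' := hf
  rw [hl] at hf'
  intro x hx
  have hxs : x ∈ affineSpan ℝ F := by rw [heq]; exact subset_affineSpan ℝ _ hx
  have hd : x - f ∈ vectorSpan ℝ F := by
    rw [← direction_affineSpan]
    exact AffineSubspace.vsub_mem_direction hxs (subset_affineSpan ℝ F hf)
  have hker : vectorSpan ℝ F ≤ LinearMap.ker (l : (α → ℝ) →ₗ[ℝ] ℝ) := by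
    rw [vectorSpan_def, Submodule.span_le]
    rintro _ ⟨a, ha, b, hb, rfl⟩
    rw [hl] at ha hb
    have h1 := ha.2 b hb.1
    have h2 := hb.2 a ha.1
    simp only [SetLike.mem_coe, LinearMap.mem_ker, vsub_eq_sub, map_sub,
      ContinuousLinearMap.coe_coe]
    linarith
  have h0 := hker hd
  simp only [LinearMap.mem_ker, map_sub, ContinuousLinearMap.coe_coe] at h0
  rw [hl]
  refine ⟨hx.1, fun z hz => ?_⟩
  have := hf'.2 z hz
  linarith

lemma aux_fsum {k : ℕ} {n : Fin k → ℕ} (p : Fin k) (x : blockIdx k n → ℝ) :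
    ∑ j, x j * fvec p j = ((k : ℝ) - 1) * (∑ a, x ⟨p, a⟩) - ∑ j, x j := by
  have h1 : ∀ j : blockIdx k n, x j * fvec p j =
      ((k : ℝ) - 1) * (if j.1 = p then x j else 0) - x j := by
    intro j
    unfold fvec
    split_ifs <;> ring
  rw [Finset.sum_congr rfl fun j _ => h1 j, Finset.sum_sub_distrib, ← Finset.mul_sum]
  congr 2
  rw [Fintype.sum_sigma, Finset.sum_eq_single p]
  · simp
  · intro q _ hq
    simp [hq]
  · simp

lemma aux_single_fsum {k : ℕ} {n : Fin k → ℕ} (p : Fin k) (i : blockIdx k n) :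
    ∑ j, (Pi.single i (1 : ℝ) : blockIdx k n → ℝ) j * fvec p j = fvec p i := by
  rw [Finset.sum_eq_single i]
  · simp
  · intro j _ hj
    simp [hj]
  · simp

lemma aux_choose_fsum {k : ℕ} {n : Fin k → ℕ} (p : Fin k) (c : ∀ p, Fin (n p)) :
    ∑ j, chooseVec c j * fvec p j = -1 := by
  rw [aux_fsum, Fintype.sum_sigma]
  simp [chooseVec]

lemma aux_choose_hull {k : ℕ} {n : Fin k → ℕ} (z : blockIdx k n → ℝ) (hz : ∀ j, 0 ≤ z j)
    (hs : ∀ p, ∑ a, z ⟨p, a⟩ = 1) : z ∈ polyP k n := by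
  let L : (∀ p, Fin (n p) → ℝ) →ₗ[ℝ] (blockIdx k n → ℝ) :=
    { toFun := fun u j => u j.1 j.2
      map_add' := fun _ _ => rfl
      map_smul' := fun _ _ => rfl }
  have h1 : (fun p a => z ⟨p, a⟩) ∈ convexHull ℝ (Set.univ.pi fun p : Fin k =>
      Set.range fun (i j : Fin (n p)) => if i = j then (1 : ℝ) else 0) := by
    refine mem_convexHull_pi fun p _ => ?_
    rw [convexHull_basis_eq_stdSimplex]
    exact ⟨fun a => hz _, hs p⟩
  have h2 : L (fun p a => z ⟨p, a⟩) ∈ L '' convexHull ℝ (Set.univ.pi fun p : Fin k =>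
      Set.range fun (i j : Fin (n p)) => if i = j then (1 : ℝ) else 0) := ⟨_, h1, rfl⟩
  rw [LinearMap.image_convexHull] at h2
  refine convexHull_mono ?_ h2
  rintro _ ⟨u, hu, rfl⟩
  right
  choose c hc using fun p => hu p (Set.mem_univ p)
  refine ⟨c, ?_⟩
  ext j
  show u j.1 j.2 = _
  rw [← hc j.1]
  rfl

lemma aux_mem_comb {k : ℕ} {n : Fin k → ℕ} (z w : blockIdx k n → ℝ) (t : ℝ) (hz : z ∈ polyP k n)
    (ht : 0 ≤ t) (hw : ∀ j, 0 ≤ w j) (hs : t + ∑ j, w j = 1) : t • z + w ∈ polyP k n := by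
  have hc : Convex ℝ (polyP k n) := convex_convexHull _ _
  have := hc.sum_mem (t := (Finset.univ : Finset (Option (blockIdx k n))))
    (w := fun o => o.elim t w) (z := fun o => o.elim z fun j => Pi.single j 1)
    (by rintro (_ | j) _ <;> simp [ht, hw]) (by simpa [Fintype.sum_option] using hs)
    (by
      rintro (_ | j) _
      · exact hz
      · exact subset_convexHull _ _ (Or.inl (Or.inr ⟨j, rfl⟩)))
  convert this using 1
  rw [Fintype.sum_option]
  congr 1
  ext i
  simp [Finset.sum_apply, Pi.single_apply]

lemma aux_hrep (k : ℕ) (hk : 0 < k) (n : Fin k → ℕ) : polyP k n =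
      {x : blockIdx k n → ℝ |
        (∀ i : blockIdx k n, 0 ≤ x i) ∧
        ∀ p : Fin k, 0 ≤ (∑ j : blockIdx k n, x j * fvec p j) + 1} := by
  have hk1 : (1 : ℝ) ≤ k := by exact_mod_cast hk
  apply Set.Subset.antisymm
  · refine convexHull_min ?_ ?_
    · rintro _ ((rfl | ⟨j, rfl⟩) | ⟨c, rfl⟩)
      · simp
      · refine ⟨fun i => ?_, fun p => ?_⟩
        · rw [Pi.single_apply]; split_ifs <;> norm_num
        · rw [aux_single_fsum]; unfold fvec; split_ifs <;> linarith
      · refine ⟨fun i => ?_, fun p => ?_⟩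
        · unfold chooseVec; split_ifs <;> norm_num
        · rw [aux_choose_fsum]; norm_num
    · rintro x ⟨hx, hx'⟩ y ⟨hy, hy'⟩ a b ha hb hab
      refine ⟨fun i => ?_, fun p => ?_⟩
      · have := hx i
        have := hy i
        simp only [Pi.add_apply, Pi.smul_apply, smul_eq_mul]
        positivity
      · have e : ∑ j, (a • x + b • y) j * fvec p j + 1 =
            a * (∑ j, x j * fvec p j + 1) + b * (∑ j, y j * fvec p j + 1) := by
          simp only [mul_add, Finset.mul_sum, Pi.add_apply, Pi.smul_apply, smul_eq_mul, add_mul,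
            Finset.sum_add_distrib, mul_assoc]
          linarith
        rw [e]
        exact add_nonneg (mul_nonneg ha (hx' p)) (mul_nonneg hb (hy' p))
  · rintro x ⟨hx, hx'⟩
    simp only [aux_fsum] at hx'
    set S := ∑ j, x j with hS
    by_cases hS1 : S ≤ 1
    · have := aux_mem_comb (k := k) (n := n) 0 x (1 - S)
        (subset_convexHull _ _ (Or.inl (Or.inl rfl))) (by linarith) hx (by rw [← hS]; ring)
      simpa using this
    · push Not at hS1
      have hk2 : (0 : ℝ) < k - 1 := by
        rcases hk1.eq_or_lt with h | h
        · have := hx' ⟨0, hk⟩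
          rw [← h] at this
          linarith
        · linarith
      set t := (S - 1) / (k - 1) with ht
      have htS : (k - 1) * t = S - 1 := by rw [ht]; field_simp
      have htpos : 0 < t := div_pos (by linarith) hk2
      have hst : ∀ p, t ≤ ∑ a, x ⟨p, a⟩ := by
        intro p
        rw [ht, div_le_iff₀ hk2]
        have := hx' p
        linarith
      have hsp : ∀ p, 0 < ∑ a, x ⟨p, a⟩ := fun p => htpos.trans_le (hst p)
      let z : blockIdx k n → ℝ := fun j => x j / ∑ a, x ⟨j.1, a⟩
      have hzs : ∀ p, ∑ a, z ⟨p, a⟩ = 1 := by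
        intro p
        have e : ∀ a, z ⟨p, a⟩ = x ⟨p, a⟩ / ∑ b, x ⟨p, b⟩ := fun a => rfl
        rw [Finset.sum_congr rfl fun a _ => e a, ← Finset.sum_div, div_self (hsp p).ne']
      have hz : z ∈ polyP k n :=
        aux_choose_hull z (fun j => div_nonneg (hx j) (hsp _).le) hzs
      have := aux_mem_comb z (x - t • z) t hz htpos.le ?_ ?_
      · simpa using this
      · intro j
        have h1 : t * z j ≤ x j := by
          simp only [z]
          rw [mul_div_assoc', div_le_iff₀ (hsp _), mul_comm]
          exact mul_le_mul_of_nonneg_left (hst _) (hx j)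
        simpa using h1
      · simp only [Pi.sub_apply, Pi.smul_apply, smul_eq_mul, Finset.sum_sub_distrib,
          ← Finset.mul_sum]
        have hzk : ∑ j, z j = k := by
          rw [Fintype.sum_sigma]
          simp [hzs]
        rw [hzk, ← hS]
        linarith

/-- The functional `x ↦ ⟨x, f_p⟩`. -/
def auxF {k : ℕ} {n : Fin k → ℕ} (p : Fin k) : (blockIdx k n → ℝ) →L[ℝ] ℝ :=
  ∑ j, fvec p j • ContinuousLinearMap.proj j

lemma auxF_apply {k : ℕ} {n : Fin k → ℕ} (p : Fin k) (x : blockIdx k n → ℝ) :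
    auxF p x = ∑ j, x j * fvec p j := by
  simp [auxF, mul_comm]

lemma aux_zero_mem (k : ℕ) (n : Fin k → ℕ) : (0 : blockIdx k n → ℝ) ∈ polyP k n :=
  subset_convexHull _ _ (Or.inl (Or.inl rfl))

lemma aux_single_mem (k : ℕ) (n : Fin k → ℕ) (j) :
    (Pi.single j 1 : blockIdx k n → ℝ) ∈ polyP k n :=
  subset_convexHull _ _ (Or.inl (Or.inr ⟨j, rfl⟩))

lemma aux_choose_mem (k : ℕ) (n : Fin k → ℕ) (c : ∀ p, Fin (n p)) :
    chooseVec c ∈ polyP k n :=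
  subset_convexHull _ _ (Or.inr ⟨c, rfl⟩)

lemma aux_dim (k : ℕ) (n : Fin k → ℕ) :
    Module.finrank ℝ (affineSpan ℝ (polyP k n)).direction = Fintype.card (blockIdx k n) := by
  rw [direction_affineSpan, aux_direction_top (vectorSpan ℝ (polyP k n)), finrank_top,
    Module.finrank_fintype_fun_eq_card]
  intro j
  simpa using vsub_mem_vectorSpan ℝ (aux_single_mem k n j) (aux_zero_mem k n)

lemma aux_facet_coord (k : ℕ) (hk : 0 < k) (n : Fin k → ℕ) (i : blockIdx k n) :
    IsFacet (polyP k n) (polyP k n ∩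
      {x | (ContinuousLinearMap.proj i : (blockIdx k n → ℝ) →L[ℝ] ℝ) x + 0 = 0}) := by
  have h0 : (0 : blockIdx k n → ℝ) ∈ polyP k n ∩
      {x | (ContinuousLinearMap.proj i : (blockIdx k n → ℝ) →L[ℝ] ℝ) x + 0 = 0} :=
    ⟨aux_zero_mem k n, by simp⟩
  refine aux_isFacet _ _ _ ?_ (aux_dim k n) ⟨0, h0⟩ (Pi.single i 1) (by simp) ?_
  · intro x hx
    rw [aux_hrep k hk] at hx
    simpa using hx.1 i
  · intro j
    by_cases hj : j = i
    · subst hj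
      exact Submodule.mem_sup_right (Submodule.mem_span_singleton_self _)
    · refine Submodule.mem_sup_left ?_
      have : (Pi.single j 1 : blockIdx k n → ℝ) ∈ polyP k n ∩
          {x | (ContinuousLinearMap.proj i : (blockIdx k n → ℝ) →L[ℝ] ℝ) x + 0 = 0} :=
        ⟨aux_single_mem k n j, by simp [Pi.single_apply, Ne.symm hj]⟩
      simpa using vsub_mem_vectorSpan ℝ this h0

lemma aux_choose_eq {k : ℕ} {n : Fin k → ℕ} (c : ∀ p, Fin (n p)) :
    chooseVec c = ∑ q, (Pi.single ⟨q, c q⟩ 1 : blockIdx k n → ℝ) := by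
  ext ⟨p, a⟩
  rw [Finset.sum_apply, Finset.sum_eq_single p]
  · simp only [chooseVec, Pi.single_apply, Sigma.mk.injEq, heq_eq_eq, true_and, eq_comm]
  · intro q _ hq
    rw [Pi.single_apply, if_neg]
    rintro h
    exact hq (congrArg Sigma.fst h).symm
  · simp

lemma aux_facet_f (k : ℕ) (hk : 0 < k) (n : Fin k → ℕ) (hn : ∀ p, 0 < n p) (p : Fin k) :
    IsFacet (polyP k n) (polyP k n ∩ {x | auxF p x + 1 = 0}) := by
  have hc : ∀ c : ∀ p, Fin (n p), chooseVec c ∈ polyP k n ∩ {x | auxF p x + 1 = 0} := fun c =>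
    ⟨aux_choose_mem k n c, by
      show auxF p _ + 1 = 0
      rw [auxF_apply, aux_choose_fsum]; norm_num⟩
  let c0 : ∀ p, Fin (n p) := fun p => ⟨0, hn p⟩
  refine aux_isFacet _ _ _ ?_ (aux_dim k n) ⟨_, hc c0⟩ (chooseVec c0) ?_ ?_
  · intro x hx
    rw [aux_hrep k hk] at hx
    rw [auxF_apply]
    exact hx.2 p
  · rw [auxF_apply, aux_choose_fsum]; norm_num
  · have hmem : ∀ x ∈ polyP k n ∩ {x | auxF p x + 1 = 0}, x ∈
        vectorSpan ℝ (polyP k n ∩ {x | auxF p x + 1 = 0}) ⊔ Submodule.span ℝ {chooseVec c0} := by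
      intro x hx
      have h1 := vsub_mem_vectorSpan ℝ hx (hc c0)
      have h2 := Submodule.add_mem_sup h1 (Submodule.mem_span_singleton_self (R := ℝ)
        (chooseVec c0))
      simpa using h2
    have hoff : ∀ j : blockIdx k n, j.1 ≠ p → (Pi.single j 1 : blockIdx k n → ℝ) ∈
        vectorSpan ℝ (polyP k n ∩ {x | auxF p x + 1 = 0}) ⊔ Submodule.span ℝ {chooseVec c0} := by
      intro j hj
      refine hmem _ ⟨aux_single_mem k n j, ?_⟩
      show auxF p _ + 1 = 0
      rw [auxF_apply, aux_single_fsum]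
      simp [fvec, hj]
    rintro ⟨q, a⟩
    by_cases hq : q = p
    · subst hq
      let c : ∀ p, Fin (n p) := Function.update c0 q a
      have h1 := aux_choose_eq c
      rw [← Finset.add_sum_erase _ _ (Finset.mem_univ q)] at h1
      have h2 : c q = a := by simp [c]
      rw [h2] at h1
      replace h1 := eq_sub_of_add_eq h1.symm
      rw [h1]
      refine Submodule.sub_mem _ (hmem _ (hc c)) (Submodule.sum_mem _ fun r hr => hoff _ ?_)
      exact Finset.ne_of_mem_erase hr
    · exact hoff _ hq

lemma aux_injective (k : ℕ) (n : Fin k → ℕ) (hn : ∀ p, 0 < n p) : Function.Injective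
      (Sum.elim (fun i : blockIdx k n => polyP k n ∩ {x | x i = 0})
        (fun p : Fin k => polyP k n ∩ {x | (∑ j : blockIdx k n, x j * fvec p j) + 1 = 0})) := by
  have hmix : ∀ (i : blockIdx k n) (p : Fin k), polyP k n ∩ {x | x i = 0} ≠
      polyP k n ∩ {x | (∑ j : blockIdx k n, x j * fvec p j) + 1 = 0} := by
    intro i p h
    have h0 : (0 : blockIdx k n → ℝ) ∈ polyP k n ∩ {x | x i = 0} := ⟨aux_zero_mem k n, by simp⟩
    rw [h] at h0
    have := h0.2
    simp at this
  rintro (i | p) (j | q) h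
  · simp only [Sum.elim_inl] at h
    by_contra hij
    have hij' : i ≠ j := fun e => hij (by rw [e])
    have h0 : (Pi.single i 1 : blockIdx k n → ℝ) ∈ polyP k n ∩ {x | x j = 0} :=
      ⟨aux_single_mem k n i, by simp [Pi.single_apply, hij'.symm]⟩
    rw [← h] at h0
    have := h0.2
    simp at this
  · exact absurd h (hmix i q)
  · exact absurd h.symm (hmix j p)
  · simp only [Sum.elim_inr] at h
    by_contra hpq
    have hpq' : q ≠ p := fun e => hpq (by rw [e])
    have h0 : (Pi.single ⟨q, ⟨0, hn q⟩⟩ 1 : blockIdx k n → ℝ) ∈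
        polyP k n ∩ {x | (∑ j : blockIdx k n, x j * fvec p j) + 1 = 0} := by
      refine ⟨aux_single_mem k n _, ?_⟩
      show _ + 1 = (0 : ℝ)
      rw [aux_single_fsum]
      simp [fvec, hpq']
    rw [h] at h0
    have h1 : _ + 1 = (0 : ℝ) := h0.2
    rw [aux_single_fsum] at h1
    simp only [fvec, if_true] at h1
    have hk : k = 1 := by
      have : (k : ℝ) = 1 := by linarith
      exact_mod_cast this
    subst hk
    exact hpq' (Subsingleton.elim _ _)


theorem stmt_4 (k : ℕ) (hk : 0 < k) (n : Fin k → ℕ) (hn : ∀ p, 0 < n p) :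
    polyP k n =
      {x : blockIdx k n → ℝ |
        (∀ i : blockIdx k n, 0 ≤ x i) ∧
        ∀ p : Fin k, 0 ≤ (∑ j : blockIdx k n, x j * fvec p j) + 1} ∧
    (∀ i : blockIdx k n, IsFacet (polyP k n) (polyP k n ∩ {x | x i = 0})) ∧
    (∀ p : Fin k, IsFacet (polyP k n)
      (polyP k n ∩ {x | (∑ j : blockIdx k n, x j * fvec p j) + 1 = 0})) ∧
    Function.Injective
      (Sum.elim (fun i : blockIdx k n => polyP k n ∩ {x | x i = 0})
        (fun p : Fin k => polyP k n ∩ {x | (∑ j : blockIdx k n, x j * fvec p j) + 1 = 0})) ∧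
    {F : Set (blockIdx k n → ℝ) | IsFacet (polyP k n) F}.ncard =
      Fintype.card (blockIdx k n) + k := by
  have hco : ∀ i : blockIdx k n, IsFacet (polyP k n) (polyP k n ∩ {x | x i = 0}) := by
    intro i
    simpa using aux_facet_coord k hk n i
  have hf : ∀ p : Fin k, IsFacet (polyP k n)
      (polyP k n ∩ {x | (∑ j : blockIdx k n, x j * fvec p j) + 1 = 0}) := by
    intro p
    simpa only [auxF_apply] using aux_facet_f k hk n hn p
  have hinj := aux_injective k n hn
  refine ⟨aux_hrep k hk n, hco, hf, hinj, ?_⟩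
  have hset : {F : Set (blockIdx k n → ℝ) | IsFacet (polyP k n) F} = Set.range
      (Sum.elim (fun i : blockIdx k n => polyP k n ∩ {x | x i = 0})
        (fun p : Fin k => polyP k n ∩ {x | (∑ j : blockIdx k n, x j * fvec p j) + 1 = 0})) := by
    apply Set.Subset.antisymm
    · intro F hF
      haveI : Nonempty (blockIdx k n ⊕ Fin k) := ⟨Sum.inr ⟨0, hk⟩⟩
      obtain ⟨h, hh⟩ := aux_classify (ι := blockIdx k n ⊕ Fin k) (polyP k n)
        (convex_convexHull _ _)
        (Sum.elim (fun i => ContinuousLinearMap.proj i) (fun p => auxF p))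
        (Sum.elim (fun _ => 0) (fun _ => 1))
        (by
          rw [aux_hrep k hk]
          ext x
          simp [auxF_apply])
        (by
          rintro (i | p)
          · exact aux_facet_coord k hk n i
          · exact aux_facet_f k hk n hn p) F hF
      refine ⟨h, ?_⟩
      rw [← hh]
      rcases h with i | p
      · simp
      · simp [auxF_apply]
    · rintro _ ⟨i | p, rfl⟩
      · exact hco i
      · exact hf p
  rw [hset, Set.ncard_range_of_injective hinj]
  simp [Nat.card_eq_fintype_card, Fintype.card_sum]

end
end

section
/- Fix positive integers n_1,…,n_k with k ≥ 1 and d = n_1+⋯+n_k. For v ∈ V_{n_1,…,n_k} define w_v = (v_1,…,v_d, ⟨v, f_1⟩ + 1, …, ⟨v, f_k⟩ + 1) ∈ ℤ^{d+k}. Then the quotient of ℤ^{d+k} by the subgroup generated by {w_v : v ∈ V_{n_1,…,n_k}} is isomorphic to ℤ^{k−1}. (By the standard description of divisor class groups of normal toric rings via the facet data of Proposition 3.1, this says Cl(𝕜[P_{n_1,…,n_k}]) ≅ ℤ^{k−1}.) -/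
/-!
STATEMENT 7: for `v ∈ V_{n₁,…,n_k}` let
`w_v = (v₁,…,v_d, ⟨v,f₁⟩+1, …, ⟨v,f_k⟩+1) ∈ ℤ^{d+k}`.  Then
`ℤ^{d+k} / ⟨w_v : v ∈ V_{n₁,…,n_k}⟩ ≅ ℤ^{k−1}`
(the divisor class group `Cl(𝕜[P_{n₁,…,n_k}]) ≅ ℤ^{k−1}`).
-/

noncomputable section

/-- The lattice point `i₁ + ⋯ + i_k ∈ B_{n₁,…,n_k}`. -/
def chooseVecInt {k : ℕ} {n : Fin k → ℕ} (c : ∀ p, Fin (n p)) : blockIdx k n → ℤ :=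
  fun j => if c j.1 = j.2 then 1 else 0

/-- The lattice point set `V_{n₁,…,n_k} = {0} ∪ B_d ∪ B_{n₁,…,n_k}`. -/
def latticeSet (k : ℕ) (n : Fin k → ℕ) : Set (blockIdx k n → ℤ) :=
  {0} ∪ {v | ∃ j : blockIdx k n, v = Pi.single j 1} ∪
    {v | ∃ c : ∀ p, Fin (n p), v = chooseVecInt c}

/-- The integer vector `f_p = (k−2)·1_p − ∑_{q ≠ p} 1_q`. -/
def fvecInt {k : ℕ} {n : Fin k → ℕ} (p : Fin k) : blockIdx k n → ℤ :=
  fun j => if j.1 = p then (k : ℤ) - 2 else -1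

/-- `w_v = (v, ⟨v,f₁⟩+1, …, ⟨v,f_k⟩+1) ∈ ℤ^{d+k}`. -/
def wvec {k : ℕ} {n : Fin k → ℕ} (v : blockIdx k n → ℤ) : (blockIdx k n ⊕ Fin k) → ℤ :=
  Sum.elim v (fun p => (∑ j : blockIdx k n, v j * fvecInt p j) + 1)

/-- The map `x ↦ (y_p - ⟨x, f_p⟩)_p` on `ℤ^{d+k}`, with successive differences to index `0`. -/
def classMap (m : ℕ) (n : Fin (m + 1) → ℕ) :
    ((blockIdx (m + 1) n ⊕ Fin (m + 1)) → ℤ) →+ (Fin m → ℤ) where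
  toFun x := fun i =>
    (x (Sum.inr i.succ) - ∑ j : blockIdx (m + 1) n, x (Sum.inl j) * fvecInt i.succ j) -
    (x (Sum.inr 0) - ∑ j : blockIdx (m + 1) n, x (Sum.inl j) * fvecInt 0 j)
  map_zero' := by
    funext i
    simp
  map_add' x y := by
    funext i
    simp only [Pi.add_apply, add_mul, Finset.sum_add_distrib]
    ring

theorem classMap_surjective (m : ℕ) (n : Fin (m + 1) → ℕ) :
    Function.Surjective (classMap m n) := by
  intro z
  refine ⟨Sum.elim 0 (Fin.cons 0 z), ?_⟩
  funext i
  simp [classMap]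

theorem wvec_decomp (m : ℕ) (n : Fin (m + 1) → ℕ)
    (x : (blockIdx (m + 1) n ⊕ Fin (m + 1)) → ℤ) (hx : classMap m n x = 0) :
    x = (∑ j : blockIdx (m + 1) n,
          x (Sum.inl j) • (wvec (Pi.single j 1) - wvec (0 : blockIdx (m + 1) n → ℤ))) +
        (x (Sum.inr 0) - ∑ j : blockIdx (m + 1) n, x (Sum.inl j) * fvecInt 0 j) •
          wvec (0 : blockIdx (m + 1) n → ℤ) := by
  have key : ∀ p : Fin (m + 1),
      x (Sum.inr p) - ∑ j : blockIdx (m + 1) n, x (Sum.inl j) * fvecInt p j =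
      x (Sum.inr 0) - ∑ j : blockIdx (m + 1) n, x (Sum.inl j) * fvecInt 0 j := by
    intro p
    refine Fin.cases rfl (fun i => ?_) p
    have h := congrFun hx i
    simp only [classMap, AddMonoidHom.coe_mk, ZeroHom.coe_mk, Pi.zero_apply] at h
    linarith
  funext s
  rcases s with j | p
  · simp [wvec, Finset.sum_apply, Pi.single_apply]
  · have h := key p
    have hs : ∀ j : blockIdx (m + 1) n,
        ∑ i : blockIdx (m + 1) n, (Pi.single j (1 : ℤ) : blockIdx (m + 1) n → ℤ) i * fvecInt p i
          = fvecInt p j := by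
      intro j
      simp [Pi.single_apply]
    simp only [wvec, Finset.sum_apply, Pi.add_apply, Pi.smul_apply, Pi.sub_apply, Sum.elim_inr,
      hs, smul_eq_mul, Pi.zero_apply, zero_mul, Finset.sum_const_zero, zero_add,
      add_sub_cancel_right, mul_one]
    linarith

theorem classMap_ker (m : ℕ) (n : Fin (m + 1) → ℕ) :
    AddSubgroup.closure (wvec '' latticeSet (m + 1) n) = (classMap m n).ker := by
  apply le_antisymm
  · rw [AddSubgroup.closure_le]
    rintro _ ⟨v, -, rfl⟩
    rw [SetLike.mem_coe, AddMonoidHom.mem_ker]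
    funext i
    simp [classMap, wvec]
  · intro x hx
    have h0 : wvec (0 : blockIdx (m + 1) n → ℤ) ∈
        AddSubgroup.closure (wvec '' latticeSet (m + 1) n) :=
      AddSubgroup.subset_closure ⟨0, Or.inl (Or.inl rfl), rfl⟩
    rw [wvec_decomp m n x (AddMonoidHom.mem_ker.mp hx)]
    refine AddSubgroup.add_mem _ (AddSubgroup.sum_mem _ fun j _ => ?_)
      (AddSubgroup.zsmul_mem _ h0 _)
    refine AddSubgroup.zsmul_mem _ (AddSubgroup.sub_mem _ ?_ h0) _
    exact AddSubgroup.subset_closure ⟨_, Or.inl (Or.inr ⟨j, rfl⟩), rfl⟩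

theorem stmt_7 (k : ℕ) (hk : 1 ≤ k) (n : Fin k → ℕ) (hn : ∀ p, 0 < n p) :
    Nonempty
      ((((blockIdx k n ⊕ Fin k) → ℤ) ⧸
          AddSubgroup.closure (wvec '' latticeSet k n)) ≃+
        (Fin (k - 1) → ℤ)) := by
  obtain ⟨m, rfl⟩ : ∃ m, k = m + 1 := ⟨k - 1, by omega⟩
  exact ⟨(QuotientAddGroup.quotientAddEquivOfEq (classMap_ker m n)).trans
    (QuotientAddGroup.quotientKerEquivOfSurjective (classMap m n) (classMap_surjective m n))⟩

end
end

section
/- Let k ≥ 3 and let n_1,…,n_k be positive integers. Then the toric ideal I_{P_{n_1,…,n_k}} is not generated by its elements of total degree at most 2; that is, the ideal generated by {f ∈ I_{P_{n_1,…,n_k}} : deg f ≤ 2} is strictly contained in I_{P_{n_1,…,n_k}}. (Consequently 𝕜[P_{n_1,…,n_k}] is not isomorphic to any Hibi ring, since toric ideals of Hibi rings are generated by quadratic binomials.) -/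
/-!
STATEMENT 8: for `k ≥ 3` the toric ideal `I_{P_{n₁,…,n_k}}` is not generated by
its elements of total degree at most `2`: the ideal generated by
`{f ∈ I : deg f ≤ 2}` is strictly contained in `I`.
-/

noncomputable section

/-- The `𝕜`-algebra map `𝕜[x_v : v ∈ V] → 𝕜[t₀, t₁^{±1}, …, t_d^{±1}]`,
`x_v ↦ t^v t₀`, realized in the group algebra of `ℤ^d × ℤ`. -/
def toricMap (𝕜 : Type*) [Field 𝕜] (k : ℕ) (n : Fin k → ℕ) :
    MvPolynomial (latticeSet k n) 𝕜 →ₐ[𝕜]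
      AddMonoidAlgebra 𝕜 ((blockIdx k n → ℤ) × ℤ) :=
  MvPolynomial.aeval
    (fun v : latticeSet k n => AddMonoidAlgebra.single ((v : blockIdx k n → ℤ), (1 : ℤ)) (1 : 𝕜))

/-- The toric ideal `I_{P_{n₁,…,n_k}}`. -/
def toricIdeal (𝕜 : Type*) [Field 𝕜] (k : ℕ) (n : Fin k → ℕ) :
    Ideal (MvPolynomial (latticeSet k n) 𝕜) :=
  RingHom.ker (toricMap 𝕜 k n)

/-- Exponent map. -/
def expMap (k : ℕ) (n : Fin k → ℕ) : (latticeSet k n →₀ ℕ) →+ ((blockIdx k n → ℤ) × ℤ) :=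
  Finsupp.weight (R := ℕ) (fun v : latticeSet k n => ((v : blockIdx k n → ℤ), (1 : ℤ)))

lemma expMap_single (k : ℕ) (n : Fin k → ℕ) (v : latticeSet k n) (m : ℕ) :
    expMap k n (Finsupp.single v m) = m • ((v : blockIdx k n → ℤ), (1 : ℤ)) := by
  simp [expMap, Finsupp.weight_apply]

lemma toricMap_monomial (𝕜 : Type*) [Field 𝕜] (k : ℕ) (n : Fin k → ℕ)
    (w : latticeSet k n →₀ ℕ) (a : 𝕜) :
    toricMap 𝕜 k n (MvPolynomial.monomial w a) = AddMonoidAlgebra.single (expMap k n w) a := by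
  have key : (w.prod fun v m => (AddMonoidAlgebra.single
      ((v : blockIdx k n → ℤ), (1 : ℤ)) (1 : 𝕜)) ^ m) =
      AddMonoidAlgebra.single (expMap k n w) 1 := by
    induction w using Finsupp.induction_linear with
    | zero => simp [AddMonoidAlgebra.one_def]
    | add f g hf hg =>
      rw [Finsupp.prod_add_index' (by simp) (by intros; rw [pow_add]), hf, hg,
        AddMonoidAlgebra.single_mul_single, map_add, one_mul]
    | single v m =>
      rw [Finsupp.prod_single_index (by simp), AddMonoidAlgebra.single_pow, expMap_single, one_pow]
  rw [toricMap, MvPolynomial.aeval_monomial, key]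
  simp [AddMonoidAlgebra.single_mul_single]

lemma lattice_nonneg {k : ℕ} {n : Fin k → ℕ} (v : latticeSet k n) (j : blockIdx k n) :
    0 ≤ (v : blockIdx k n → ℤ) j := by
  obtain ⟨v, (rfl | ⟨i, rfl⟩) | ⟨c, rfl⟩⟩ := v
  · simp
  · by_cases h : j = i
    · subst h; simp
    · simp [h]
  · simp only [chooseVecInt]; split_ifs <;> simp

lemma expMap_nonneg {k : ℕ} {n : Fin k → ℕ} (w : latticeSet k n →₀ ℕ) (j : blockIdx k n) :
    0 ≤ (expMap k n w).1 j := by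
  induction w using Finsupp.induction_linear with
  | zero => simp
  | add f g hf hg => rw [map_add]; exact add_nonneg hf hg
  | single v m =>
    rw [expMap_single]
    simpa using mul_nonneg (Int.natCast_nonneg m) (lattice_nonneg v j)

lemma exists_split {k : ℕ} {n : Fin k → ℕ} (w : latticeSet k n →₀ ℕ) (v : latticeSet k n)
    (h : w v ≠ 0) : ∃ w', w = Finsupp.single v 1 + w' := by
  have : Finsupp.single v 1 ≤ w := by
    rw [Finsupp.single_le_iff]; omega
  exact ⟨w - Finsupp.single v 1, (add_tsub_cancel_of_le this).symm⟩

/-- The origin as an element of the lattice set. -/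
def zPt (k : ℕ) (n : Fin k → ℕ) : latticeSet k n := ⟨0, Or.inl (Or.inl rfl)⟩

/-- A point of the top block. -/
def cPt {k : ℕ} {n : Fin k → ℕ} (c : ∀ p, Fin (n p)) : latticeSet k n :=
  ⟨chooseVecInt c, Or.inr ⟨c, rfl⟩⟩

/-- A unit vector. -/
def ePt {k : ℕ} {n : Fin k → ℕ} (j : blockIdx k n) : latticeSet k n :=
  ⟨Pi.single j 1, Or.inl (Or.inr ⟨j, rfl⟩)⟩

lemma eq_single_of_exp_zero {k : ℕ} {n : Fin k → ℕ} (w : latticeSet k n →₀ ℕ)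
    (h : (expMap k n w).1 = 0) : w = Finsupp.single (zPt k n) (w (zPt k n)) := by
  ext v
  by_cases hv : v = zPt k n
  · subst hv; simp
  · rw [Finsupp.single_eq_of_ne hv]
    by_contra h0
    obtain ⟨w', rfl⟩ := exists_split w v h0
    apply hv
    apply Subtype.ext
    funext j
    have := congrFun h j
    rw [map_add, expMap_single] at this
    simp at this
    have h1 := lattice_nonneg v j
    have h2 := expMap_nonneg w' j
    simp only [zPt, Pi.zero_apply]
    omega

lemma eq_of_exp_zero {k : ℕ} {n : Fin k → ℕ} (w w' : latticeSet k n →₀ ℕ)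
    (h : (expMap k n w).1 = 0) (he : expMap k n w' = expMap k n w) : w' = w := by
  have h1 := eq_single_of_exp_zero w h
  have h2 := eq_single_of_exp_zero w' (he ▸ h)
  rw [h1, h2, expMap_single, expMap_single] at he
  have := congrArg Prod.snd he
  simp at this
  rw [h1, h2, this]

lemma sum_choose {k : ℕ} {n : Fin k → ℕ} (c : ∀ p, Fin (n p)) :
    ∑ j, chooseVecInt c j = k := by
  rw [Fintype.sum_sigma]
  simp [chooseVecInt]

lemma sum_single_one {k : ℕ} {n : Fin k → ℕ} (i : blockIdx k n) :
    ∑ j, (Pi.single i 1 : blockIdx k n → ℤ) j = 1 := by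
  simp

lemma mem_of_exp_choose {k : ℕ} {n : Fin k → ℕ} (hk : 3 ≤ k) (c : ∀ p, Fin (n p))
    (w : latticeSet k n →₀ ℕ)
    (h : (expMap k n w).1 = chooseVecInt c) (h2 : (expMap k n w).2 ≤ 2) : w (cPt c) ≠ 0 := by
  have key : ∃ c', w (cPt c') ≠ 0 := by
    by_contra hno
    push Not at hno
    have gen : ∀ u : latticeSet k n →₀ ℕ, (∀ c', u (cPt c') = 0) →
        ∑ j, (expMap k n u).1 j ≤ (expMap k n u).2 := by
      intro u
      induction u using Finsupp.induction_linear with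
      | zero => simp
      | add f g hf hg =>
        intro hu
        have := hf (fun c' => by have := hu c'; simp at this; exact this.1)
        have := hg (fun c' => by have := hu c'; simp at this; exact this.2)
        simp only [map_add, Prod.fst_add, Prod.snd_add, Pi.add_apply, Finset.sum_add_distrib]
        linarith
      | single v m =>
        intro hu
        rw [expMap_single]
        obtain ⟨v, (rfl | ⟨i, rfl⟩) | ⟨c, rfl⟩⟩ := v
        · simp
        · simp [← Finset.mul_sum]
        · have := hu c
          simp [cPt] at this
          simp [this]
    have := gen w hno
    rw [h, sum_choose] at this
    omega
  obtain ⟨c', hc'⟩ := key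
  suffices c' = c by subst this; exact hc'
  obtain ⟨w', rfl⟩ := exists_split w _ hc'
  funext p
  have := congrFun h ⟨p, c' p⟩
  rw [map_add, expMap_single] at this
  have h3 := expMap_nonneg w' ⟨p, c' p⟩
  by_contra hne
  simp [cPt, chooseVecInt, Ne.symm hne] at this
  omega

lemma fiber_unique {k : ℕ} {n : Fin k → ℕ} (hk : 3 ≤ k) (c : ∀ p, Fin (n p)) (a : ℕ)
    (w w' : latticeSet k n →₀ ℕ)
    (hw : w ≤ Finsupp.single (cPt c) 1 + Finsupp.single (zPt k n) a)
    (h2 : (expMap k n w).2 ≤ 2) (he : expMap k n w' = expMap k n w) : w' = w := by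
  classical
  have aux : ∀ u : latticeSet k n →₀ ℕ, u ≤ Finsupp.single (zPt k n) a →
      (expMap k n u).1 = 0 := by
    intro u hu
    have : u = Finsupp.single (zPt k n) (u (zPt k n)) := by
      ext v
      by_cases hv : v = zPt k n
      · subst hv; simp
      · have := hu v
        rw [Finsupp.single_eq_of_ne hv] at this ⊢
        omega
    rw [this, expMap_single]
    simp [zPt]
  by_cases h0 : w (cPt c) = 0
  · refine eq_of_exp_zero w w' (aux w ?_) he
    intro v
    by_cases hv : v = cPt c
    · subst hv; rw [h0]; exact Nat.zero_le _
    · have := hw v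
      rwa [Finsupp.add_apply, Finsupp.single_eq_of_ne hv, zero_add] at this
  · obtain ⟨u, rfl⟩ := exists_split w _ h0
    have hu := aux u (by simpa using hw)
    have hc : (expMap k n (Finsupp.single (cPt c) 1 + u)).1 = chooseVecInt c := by
      rw [map_add, expMap_single, Prod.fst_add, hu]
      simp [cPt]
    obtain ⟨u', rfl⟩ := exists_split w' _
      (mem_of_exp_choose hk c w' (by rw [he, hc]) (by rw [he]; exact h2))
    rw [eq_of_exp_zero u u' hu (by simpa using he)]

lemma expMap_snd {k : ℕ} {n : Fin k → ℕ} (w : latticeSet k n →₀ ℕ) :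
    (expMap k n w).2 = ((w.sum fun _ e => e : ℕ) : ℤ) := by
  induction w using Finsupp.induction_linear with
  | zero => simp
  | add f g hf hg =>
    rw [map_add, Finsupp.sum_add_index' (by simp) (by simp), Prod.snd_add, hf, hg]; simp
  | single v m => rw [expMap_single]; simp

lemma coeff_zero_of_unique {𝕜 : Type*} [Field 𝕜] {k : ℕ} {n : Fin k → ℕ}
    (f : MvPolynomial (latticeSet k n) 𝕜) (hf : f ∈ toricIdeal 𝕜 k n)
    (w : latticeSet k n →₀ ℕ) (hu : ∀ w', expMap k n w' = expMap k n w → w' = w) :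
    f.coeff w = 0 := by
  classical
  have h : toricMap 𝕜 k n f = 0 := hf
  rw [f.as_sum, map_sum] at h
  simp only [toricMap_monomial] at h
  have h' := congrArg (fun x => x.coeff (expMap k n w)) h
  simp only [AddMonoidAlgebra.coeff_sum, AddMonoidAlgebra.coeff_single,
    Finsupp.finsetSum_apply, AddMonoidAlgebra.coeff_zero, Finsupp.zero_apply] at h'
  by_contra hne
  rw [Finset.sum_eq_single w] at h'
  · simp at h'; exact hne h'
  · intro b _ hb
    exact Finsupp.single_eq_of_ne (fun e => hb (hu b e.symm))
  · intro hw
    simp [MvPolynomial.notMem_support_iff.mp hw]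

lemma coeff_span_zero {𝕜 : Type*} [Field 𝕜] {k : ℕ} {n : Fin k → ℕ} (hk : 3 ≤ k)
    (c : ∀ p, Fin (n p)) (a : ℕ) (f : MvPolynomial (latticeSet k n) 𝕜)
    (hf : f ∈ Ideal.span {f : MvPolynomial (latticeSet k n) 𝕜 |
          f ∈ toricIdeal 𝕜 k n ∧ f.totalDegree ≤ 2}) :
    f.coeff (Finsupp.single (cPt c) 1 + Finsupp.single (zPt k n) a) = 0 := by
  classical
  have low : ∀ x : MvPolynomial (latticeSet k n) 𝕜, x ∈ toricIdeal 𝕜 k n → x.totalDegree ≤ 2 →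
      ∀ w, w ≤ Finsupp.single (cPt c) 1 + Finsupp.single (zPt k n) a → x.coeff w = 0 := by
    intro x hx hd w hw
    by_contra hne
    have h1 := MvPolynomial.le_totalDegree (MvPolynomial.mem_support_iff.mpr hne)
    have h2 : (expMap k n w).2 ≤ 2 := by rw [expMap_snd]; exact_mod_cast h1.trans hd
    exact hne (coeff_zero_of_unique x hx w (fun w' he => fiber_unique hk c a w w' hw h2 he))
  suffices ∀ w, w ≤ Finsupp.single (cPt c) 1 + Finsupp.single (zPt k n) a → f.coeff w = 0 from
    this _ le_rfl
  induction hf using Submodule.span_induction with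
  | zero => simp
  | add x y _ _ hx hy =>
    intro w hw
    rw [MvPolynomial.coeff_add, hx w hw, hy w hw, add_zero]
  | mem x hx => exact low x hx.1 hx.2
  | smul g x _ hx =>
    intro w hw
    rw [smul_eq_mul, MvPolynomial.coeff_mul]
    refine Finset.sum_eq_zero fun q hq => ?_
    have hq' := Finset.HasAntidiagonal.mem_antidiagonal.mp hq
    have hle : q.2 ≤ w := hq' ▸ le_add_self
    rw [hx q.2 (hle.trans hw), mul_zero]

theorem stmt_8 (𝕜 : Type*) [Field 𝕜] (k : ℕ) (hk : 3 ≤ k)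
    (n : Fin k → ℕ) (hn : ∀ p, 0 < n p) :
    Ideal.span
        {f : MvPolynomial (latticeSet k n) 𝕜 |
          f ∈ toricIdeal 𝕜 k n ∧ f.totalDegree ≤ 2} <
      toricIdeal 𝕜 k n := by
  classical
  refine lt_of_le_of_ne (Ideal.span_le.mpr fun f hf => hf.1) ?_
  intro heq
  let c : ∀ p, Fin (n p) := fun p => ⟨0, hn p⟩
  let m0 : latticeSet k n →₀ ℕ :=
    Finsupp.single (cPt c) 1 + Finsupp.single (zPt k n) (k - 1)
  let m1 : latticeSet k n →₀ ℕ := ∑ p, Finsupp.single (ePt ⟨p, c p⟩) 1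
  have hE : expMap k n m0 = expMap k n m1 := by
    simp only [m0, m1, map_add, map_sum, expMap_single]
    refine Prod.ext ?_ ?_
    · funext j
      simp only [Prod.fst_sum, Finset.sum_apply, one_smul, Prod.fst_add, cPt, zPt, ePt,
        Prod.smul_fst, smul_zero, add_zero]
      obtain ⟨p, i⟩ := j
      rw [Finset.sum_eq_single p]
      · simp only [chooseVecInt, Pi.single_apply, Sigma.mk.injEq, heq_eq_eq, true_and]
        simp only [eq_comm]
      · intro b _ hb
        exact Pi.single_eq_of_ne (fun e => hb (congrArg Sigma.fst e).symm) _
      · simp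
    · simp [Prod.snd_sum]
      omega
  have hmem : MvPolynomial.monomial m0 (1 : 𝕜) - MvPolynomial.monomial m1 1 ∈
      toricIdeal 𝕜 k n := by
    change toricMap 𝕜 k n _ = 0
    rw [map_sub, toricMap_monomial, toricMap_monomial, hE, sub_self]
  rw [← heq] at hmem
  have h0 := coeff_span_zero hk c (k - 1) _ hmem
  have hne : m1 ≠ m0 := by
    intro h
    have h1 := DFunLike.congr_fun h (cPt c)
    have hz : m1 (cPt c) = 0 := by
      simp only [m1, Finsupp.finsetSum_apply]
      refine Finset.sum_eq_zero fun p _ => Finsupp.single_eq_of_ne fun e => ?_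
      have e' := congrArg (fun v : latticeSet k n => ∑ j, (v : blockIdx k n → ℤ) j) e
      simp only [cPt, ePt, sum_choose, sum_single_one] at e'
      omega
    rw [hz] at h1
    simp [m0] at h1
    omega
  change MvPolynomial.coeff m0 _ = 0 at h0
  rw [MvPolynomial.coeff_sub, MvPolynomial.coeff_monomial, MvPolynomial.coeff_monomial,
    if_pos rfl, if_neg hne] at h0
  simp at h0

end
end

section
/- Let P ⊂ ℝ^d be a (0,1)-polytope of dimension e having exactly e + 2 facets (i.e. rank P = 1). Then P is normal, i.e. ℕA(P) = ℤA(P) ∩ ℝ≥0A(P), and there exist positive integers n, m, l such that 𝕜[P] is isomorphic as a 𝕜-algebra to a polynomial ring in l − 1 variables over the toric ring 𝕜[Δ_n × Δ_m] of the product of simplices Δ_n × Δ_m (the toric ring 𝕜[Δ_n × Δ_m] is the Segre product of polynomial rings in n+1 and m+1 variables over 𝕜). In particular every (0,1)-polytope of rank 1 is normal and its divisor class group is ℤ (torsionfree). -/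
/-!
STATEMENT 10: a (0,1)-polytope `P ⊆ ℝ^d` of dimension `e` with exactly `e + 2`
facets (rank 1) is normal, and there are positive integers `n, m, l` such that
`𝕜[P]` is a polynomial ring in `l − 1` variables over the toric ring of the
product of simplices `Δ_n × Δ_m` (the Segre product of polynomial rings).
-/

open scoped NNReal

noncomputable section

/-- The lattice points of a subset of `ℝ^α`, as integer vectors. -/
def latticePts {α : Type*} (P : Set (α → ℝ)) : Set (α → ℤ) :=
  {v | intCast v ∈ P}

/-- The simplex `Δ_n = conv(B_{n+1}) ⊆ ℝ^{n+1}`. -/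
def stdSimplex' (n : ℕ) : Set (Fin (n + 1) → ℝ) :=
  convexHull ℝ {y | ∃ i, y = Pi.single i (1 : ℝ)}

/-- The product polytope `Δ_n × Δ_m ⊆ ℝ^{n+1} × ℝ^{m+1}`. -/
def simplexProd (n m : ℕ) : Set ((Fin (n + 1) ⊕ Fin (m + 1)) → ℝ) :=
  {x | (fun i => x (Sum.inl i)) ∈ stdSimplex' n ∧ (fun j => x (Sum.inr j)) ∈ stdSimplex' m}

lemma closure_equiv_image {G H : Type*} [AddCommMonoid G] [AddCommMonoid H] (f : G →+ H) (X : Set G)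
    (hinj : Set.InjOn f (AddSubmonoid.closure X)) :
    Nonempty (AddSubmonoid.closure X ≃+ AddSubmonoid.closure (f '' X)) := by
  have hm : AddSubmonoid.closure (f '' X) = (AddSubmonoid.closure X).map f :=
    (AddMonoidHom.map_mclosure f X).symm
  rw [hm]
  refine ⟨AddEquiv.ofBijective (f.addSubmonoidMap (AddSubmonoid.closure X)) ⟨?_, ?_⟩⟩
  · intro a b hab
    apply Subtype.ext
    exact hinj a.2 b.2 (congrArg Subtype.val hab)
  · exact f.addSubmonoidMap_surjective _

def segGen (n m : ℕ) : Set ((Fin (n + 1) ⊕ Fin (m + 1)) → ℝ) :=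
  Set.range fun p : Fin (n + 1) × Fin (m + 1) =>
    Pi.single (Sum.inl p.1) (1 : ℝ) + Pi.single (Sum.inr p.2) (1 : ℝ)

def fullGen (k n m : ℕ) : Set ((Fin k → ℝ) × ((Fin (n + 1) ⊕ Fin (m + 1)) → ℝ)) :=
  (Set.range fun z : Fin k => (Pi.single z (1 : ℝ), 0)) ∪ (fun y => (0, y)) '' segGen n m

lemma inr_mem_full (k n m : ℕ) {y} (hy : y ∈ AddSubmonoid.closure (segGen n m)) :
    ((0 : Fin k → ℝ), y) ∈ AddSubmonoid.closure (fullGen k n m) := by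
  have : AddSubmonoid.closure (segGen n m) ≤
      (AddSubmonoid.closure (fullGen k n m)).comap (AddMonoidHom.inr (Fin k → ℝ) _) := by
    rw [AddSubmonoid.closure_le]
    intro y hy
    exact AddSubmonoid.subset_closure (Or.inr ⟨y, hy, rfl⟩)
  exact this hy

lemma inl_mem_full (k n m : ℕ) (p : Fin k → ℕ) :
    ((fun z => (p z : ℝ)), (0 : (Fin (n + 1) ⊕ Fin (m + 1)) → ℝ)) ∈
      AddSubmonoid.closure (fullGen k n m) := by
  have : ((fun z => (p z : ℝ)), (0 : (Fin (n + 1) ⊕ Fin (m + 1)) → ℝ)) =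
      ∑ z, p z • ((Pi.single z (1 : ℝ) : Fin k → ℝ), (0 : (Fin (n + 1) ⊕ Fin (m + 1)) → ℝ)) := by
    ext i
    · simp [Prod.fst_sum, Finset.sum_apply, Pi.single_apply]
    · simp [Prod.snd_sum]
  rw [this]
  refine sum_mem fun z _ => ?_
  refine nsmul_mem ?_ _
  exact AddSubmonoid.subset_closure (Or.inl ⟨z, rfl⟩)

lemma full_equiv (k n m : ℕ) :
    Nonempty (AddSubmonoid.closure (fullGen k n m) ≃+
      (Fin k →₀ ℕ) × AddSubmonoid.closure (segGen n m)) := by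
  let Ψ : (Fin k →₀ ℕ) × AddSubmonoid.closure (segGen n m) →+
      (Fin k → ℝ) × ((Fin (n + 1) ⊕ Fin (m + 1)) → ℝ) :=
    { toFun := fun x => ((fun z => (x.1 z : ℝ)), x.2.1)
      map_zero' := by ext <;> simp
      map_add' := fun x y => by ext <;> simp }
  have hin : ∀ x, Ψ x ∈ AddSubmonoid.closure (fullGen k n m) := by
    intro x
    have := add_mem (inl_mem_full k n m x.1) (inr_mem_full k n m x.2.2)
    simpa [Ψ] using this
  have hr : AddSubmonoid.closure (fullGen k n m) ≤ AddMonoidHom.mrange Ψ := by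
    rw [AddSubmonoid.closure_le]
    rintro y (⟨z, rfl⟩ | ⟨y, hy, rfl⟩)
    · refine ⟨(Finsupp.single z 1, 0), ?_⟩
      ext i
      · simp [Ψ, Finsupp.single_apply, Pi.single_apply, eq_comm]
      · simp [Ψ]
    · refine ⟨(0, ⟨y, AddSubmonoid.subset_closure hy⟩), ?_⟩
      ext i <;> simp [Ψ]
  refine ⟨(AddEquiv.ofBijective (Ψ.codRestrict _ hin) ⟨?_, ?_⟩).symm⟩
  · intro x y hxy
    have h := congrArg Subtype.val hxy
    have h1 := congrArg Prod.fst h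
    have h2 := congrArg Prod.snd h
    ext i
    · have := congrFun h1 i
      simpa [Ψ] using this
    · exact congrFun h2 i
  · rintro ⟨y, hy⟩
    obtain ⟨x, hx⟩ := hr hy
    exact ⟨x, Subtype.ext hx⟩

lemma seg_nat_mem (n m : ℕ) : ∀ (N : ℕ) (q : (Fin (n + 1) ⊕ Fin (m + 1)) → ℕ),
    ∑ a, q (Sum.inl a) = N → ∑ b, q (Sum.inr b) = N →
    (fun i => (q i : ℝ)) ∈ AddSubmonoid.closure (segGen n m) := by
  intro N
  induction N with
  | zero =>
    intro q h1 h2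
    have : (fun i => (q i : ℝ)) = 0 := by
      ext i
      simp only [Finset.sum_eq_zero_iff, Finset.mem_univ, true_imp_iff] at h1 h2
      rcases i with i | i
      · simp [h1 i]
      · simp [h2 i]
    rw [this]; exact zero_mem _
  | succ N ih =>
    intro q h1 h2
    obtain ⟨a, -, ha⟩ : ∃ a ∈ Finset.univ, q (Sum.inl a) ≠ 0 :=
      Finset.exists_ne_zero_of_sum_ne_zero (by rw [h1]; simp)
    obtain ⟨b, -, hb⟩ : ∃ b ∈ Finset.univ, q (Sum.inr b) ≠ 0 :=
      Finset.exists_ne_zero_of_sum_ne_zero (by rw [h2]; simp)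
    let q' : (Fin (n + 1) ⊕ Fin (m + 1)) → ℕ := fun i =>
      q i - (if i = Sum.inl a then 1 else 0) - (if i = Sum.inr b then 1 else 0)
    have hq : ∀ i, q i = q' i + ((if i = Sum.inl a then 1 else 0) +
        (if i = Sum.inr b then 1 else 0)) := by
      intro i
      simp only [q']
      rcases i with i | i
      · by_cases h : i = a
        · subst h; simp; omega
        · simp [h]
      · by_cases h : i = b
        · subst h; simp; omega
        · simp [h]
    have e1 : ∑ a, q' (Sum.inl a) = N := by
      have : ∑ a, q (Sum.inl a) = ∑ a, q' (Sum.inl a) + 1 := by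
        simp_rw [hq, Finset.sum_add_distrib]; simp
      omega
    have e2 : ∑ a, q' (Sum.inr a) = N := by
      have : ∑ a, q (Sum.inr a) = ∑ a, q' (Sum.inr a) + 1 := by
        simp_rw [hq, Finset.sum_add_distrib]; simp
      omega
    have := add_mem (ih q' e1 e2) (AddSubmonoid.subset_closure (⟨(a, b), rfl⟩ : _ ∈ segGen n m))
    convert this using 1
    ext i
    simp [hq i, Pi.single_apply]

lemma full_nat_mem (k n m : ℕ) (p : Fin k → ℕ) (q : (Fin (n + 1) ⊕ Fin (m + 1)) → ℕ)
    (h : ∑ a, q (Sum.inl a) = ∑ b, q (Sum.inr b)) :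
    ((fun z => (p z : ℝ)), fun i => (q i : ℝ)) ∈ AddSubmonoid.closure (fullGen k n m) := by
  have := add_mem (inl_mem_full k n m p) (inr_mem_full k n m (seg_nat_mem n m _ q rfl h.symm))
  simpa using this

lemma mem_stdSimplex'_intCast (n : ℕ) (v : Fin (n + 1) → ℤ) :
    intCast v ∈ stdSimplex' n ↔ ∃ i, v = Pi.single i 1 := by
  have h0 : stdSimplex' n = stdSimplex ℝ (Fin (n + 1)) := by
    rw [← convexHull_rangle_single_eq_stdSimplex, stdSimplex']
    congr 1
    ext y
    simp [eq_comm]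
  constructor
  · intro h
    rw [h0] at h
    obtain ⟨h1, h2⟩ := h
    have h1' : ∀ i, 0 ≤ v i := fun i => by
      have := h1 i
      simpa [intCast] using this
    have h2' : ∑ i, v i = 1 := by
      simp only [intCast] at h2
      exact_mod_cast h2
    obtain ⟨i, -, hi⟩ : ∃ i ∈ Finset.univ, v i ≠ 0 :=
      Finset.exists_ne_zero_of_sum_ne_zero (by rw [h2']; simp)
    refine ⟨i, ?_⟩
    have hsum : v i + ∑ j ∈ Finset.univ.erase i, v j = 1 := by
      rw [Finset.add_sum_erase _ _ (Finset.mem_univ i), h2']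
    have hnn : 0 ≤ ∑ j ∈ Finset.univ.erase i, v j := Finset.sum_nonneg fun j _ => h1' j
    have hpos := h1' i
    have hz : ∑ j ∈ Finset.univ.erase i, v j = 0 := by omega
    rw [Finset.sum_eq_zero_iff_of_nonneg fun j _ => h1' j] at hz
    ext j
    by_cases hj : j = i
    · subst hj; simp; omega
    · rw [Pi.single_eq_of_ne hj]
      exact hz j (by simp [hj])
  · rintro ⟨i, rfl⟩
    apply subset_convexHull
    refine ⟨i, ?_⟩
    ext j
    simp [intCast, Pi.single_apply]

lemma seg_equiv (n m : ℕ) :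
    Nonempty (AddSubmonoid.closure (latticeA (latticePts (simplexProd n m))) ≃+
      AddSubmonoid.closure (segGen n m)) := by
  let f : ((Fin (n + 1) ⊕ Fin (m + 1)) → ℤ) × ℤ →+ ((Fin (n + 1) ⊕ Fin (m + 1)) → ℝ) :=
    { toFun := fun x => intCast x.1
      map_zero' := by ext; simp [intCast]
      map_add' := fun x y => by ext; simp [intCast] }
  have hL : ∀ v, v ∈ latticePts (simplexProd n m) ↔
      ∃ a b, v = Pi.single (Sum.inl a) 1 + Pi.single (Sum.inr b) 1 := by
    intro v
    have h1 := mem_stdSimplex'_intCast n (fun i => v (Sum.inl i))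
    have h2 := mem_stdSimplex'_intCast m (fun i => v (Sum.inr i))
    have : v ∈ latticePts (simplexProd n m) ↔ (∃ a, (fun i => v (Sum.inl i)) = Pi.single a 1) ∧
      ∃ b, (fun i => v (Sum.inr i)) = Pi.single b 1 := by
      rw [← h1, ← h2]; rfl
    rw [this]
    constructor
    · rintro ⟨⟨a, ha⟩, b, hb⟩
      refine ⟨a, b, ?_⟩
      ext i
      rcases i with i | i
      · have := congrFun ha i
        simpa [Pi.single_apply] using this
      · have := congrFun hb i
        simpa [Pi.single_apply] using this
    · rintro ⟨a, b, rfl⟩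
      exact ⟨⟨a, by ext i; simp [Pi.single_apply]⟩, b, by ext i; simp [Pi.single_apply]⟩
  have himg : f '' latticeA (latticePts (simplexProd n m)) = segGen n m := by
    ext y
    constructor
    · rintro ⟨_, ⟨v, hv, rfl⟩, rfl⟩
      obtain ⟨a, b, rfl⟩ := (hL v).1 hv
      refine ⟨(a, b), ?_⟩
      ext i
      simp [f, intCast, Pi.single_apply]
    · rintro ⟨⟨a, b⟩, rfl⟩
      refine ⟨_, ⟨_, (hL _).2 ⟨a, b, rfl⟩, rfl⟩, ?_⟩
      ext i
      simp [f, intCast, Pi.single_apply]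
  rw [← himg]
  apply closure_equiv_image
  have hs : ∀ x ∈ AddSubmonoid.closure (latticeA (latticePts (simplexProd n m))),
      x.2 = ∑ a, x.1 (Sum.inl a) := by
    intro x hx
    induction hx using AddSubmonoid.closure_induction with
    | mem x hx =>
      obtain ⟨v, hv, rfl⟩ := hx
      obtain ⟨a, b, rfl⟩ := (hL v).1 hv
      simp [Pi.single_apply]
    | zero => simp
    | add x y _ _ h1 h2 => simp [h1, h2, Finset.sum_add_distrib]
  intro x hx y hy hxy
  have h1 : x.1 = y.1 := by
    ext i
    have := congrFun hxy i
    simpa [f, intCast] using this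
  exact Prod.ext h1 (by rw [hs x hx, hs y hy, h1])

lemma final_step (𝕜 : Type*) [Field 𝕜] (d : ℕ) (L : Set (Fin d → ℤ)) (k n m : ℕ)
    (hn : 0 < n) (hm : 0 < m)
    (φ : ((Fin d → ℝ) × ℝ) →ₗ[ℝ] (Fin k → ℝ) × ((Fin (n + 1) ⊕ Fin (m + 1)) → ℝ))
    (hinj : Set.InjOn φ (Submodule.span ℝ (prodCast '' latticeA L)))
    (himg : φ '' (prodCast '' latticeA L) = fullGen k n m) :
    IsNormalPolytope L ∧
      ∃ n m l : ℕ, 0 < n ∧ 0 < m ∧ 0 < l ∧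
        Nonempty (toricRing 𝕜 L ≃ₐ[𝕜]
          MvPolynomial (Fin (l - 1)) (toricRing 𝕜 (latticePts (simplexProd n m)))) := by
  let c : ((Fin d → ℤ) × ℤ) →+ ((Fin d → ℝ) × ℝ) :=
    { toFun := prodCast
      map_zero' := by ext <;> simp [prodCast, intCast]
      map_add' := fun x y => by ext <;> simp [prodCast, intCast] }
  have hc : ∀ x, c x = prodCast x := fun _ => rfl
  have hcinj : Function.Injective c := by
    intro x y hxy
    have h1 := congrArg Prod.fst hxy
    have h2 := congrArg Prod.snd hxy
    ext i
    · have := congrFun h1 i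
      simpa [hc, prodCast, intCast] using this
    · simpa [hc, prodCast, intCast] using h2
  let f : ((Fin d → ℤ) × ℤ) →+ (Fin k → ℝ) × ((Fin (n + 1) ⊕ Fin (m + 1)) → ℝ) :=
    φ.toAddMonoidHom.comp c
  have hf : ∀ x, f x = φ (prodCast x) := fun _ => rfl
  have hspan : ∀ x ∈ AddSubgroup.closure (latticeA L),
      prodCast x ∈ Submodule.span ℝ (prodCast '' latticeA L) := by
    intro x hx
    have : AddSubgroup.closure (latticeA L) ≤
        (Submodule.span ℝ (prodCast '' latticeA L)).toAddSubgroup.comap c := by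
      rw [AddSubgroup.closure_le]
      intro y hy
      exact Submodule.subset_span ⟨y, hy, rfl⟩
    exact this hx
  have hsub : ∀ x ∈ AddSubmonoid.closure (latticeA L), x ∈ AddSubgroup.closure (latticeA L) := by
    intro x hx
    have : AddSubmonoid.closure (latticeA L) ≤
        (AddSubgroup.closure (latticeA L)).toAddSubmonoid := by
      rw [AddSubmonoid.closure_le]
      exact AddSubgroup.subset_closure
    exact this hx
  have hfinj : Set.InjOn f (AddSubgroup.closure (latticeA L)) := by
    intro x hx y hy hxy
    exact hcinj (hinj (hspan x hx) (hspan y hy) hxy)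
  have hfimg : f '' latticeA L = fullGen k n m := by
    rw [← himg, Set.image_image]; rfl
  refine ⟨?_, n, m, k + 1, hn, hm, by omega, ?_⟩
  · intro x
    constructor
    · intro hx
      refine ⟨hsub x hx, ?_⟩
      have : AddSubmonoid.closure (latticeA L) ≤
          (Submodule.span ℝ≥0 (prodCast '' latticeA L)).toAddSubmonoid.comap c := by
        rw [AddSubmonoid.closure_le]
        intro y hy
        exact Submodule.subset_span ⟨y, hy, rfl⟩
      exact this hx
    · rintro ⟨hx1, hx2⟩
      have hinteg : (∀ z, ∃ t : ℤ, (f x).1 z = t) ∧ (∀ i, ∃ t : ℤ, (f x).2 i = t) ∧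
          ∑ a, (f x).2 (Sum.inl a) = ∑ b, (f x).2 (Sum.inr b) := by
        clear hx2
        induction hx1 using AddSubgroup.closure_induction with
        | mem x hx =>
          have : f x ∈ fullGen k n m := hfimg ▸ ⟨x, hx, rfl⟩
          rcases this with ⟨z, hz⟩ | ⟨_, ⟨⟨a, b⟩, rfl⟩, hz⟩
          · rw [← hz]
            refine ⟨fun w => ⟨if w = z then 1 else 0, ?_⟩, fun i => ⟨0, by simp⟩, by simp⟩
            simp [Pi.single_apply]
          · rw [← hz]
            refine ⟨fun w => ⟨0, by simp⟩, fun i =>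
              ⟨(if i = Sum.inl a then 1 else 0) + (if i = Sum.inr b then 1 else 0), ?_⟩, ?_⟩
            · simp [Pi.single_apply]
            · simp [Pi.single_apply]
        | zero =>
          rw [map_zero]
          exact ⟨fun _ => ⟨0, by simp⟩, fun _ => ⟨0, by simp⟩, by simp⟩
        | add x y _ _ h1 h2 =>
          rw [map_add]
          refine ⟨fun z => ?_, fun z => ?_, ?_⟩
          · obtain ⟨s, hs⟩ := h1.1 z
            obtain ⟨t, ht⟩ := h2.1 z
            exact ⟨s + t, by simp [hs, ht]⟩
          · obtain ⟨s, hs⟩ := h1.2.1 z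
            obtain ⟨t, ht⟩ := h2.2.1 z
            exact ⟨s + t, by simp [hs, ht]⟩
          · simp [Finset.sum_add_distrib, h1.2.2, h2.2.2]
        | neg x _ h1 =>
          rw [map_neg]
          refine ⟨fun z => ?_, fun z => ?_, ?_⟩
          · obtain ⟨s, hs⟩ := h1.1 z
            exact ⟨-s, by simp [hs]⟩
          · obtain ⟨s, hs⟩ := h1.2.1 z
            exact ⟨-s, by simp [hs]⟩
          · simp [h1.2.2]
      have hnn : ∀ y ∈ Submodule.span ℝ≥0 (prodCast '' latticeA L),
          (∀ z, 0 ≤ (φ y).1 z) ∧ (∀ z, 0 ≤ (φ y).2 z) := by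
        intro y hy
        induction hy using Submodule.span_induction with
        | mem y hy =>
          have : φ y ∈ fullGen k n m := himg ▸ ⟨y, hy, rfl⟩
          rcases this with ⟨z, hz⟩ | ⟨_, ⟨⟨a, b⟩, rfl⟩, hz⟩
          · rw [← hz]
            refine ⟨fun w => ?_, fun i => by simp⟩
            simp only [Pi.single_apply]; split_ifs <;> simp
          · rw [← hz]
            refine ⟨fun w => by simp, fun i => ?_⟩
            simp only [Pi.single_apply, Pi.add_apply]; split_ifs <;> simp
        | zero => simp
        | add x y _ _ h1 h2 =>
          rw [map_add]
          exact ⟨fun z => add_nonneg (h1.1 z) (h2.1 z), fun z => add_nonneg (h1.2 z) (h2.2 z)⟩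
        | smul r x _ h =>
          have : φ (r • x) = (r : ℝ) • φ x := by
            rw [← map_smul]; rfl
          rw [this]
          exact ⟨fun z => mul_nonneg r.2 (h.1 z), fun z => mul_nonneg r.2 (h.2 z)⟩
      obtain ⟨hi1, hi2, hi3⟩ := hinteg
      have hnx := hnn _ hx2
      have hnat : ∀ r : ℝ, (∃ t : ℤ, r = t) → 0 ≤ r → ∃ t : ℕ, r = t := by
        rintro r ⟨t, rfl⟩ ht
        have : 0 ≤ t := by exact_mod_cast ht
        obtain ⟨s, rfl⟩ := Int.eq_ofNat_of_zero_le this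
        exact ⟨s, by simp⟩
      choose p hp using fun z => hnat _ (hi1 z) (hnx.1 z)
      choose q hq using fun z => hnat _ (hi2 z) (hnx.2 z)
      have hmem := full_nat_mem k n m p q (by
        simp_rw [hq] at hi3
        exact_mod_cast hi3)
      have hfx : f x = ((fun z => (p z : ℝ)), fun i => (q i : ℝ)) := by
        ext i
        · exact hp i
        · exact hq i
      rw [← hfx, ← hfimg, ← AddMonoidHom.map_mclosure] at hmem
      obtain ⟨x', hx', he⟩ := hmem
      rwa [← hfinj (hsub x' hx') hx1 he]
  · obtain ⟨e1⟩ := closure_equiv_image f (latticeA L) (hfinj.mono hsub)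
    rw [hfimg] at e1
    obtain ⟨e2⟩ := full_equiv k n m
    obtain ⟨e3⟩ := seg_equiv n m
    let e : AddSubmonoid.closure (latticeA L) ≃+ (Fin k →₀ ℕ) ×
        AddSubmonoid.closure (latticeA (latticePts (simplexProd n m))) :=
      e1.trans (e2.trans (AddEquiv.prodCongr (AddEquiv.refl _) e3.symm))
    exact ⟨(AddMonoidAlgebra.domCongr 𝕜 𝕜 e).trans (AddMonoidAlgebra.curryAlgEquiv 𝕜)⟩

section linalg
set_option linter.unusedSectionVars false
variable {E : Type*} [AddCommGroup E] [Module ℝ E] [FiniteDimensional ℝ E]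

/-- facet functional -/
def FF (S : Finset E) (f : E →ₗ[ℝ] ℝ) : Prop :=
  (∀ s ∈ S, 0 ≤ f s) ∧
    Module.finrank ℝ (Submodule.span ℝ {s | s ∈ S ∧ f s = 0}) + 1 =
      Module.finrank ℝ (Submodule.span ℝ (S : Set E))

lemma zspan_le_ker (S : Finset E) (f : E →ₗ[ℝ] ℝ) :
    Submodule.span ℝ {s | s ∈ S ∧ f s = 0} ≤ LinearMap.ker f := by
  rw [Submodule.span_le]
  intro s hs
  exact hs.2

lemma zspan_le (S : Finset E) (f : E →ₗ[ℝ] ℝ) :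
    Submodule.span ℝ {s | s ∈ S ∧ f s = 0} ≤ Submodule.span ℝ (S : Set E) :=
  Submodule.span_mono fun _ hs => hs.1

lemma exists_FF (S : Finset E) (x : E) (hx : x ∈ Submodule.span ℝ (S : Set E)) :
    ∀ (N : ℕ) (f : E →ₗ[ℝ] ℝ), (∀ s ∈ S, 0 ≤ f s) → f x < 0 →
      Module.finrank ℝ (Submodule.span ℝ (S : Set E)) ≤ N +
        Module.finrank ℝ (Submodule.span ℝ {s | s ∈ S ∧ f s = 0}) →
      ∃ f, FF S f ∧ f x < 0 := by
  intro N
  induction N with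
  | zero =>
    intro f hf hfx hN
    exfalso
    have h1 : Submodule.span ℝ {s | s ∈ S ∧ f s = 0} = Submodule.span ℝ (S : Set E) :=
      Submodule.eq_of_le_of_finrank_le (zspan_le S f) (by omega)
    rw [← h1] at hx
    have := zspan_le_ker S f hx
    rw [LinearMap.mem_ker] at this
    linarith
  | succ N ih =>
    intro f hf hfx hN
    set U := Submodule.span ℝ {s | s ∈ S ∧ f s = 0} with hU
    have hxU : x ∉ U := fun h => by
      have := zspan_le_ker S f h
      rw [LinearMap.mem_ker] at this
      linarith
    have hfr := Submodule.finrank_sup_span_singleton hxU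
    have hle : U ⊔ Submodule.span ℝ {x} ≤ Submodule.span ℝ (S : Set E) :=
      sup_le (zspan_le S f) (by rw [Submodule.span_singleton_le_iff_mem]; exact hx)
    by_cases hcase : Submodule.span ℝ (S : Set E) ≤ U ⊔ Submodule.span ℝ {x}
    · refine ⟨f, ⟨hf, ?_⟩, hfx⟩
      rw [le_antisymm hcase hle, hfr]
    · obtain ⟨s, hsS, hs⟩ : ∃ s ∈ S, s ∉ U ⊔ Submodule.span ℝ {x} := by
        by_contra hcon
        push Not at hcon
        exact hcase (Submodule.span_le.2 hcon)
      obtain ⟨g0, hg0s, hg0⟩ := Submodule.exists_le_ker_of_notMem hs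
      obtain ⟨g, hgs, hg⟩ : ∃ g : E →ₗ[ℝ] ℝ, g s < 0 ∧
          U ⊔ Submodule.span ℝ {x} ≤ LinearMap.ker g := by
        rcases lt_or_gt_of_ne hg0s with h | h
        · exact ⟨g0, h, hg0⟩
        · refine ⟨-g0, by simpa using h, ?_⟩
          intro y hy
          have := hg0 hy
          simpa using this
      have hgx : g x = 0 := hg (Submodule.mem_sup_right (Submodule.mem_span_singleton_self x))
      have hgU : ∀ u ∈ U, g u = 0 := fun u hu => hg (Submodule.mem_sup_left hu)
      have hgf : ∀ u ∈ S, f u = 0 → g u = 0 := fun u hu h =>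
        hgU u (Submodule.subset_span ⟨hu, h⟩)
      let T := S.filter fun u => g u < 0
      have hT : T.Nonempty := ⟨s, by simp [T, hsS, hgs]⟩
      obtain ⟨u, huT, humin⟩ := T.exists_min_image (fun u => f u / (-g u)) hT
      have huS : u ∈ S := (Finset.mem_filter.1 huT).1
      have hgu : g u < 0 := (Finset.mem_filter.1 huT).2
      set t := f u / (-g u) with ht
      have ht0 : 0 ≤ t := div_nonneg (hf u huS) (by linarith)
      refine ih (f + t • g) ?_ ?_ ?_
      · intro v hv
        simp only [LinearMap.add_apply, LinearMap.smul_apply, smul_eq_mul]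
        rcases lt_or_ge (g v) 0 with h | h
        · have := humin v (by simp [T, hv, h])
          rw [le_div_iff₀ (by linarith)] at this
          nlinarith
        · have := hf v hv
          positivity
      · simp [hgx, hfx]
      · have hfu0 : (f + t • g) u = 0 := by
          simp only [LinearMap.add_apply, LinearMap.smul_apply, smul_eq_mul, ht]
          have := hgu.ne
          rw [div_neg, neg_mul, div_mul_cancel₀ _ this]
          ring
        have huU : u ∉ U := fun h => by
          have := hgU u h
          linarith
        have hsup : U ⊔ Submodule.span ℝ {u} ≤
            Submodule.span ℝ {s | s ∈ S ∧ (f + t • g) s = 0} := by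
          apply sup_le
          · apply Submodule.span_mono
            rintro v ⟨hv, hv0⟩
            exact ⟨hv, by simp [hv0, hgf v hv hv0]⟩
          · rw [Submodule.span_singleton_le_iff_mem]
            exact Submodule.subset_span ⟨huS, hfu0⟩
        have h1 := Submodule.finrank_mono hsup
        have h2 := Submodule.finrank_sup_span_singleton huU
        omega

lemma FF_exists_pos (S : Finset E) (f : E →ₗ[ℝ] ℝ) (hf : FF S f) : ∃ s ∈ S, 0 < f s := by
  by_contra hcon
  push Not at hcon
  have : {s | s ∈ S ∧ f s = 0} = (S : Set E) := by
    ext s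
    exact ⟨fun h => h.1, fun h => ⟨h, le_antisymm (hcon s h) (hf.1 s h)⟩⟩
  have h2 := hf.2
  rw [this] at h2
  omega

lemma FF_prop (S : Finset E) (f g : E →ₗ[ℝ] ℝ) (hf : FF S f) (hg : FF S g)
    (h : ∀ s ∈ S, f s = 0 → g s = 0) :
    ∃ r : ℝ, 0 < r ∧ ∀ x ∈ Submodule.span ℝ (S : Set E), g x = r * f x := by
  obtain ⟨s, hs, hfs⟩ := FF_exists_pos S f hf
  have hle : Submodule.span ℝ {s | s ∈ S ∧ f s = 0} ≤ Submodule.span ℝ {s | s ∈ S ∧ g s = 0} :=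
    Submodule.span_mono fun s hs => ⟨hs.1, h s hs.1 hs.2⟩
  have heq := Submodule.eq_of_le_of_finrank_le hle (by have := hf.2; have := hg.2; omega)
  have hgs : 0 < g s := by
    refine lt_of_le_of_ne (hg.1 s hs) fun h0 => ?_
    have : s ∈ Submodule.span ℝ {s | s ∈ S ∧ g s = 0} := Submodule.subset_span ⟨hs, h0.symm⟩
    rw [← heq] at this
    have := zspan_le_ker S f this
    rw [LinearMap.mem_ker] at this
    linarith
  have hsU : s ∉ Submodule.span ℝ {s | s ∈ S ∧ f s = 0} := fun h => by
    have := zspan_le_ker S f h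
    rw [LinearMap.mem_ker] at this
    linarith
  have hfr := Submodule.finrank_sup_span_singleton hsU
  have hW : Submodule.span ℝ {s | s ∈ S ∧ f s = 0} ⊔ Submodule.span ℝ {s} =
      Submodule.span ℝ (S : Set E) := by
    apply Submodule.eq_of_le_of_finrank_le
    · refine sup_le (zspan_le S f) ?_
      rw [Submodule.span_singleton_le_iff_mem]
      exact Submodule.subset_span hs
    · rw [hfr, hf.2]
  refine ⟨g s / f s, div_pos hgs hfs, ?_⟩
  have hker : Submodule.span ℝ (S : Set E) ≤ LinearMap.ker (g - (g s / f s) • f) := by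
    rw [← hW]
    apply sup_le
    · rw [Submodule.span_le]
      rintro u ⟨hu, hu0⟩
      simp [hu0, h u hu hu0]
    · rw [Submodule.span_singleton_le_iff_mem]
      simp only [LinearMap.mem_ker, LinearMap.sub_apply, LinearMap.smul_apply, smul_eq_mul]
      field_simp
      ring
  intro x hx
  have := hker hx
  simp only [LinearMap.mem_ker, LinearMap.sub_apply, LinearMap.smul_apply, smul_eq_mul] at this
  linarith

end linalg

/-- homogenization -/
def hmg {d : ℕ} (x : Fin d → ℝ) : (Fin d → ℝ) × ℝ := (x, 1)

lemma finrank_span_hmg {d : ℕ} (F : Set (Fin d → ℝ)) (hF : F.Nonempty) :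
    Module.finrank ℝ (Submodule.span ℝ (hmg '' F)) =
      Module.finrank ℝ (affineSpan ℝ F).direction + 1 := by
  obtain ⟨x0, hx0⟩ := hF
  rw [direction_affineSpan]
  set D := (vectorSpan ℝ F).map (LinearMap.inl ℝ (Fin d → ℝ) ℝ) with hD
  have hnot : hmg x0 ∉ D := by
    rintro ⟨y, -, hy⟩
    have := congrArg Prod.snd hy
    simp [hmg] at this
  have hfr := Submodule.finrank_sup_span_singleton hnot
  have hDr : Module.finrank ℝ D = Module.finrank ℝ (vectorSpan ℝ F) :=
    (LinearEquiv.finrank_eq (Submodule.equivMapOfInjective _ LinearMap.inl_injective _)).symm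
  rw [← hDr, ← hfr]
  have : Submodule.span ℝ (hmg '' F) = D ⊔ Submodule.span ℝ {hmg x0} := by
    apply le_antisymm
    · rw [Submodule.span_le]
      rintro _ ⟨x, hx, rfl⟩
      have h1 : hmg x = LinearMap.inl ℝ (Fin d → ℝ) ℝ (x -ᵥ x0) + hmg x0 := by
        ext <;> simp [hmg]
      rw [h1]
      exact add_mem (Submodule.mem_sup_left
        (Submodule.mem_map_of_mem (vsub_mem_vectorSpan ℝ hx hx0)))
        (Submodule.mem_sup_right (Submodule.mem_span_singleton_self _))
    · apply sup_le
      · rw [hD, vectorSpan_eq_span_vsub_set_right ℝ hx0, Submodule.map_span, Submodule.span_le]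
        rintro _ ⟨_, ⟨x, hx, rfl⟩, rfl⟩
        have h1 : LinearMap.inl ℝ (Fin d → ℝ) ℝ (x -ᵥ x0) = hmg x - hmg x0 := by
          ext <;> simp [hmg]
        simp only [SetLike.mem_coe]
        rw [h1]
        exact sub_mem (Submodule.subset_span ⟨x, hx, rfl⟩) (Submodule.subset_span ⟨x0, hx0, rfl⟩)
      · rw [Submodule.span_singleton_le_iff_mem]
        exact Submodule.subset_span ⟨x0, hx0, rfl⟩
  rw [this]

lemma hmg_mem_hull {d : ℕ} (V : Finset (Fin d → ℝ)) (x : Fin d → ℝ) :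
    x ∈ convexHull ℝ (V : Set (Fin d → ℝ)) ↔
      ∃ w : (Fin d → ℝ) → ℝ, (∀ v ∈ V, 0 ≤ w v) ∧ hmg x = ∑ v ∈ V, w v • hmg v := by
  rw [Finset.mem_convexHull']
  constructor
  · rintro ⟨w, h1, h2, h3⟩
    refine ⟨w, h1, ?_⟩
    apply Prod.ext
    · rw [Prod.fst_sum]; exact h3.symm
    · rw [Prod.snd_sum]; simp [hmg, h2]
  · rintro ⟨w, h1, h2⟩
    refine ⟨w, h1, ?_, ?_⟩
    · have := congrArg Prod.snd h2
      rw [Prod.snd_sum] at this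
      simpa [hmg] using this.symm
    · have := congrArg Prod.fst h2
      rw [Prod.fst_sum] at this
      exact this.symm

lemma span_zero_face {d : ℕ} (V : Finset (Fin d → ℝ)) (f : ((Fin d → ℝ) × ℝ) →ₗ[ℝ] ℝ)
    (hf : ∀ s ∈ V.image hmg, 0 ≤ f s) :
    Submodule.span ℝ (hmg '' {x | x ∈ convexHull ℝ (V : Set (Fin d → ℝ)) ∧ f (hmg x) = 0}) =
      Submodule.span ℝ {s | s ∈ V.image hmg ∧ f s = 0} := by
  apply le_antisymm
  · rw [Submodule.span_le]
    rintro _ ⟨x, ⟨hx, hx0⟩, rfl⟩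
    obtain ⟨w, hw, hxw⟩ := (hmg_mem_hull V x).1 hx
    rw [hxw, map_sum] at hx0
    simp only [map_smul, smul_eq_mul] at hx0
    rw [Finset.sum_eq_zero_iff_of_nonneg fun v hv =>
      mul_nonneg (hw v hv) (hf _ (Finset.mem_image_of_mem _ hv))] at hx0
    rw [hxw]
    refine sum_mem fun v hv => ?_
    rcases mul_eq_zero.1 (hx0 v hv) with h | h
    · rw [h, zero_smul]; exact zero_mem _
    · exact Submodule.smul_mem _ _ (Submodule.subset_span ⟨Finset.mem_image_of_mem _ hv, h⟩)
  · apply Submodule.span_mono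
    rintro s ⟨hs, hs0⟩
    obtain ⟨v, hv, rfl⟩ := Finset.mem_image.1 hs
    exact ⟨v, ⟨subset_convexHull _ _ hv, hs0⟩, rfl⟩

lemma hmg_nonneg {d : ℕ} (V : Finset (Fin d → ℝ)) (f : ((Fin d → ℝ) × ℝ) →ₗ[ℝ] ℝ)
    (hf : ∀ s ∈ V.image hmg, 0 ≤ f s) (x) (hx : x ∈ convexHull ℝ (V : Set (Fin d → ℝ))) :
    0 ≤ f (hmg x) := by
  obtain ⟨w, hw, hxw⟩ := (hmg_mem_hull V x).1 hx
  rw [hxw, map_sum]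
  refine Finset.sum_nonneg fun v hv => ?_
  rw [map_smul]
  exact mul_nonneg (hw v hv) (hf _ (Finset.mem_image_of_mem _ hv))

lemma span_hull {d : ℕ} (V : Finset (Fin d → ℝ)) :
    Submodule.span ℝ (hmg '' (convexHull ℝ (V : Set (Fin d → ℝ)))) =
      Submodule.span ℝ (V.image hmg : Set ((Fin d → ℝ) × ℝ)) := by
  have := span_zero_face V 0 (by simp)
  simpa [Set.image] using this

lemma finrank_W {d : ℕ} (V : Finset (Fin d → ℝ)) (hV : V.Nonempty) :
    Module.finrank ℝ (Submodule.span ℝ (V.image hmg : Set ((Fin d → ℝ) × ℝ))) =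
    Module.finrank ℝ (affineSpan ℝ (convexHull ℝ (V : Set (Fin d → ℝ)))).direction + 1 := by
  rw [← span_hull, finrank_span_hmg]
  obtain ⟨v, hv⟩ := hV
  exact ⟨v, subset_convexHull _ _ hv⟩

lemma facet_to_FF {d : ℕ} (V : Finset (Fin d → ℝ)) (hV : V.Nonempty) (F : Set (Fin d → ℝ))
    (hF : IsFacet (convexHull ℝ (V : Set (Fin d → ℝ))) F) :
    ∃ f, FF (V.image hmg) f ∧
      F = {x | x ∈ convexHull ℝ (V : Set (Fin d → ℝ)) ∧ f (hmg x) = 0} := by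
  obtain ⟨hexp, hne, hfr⟩ := hF
  obtain ⟨l, hl⟩ := hexp hne
  obtain ⟨x0, hx0⟩ := hne
  have hx0' := hx0
  rw [hl] at hx0'
  let f : ((Fin d → ℝ) × ℝ) →ₗ[ℝ] ℝ :=
    l x0 • LinearMap.snd ℝ (Fin d → ℝ) ℝ - l.toLinearMap ∘ₗ LinearMap.fst ℝ (Fin d → ℝ) ℝ
  have hfx : ∀ x, f (hmg x) = l x0 - l x := by intro x; simp [f, hmg]
  have hnn : ∀ s ∈ V.image hmg, 0 ≤ f s := by
    intro s hs
    obtain ⟨v, hv, rfl⟩ := Finset.mem_image.1 hs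
    rw [hfx]
    have := hx0'.2 v (subset_convexHull _ _ hv)
    linarith
  have hFeq : F = {x | x ∈ convexHull ℝ (V : Set (Fin d → ℝ)) ∧ f (hmg x) = 0} := by
    rw [hl]
    ext x
    simp only [Set.mem_ofPred_eq, hfx]
    constructor
    · rintro ⟨h1, h2⟩
      have := h2 x0 hx0'.1
      have := hx0'.2 x h1
      exact ⟨h1, by linarith⟩
    · rintro ⟨h1, h2⟩
      refine ⟨h1, fun y hy => ?_⟩
      have := hx0'.2 y hy
      linarith
  refine ⟨f, ⟨hnn, ?_⟩, hFeq⟩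
  rw [← span_zero_face V f hnn, ← hFeq, finrank_span_hmg F ⟨x0, hx0⟩, finrank_W V hV, hfr]

lemma FF_to_facet {d : ℕ} (V : Finset (Fin d → ℝ)) (hV : V.Nonempty)
    (he : 0 < Module.finrank ℝ (affineSpan ℝ (convexHull ℝ (V : Set (Fin d → ℝ)))).direction)
    (f) (hf : FF (V.image hmg) f) :
    IsFacet (convexHull ℝ (V : Set (Fin d → ℝ)))
      {x | x ∈ convexHull ℝ (V : Set (Fin d → ℝ)) ∧ f (hmg x) = 0} := by
  have h1 := hf.2
  rw [finrank_W V hV] at h1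
  have hne : {x | x ∈ convexHull ℝ (V : Set (Fin d → ℝ)) ∧ f (hmg x) = 0}.Nonempty := by
    by_contra hcon
    rw [Set.not_nonempty_iff_eq_empty] at hcon
    rw [← span_zero_face V f hf.1, hcon] at h1
    rw [Set.image_empty, Submodule.span_empty, finrank_bot] at h1
    omega
  refine ⟨?_, hne, ?_⟩
  · intro _
    obtain ⟨x0, hx0, hx0z⟩ := hne
    let l : (Fin d → ℝ) →L[ℝ] ℝ := LinearMap.toContinuousLinearMap
      (-(f ∘ₗ LinearMap.inl ℝ (Fin d → ℝ) ℝ))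
    have hl : ∀ x, l x = f (0, 1) - f (hmg x) := by
      intro x
      have : hmg x = (x, 0) + (0, 1) := by ext <;> simp [hmg]
      rw [this, map_add]
      simp [l]
    refine ⟨l, ?_⟩
    ext x
    simp only [Set.mem_ofPred_eq, hl]
    constructor
    · rintro ⟨hx, hx0⟩
      refine ⟨hx, fun y hy => ?_⟩
      have := hmg_nonneg V f hf.1 y hy
      linarith
    · rintro ⟨hx, hm⟩
      refine ⟨hx, le_antisymm ?_ (hmg_nonneg V f hf.1 x hx)⟩
      have := hm x0 hx0
      linarith
  · rw [← finrank_span_hmg _ hne, span_zero_face V f hf.1]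
    omega

lemma farkas {d : ℕ} (V : Finset (Fin d → ℝ)) (x : (Fin d → ℝ) × ℝ)
    (hx : ¬ ∃ w : (Fin d → ℝ) → ℝ, (∀ v ∈ V, 0 ≤ w v) ∧ x = ∑ v ∈ V, w v • hmg v) :
    ∃ f : ((Fin d → ℝ) × ℝ) →ₗ[ℝ] ℝ, (∀ s ∈ V.image hmg, 0 ≤ f s) ∧ f x < 0 := by
  obtain ⟨u, h⟩ := x
  rcases lt_trichotomy h 0 with hh | hh | hh
  · refine ⟨LinearMap.snd ℝ _ _, ?_, hh⟩
    intro s hs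
    obtain ⟨v, hv, rfl⟩ := Finset.mem_image.1 hs
    simp [hmg]
  · subst hh
    have hu : u ≠ 0 := by
      rintro rfl
      exact hx ⟨0, by simp, by simp⟩
    obtain ⟨i, hi⟩ := Function.ne_iff.1 hu
    obtain ⟨l, hl⟩ : ∃ l : (Fin d → ℝ) →ₗ[ℝ] ℝ, l u < 0 := by
      rcases lt_or_gt_of_ne hi with hh | hh
      · exact ⟨LinearMap.proj i, hh⟩
      · exact ⟨-LinearMap.proj i, by simpa using hh⟩
    refine ⟨l ∘ₗ LinearMap.fst ℝ _ _ + (∑ v ∈ V, |l v|) • LinearMap.snd ℝ _ _, ?_, by simpa using hl⟩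
    intro s hs
    obtain ⟨v, hv, rfl⟩ := Finset.mem_image.1 hs
    have h1 : |l v| ≤ ∑ v ∈ V, |l v| := Finset.single_le_sum (f := fun v => |l v|)
      (fun v _ => abs_nonneg _) hv
    have h2 := neg_abs_le (l v)
    simp only [hmg, LinearMap.add_apply, LinearMap.comp_apply, LinearMap.fst_apply,
      LinearMap.smul_apply, LinearMap.snd_apply, smul_eq_mul]
    linarith
  · have hnot : h⁻¹ • u ∉ convexHull ℝ (V : Set (Fin d → ℝ)) := by
      intro hmem
      obtain ⟨w, hw, hxw⟩ := (hmg_mem_hull V _).1 hmem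
      refine hx ⟨fun v => h * w v, fun v hv => mul_nonneg hh.le (hw v hv), ?_⟩
      have : (u, h) = h • hmg (h⁻¹ • u) := by
        ext
        · simp [hmg, hh.ne']
        · simp [hmg]
      rw [this, hxw, Finset.smul_sum]
      simp [mul_smul]
    obtain ⟨l, t, hl1, hl2⟩ := geometric_hahn_banach_closed_point (convex_convexHull ℝ _)
      (V.finite_toSet.isClosed_convexHull ℝ) hnot
    refine ⟨t • LinearMap.snd ℝ _ _ - l.toLinearMap ∘ₗ LinearMap.fst ℝ _ _, ?_, ?_⟩
    · intro s hs
      obtain ⟨v, hv, rfl⟩ := Finset.mem_image.1 hs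
      have := hl1 v (subset_convexHull _ _ hv)
      simp [hmg]
      linarith
    · rw [map_smul, smul_eq_mul, inv_mul_eq_div, lt_div_iff₀ hh] at hl2
      simp
      linarith

/-- Facet data of a polytope with `e+2` facets. -/
lemma facet_data {d e : ℕ} (V : Finset (Fin d → ℝ)) (hV : V.Nonempty)
    (hdim : Module.finrank ℝ (affineSpan ℝ (convexHull ℝ (V : Set (Fin d → ℝ)))).direction = e)
    (hfac : {F : Set (Fin d → ℝ) | IsFacet (convexHull ℝ (V : Set (Fin d → ℝ))) F}.ncard = e + 2) :
    ∃ g : Fin (e + 2) → (((Fin d → ℝ) × ℝ) →ₗ[ℝ] ℝ),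
      (∀ i, ∀ v ∈ V, 0 ≤ g i (hmg v)) ∧
      (∀ i, ∃ v ∈ V, 0 < g i (hmg v)) ∧
      (∀ i j, (∀ v ∈ V, g i (hmg v) = 0 → g j (hmg v) = 0) → i = j) ∧
      (∀ x ∈ Submodule.span ℝ (V.image hmg : Set ((Fin d → ℝ) × ℝ)), (∀ i, 0 ≤ g i x) →
        ∃ w : (Fin d → ℝ) → ℝ, (∀ v ∈ V, 0 ≤ w v) ∧ x = ∑ v ∈ V, w v • hmg v) := by
  set P := convexHull ℝ (V : Set (Fin d → ℝ)) with hP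
  have hfin : {F : Set (Fin d → ℝ) | IsFacet P F}.Finite :=
    Set.finite_of_ncard_ne_zero (by omega)
  have := hfin.to_subtype
  have hcard : Nat.card {F : Set (Fin d → ℝ) | IsFacet P F} = e + 2 := hfac
  let E := Finite.equivFinOfCardEq hcard
  choose g hg using fun i => facet_to_FF V hV (E.symm i).1 (E.symm i).2
  have he : 0 < e := by
    have := (E.symm 0).2.2.2
    omega
  have hprop : ∀ f, FF (V.image hmg) f → ∀ i, (∀ v ∈ V, f (hmg v) = 0 → g i (hmg v) = 0) →
      ∃ r : ℝ, 0 < r ∧ ∀ x ∈ Submodule.span ℝ (V.image hmg : Set ((Fin d → ℝ) × ℝ)),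
        g i x = r * f x := by
    intro f hf i h
    apply FF_prop _ _ _ hf (hg i).1
    intro s hs
    obtain ⟨v, hv, rfl⟩ := Finset.mem_image.1 hs
    exact h v hv
  refine ⟨g, ?_, ?_, ?_, ?_⟩
  · intro i v hv
    exact (hg i).1.1 _ (Finset.mem_image_of_mem _ hv)
  · intro i
    obtain ⟨s, hs, h⟩ := FF_exists_pos _ _ (hg i).1
    obtain ⟨v, hv, rfl⟩ := Finset.mem_image.1 hs
    exact ⟨v, hv, h⟩
  · intro i j h
    obtain ⟨r, hr, hx⟩ := hprop (g i) (hg i).1 j h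
    apply E.symm.injective
    apply Subtype.ext
    rw [(hg i).2, (hg j).2]
    ext x
    simp only [Set.mem_ofPred_eq]
    refine and_congr_right fun hxP => ?_
    rw [hx (hmg x) (by rw [← span_hull]; exact Submodule.subset_span ⟨x, hxP, rfl⟩)]
    simp [hr.ne']
  · intro x hx hpos
    by_contra hcon
    obtain ⟨f0, h0, h1⟩ := farkas V x hcon
    obtain ⟨f, hf, hfx⟩ := exists_FF _ x hx _ f0 h0 h1 (Nat.le_add_right _ _)
    have hfacet := FF_to_facet V hV (by rw [hdim]; exact he) f hf
    let i := E ⟨_, hfacet⟩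
    have hi := (hg i).2
    simp only [i, Equiv.symm_apply_apply] at hi
    obtain ⟨r, hr, hrx⟩ := hprop f hf i (by
      intro v hv hv0
      have hm : v ∈ {x | x ∈ P ∧ f (hmg x) = 0} := ⟨subset_convexHull _ _ hv, hv0⟩
      rw [hi] at hm
      exact hm.2)
    have := hpos i
    rw [hrx x hx] at this
    nlinarith

lemma extreme01 {d : ℕ} {J : Type*} [Fintype J] (p : J → Fin d → ℝ) (w : J → ℝ)
    (hp : ∀ j i, p j i = 0 ∨ p j i = 1) (hw : ∀ j, 0 ≤ w j) (v : Fin d → ℝ)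
    (hv : ∀ i, v i = 0 ∨ v i = 1) (h : hmg v = ∑ j, w j • hmg (p j)) : ∃ j, v = p j := by
  have h1 : ∀ i, v i = ∑ j, w j * p j i := by
    intro i
    have := congrFun (congrArg Prod.fst h) i
    simpa [Prod.fst_sum, hmg, Finset.sum_apply] using this
  have h2 : (1 : ℝ) = ∑ j, w j := by
    have := congrArg Prod.snd h
    simpa [Prod.snd_sum, hmg] using this
  obtain ⟨j, -, hj⟩ : ∃ j ∈ Finset.univ, w j ≠ 0 :=
    Finset.exists_ne_zero_of_sum_ne_zero (by rw [← h2]; simp)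
  refine ⟨j, funext fun i => ?_⟩
  rcases hv i with hi | hi
  · have h3 := h1 i
    rw [hi, eq_comm, Finset.sum_eq_zero_iff_of_nonneg] at h3
    · have := h3 j (Finset.mem_univ j)
      rw [hi]
      rcases mul_eq_zero.1 this with h | h
      · exact absurd h hj
      · exact h.symm
    · intro j _
      rcases hp j i with h | h <;> simp [h, hw j]
  · have h3 : ∑ j, w j * (1 - p j i) = 0 := by
      simp only [mul_sub, mul_one, Finset.sum_sub_distrib, ← h1, ← h2, hi, sub_self]
    rw [Finset.sum_eq_zero_iff_of_nonneg] at h3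
    · have := h3 j (Finset.mem_univ j)
      rw [hi]
      rcases mul_eq_zero.1 this with h | h
      · exact absurd h hj
      · linarith
    · intro j _
      rcases hp j i with h | h <;> simp [h, hw j]

lemma four_aux {d : ℕ} (p q r s : Fin d → ℝ) (α β γ δ : ℝ) (hα : 0 < α) (hβ : 0 < β)
    (hγ : 0 < γ) (hδ : 0 < δ)
    (hp : ∀ i, p i = 0 ∨ p i = 1) (hq : ∀ i, q i = 0 ∨ q i = 1)
    (hr : ∀ i, r i = 0 ∨ r i = 1) (hs : ∀ i, s i = 0 ∨ s i = 1)
    (h : α • hmg p + β • hmg q = γ • hmg r + δ • hmg s) (hpr : p ≠ r) : α = δ := by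
  have h1 : ∀ i, α * p i + β * q i = γ * r i + δ * s i := fun i => by
    have := congrFun (congrArg Prod.fst h) i
    simpa [hmg] using this
  have h2 : α + β = γ + δ := by
    have := congrArg Prod.snd h
    simpa [hmg] using this
  obtain ⟨i, hi⟩ := Function.ne_iff.1 hpr
  have := h1 i
  rcases hp i with a | a <;> rcases hq i with b | b <;> rcases hr i with c | c <;>
    rcases hs i with e | e <;> rw [a, b, c, e] at this <;> rw [a, c] at hi <;>
    first
    | exact absurd rfl hi
    | linarith

lemma exists_functional {d N : ℕ} (V : Finset (Fin d → ℝ))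
    (hW : Module.finrank ℝ (Submodule.span ℝ (V.image hmg : Set ((Fin d → ℝ) × ℝ))) = N)
    (g : Fin (N + 1) → (((Fin d → ℝ) × ℝ) →ₗ[ℝ] ℝ))
    (hinj : ∀ x ∈ Submodule.span ℝ (V.image hmg : Set ((Fin d → ℝ) × ℝ)),
      (∀ i, g i x = 0) → x = 0) :
    ∃ c : Fin (N + 1) → ℝ, c ≠ 0 ∧ ∀ y : Fin (N + 1) → ℝ,
      (∃ x ∈ Submodule.span ℝ (V.image hmg : Set ((Fin d → ℝ) × ℝ)), ∀ i, g i x = y i) ↔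
        ∑ i, c i * y i = 0 := by
  set W := Submodule.span ℝ (V.image hmg : Set ((Fin d → ℝ) × ℝ)) with hWdef
  let L : W →ₗ[ℝ] (Fin (N + 1) → ℝ) := (LinearMap.pi g) ∘ₗ W.subtype
  have hL : Function.Injective L := by
    rw [injective_iff_map_eq_zero]
    intro x hx
    apply Subtype.ext
    exact hinj x x.2 fun i => congrFun hx i
  have hfr := LinearMap.finrank_range_of_inj hL
  rw [hW] at hfr
  have hlt : LinearMap.range L < ⊤ := by
    rw [lt_top_iff_ne_top]
    intro h
    rw [h, finrank_top] at hfr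
    simp at hfr
  obtain ⟨f, hf0, hf⟩ := Submodule.exists_le_ker_of_lt_top _ hlt
  have hker : LinearMap.range L = LinearMap.ker f := by
    apply Submodule.eq_of_le_of_finrank_le hf
    have h1 : LinearMap.ker f ≠ ⊤ := fun h => hf0 (LinearMap.ker_eq_top.1 h)
    have := Submodule.finrank_lt h1
    simp at this
    omega
  have hfs : ∀ y, f y = ∑ i, f (Pi.single i 1) * y i := by
    intro y
    rw [LinearMap.pi_apply_eq_sum_univ f y]
    refine Finset.sum_congr rfl fun i _ => ?_
    rw [smul_eq_mul, mul_comm]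
    congr 2
    ext j
    simp [Pi.single_apply, eq_comm]
  refine ⟨fun i => f (Pi.single i 1), ?_, ?_⟩
  · intro h
    apply hf0
    ext y
    have := congrFun h y
    simpa using this
  · intro y
    rw [← hfs, ← LinearMap.mem_ker, ← hker]
    constructor
    · rintro ⟨x, hx, hxy⟩
      exact ⟨⟨x, hx⟩, funext hxy⟩
    · rintro ⟨x, hx⟩
      exact ⟨x.1, x.2, fun i => congrFun hx i⟩

lemma exists_second_pos {N : ℕ} {I : Type*} (Y : I → Fin N → ℝ) (c : Fin N → ℝ) (hc : c ≠ 0)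
    (hY : ∀ v i, 0 ≤ Y v i) (hpos : ∀ i, ∃ v, 0 < Y v i)
    (hP : ∀ i j, (∀ v, Y v i = 0 → Y v j = 0) → i = j)
    (hsum : ∀ v, ∑ i, c i * Y v i = 0) : ∀ a, 0 < c a → ∃ a', a' ≠ a ∧ 0 < c a' := by
  intro a ha
  by_contra hcon
  push Not at hcon
  obtain ⟨b, hb⟩ : ∃ b, c b < 0 := by
    by_contra h
    push Not at h
    obtain ⟨v, hv⟩ := hpos a
    have h1 := hsum v
    rw [Finset.sum_eq_zero_iff_of_nonneg fun i _ => mul_nonneg (h i) (hY v i)] at h1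
    have := h1 a (Finset.mem_univ a)
    have := mul_pos ha hv
    linarith
  have : a = b := by
    apply hP
    intro v hv
    have h1 : ∑ i, -(c i * Y v i) = 0 := by rw [Finset.sum_neg_distrib, hsum, neg_zero]
    rw [Finset.sum_eq_zero_iff_of_nonneg] at h1
    · have := h1 b (Finset.mem_univ b)
      rw [neg_eq_zero, mul_eq_zero] at this
      rcases this with h | h
      · linarith
      · exact h
    · intro i _
      by_cases hi : i = a
      · rw [hi, hv]; simp
      · have := mul_nonneg (neg_nonneg.2 (hcon i hi)) (hY v i)
        simpa using this
  subst this
  linarith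

lemma exists_first_pos {N : ℕ} {I : Type*} (Y : I → Fin N → ℝ) (c : Fin N → ℝ) (hc : c ≠ 0)
    (hY : ∀ v i, 0 ≤ Y v i) (hpos : ∀ i, ∃ v, 0 < Y v i)
    (hsum : ∀ v, ∑ i, c i * Y v i = 0) : ∃ a, 0 < c a := by
  by_contra hcon
  push Not at hcon
  apply hc
  ext i
  obtain ⟨v, hv⟩ := hpos i
  have h1 : ∑ i, -(c i * Y v i) = 0 := by rw [Finset.sum_neg_distrib, hsum, neg_zero]
  rw [Finset.sum_eq_zero_iff_of_nonneg] at h1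
  · have := h1 i (Finset.mem_univ i)
    rw [neg_eq_zero, mul_eq_zero] at this
    rcases this with h | h
    · exact h
    · linarith
  · intro i _
    have := mul_nonneg (neg_nonneg.2 (hcon i)) (hY v i)
    simpa using this

lemma full_real_decomp (k n m : ℕ) (y : (Fin k → ℝ) × ((Fin (n + 1) ⊕ Fin (m + 1)) → ℝ))
    (h2 : ∀ i, 0 ≤ y.2 i)
    (h : ∑ a, y.2 (Sum.inl a) = ∑ b, y.2 (Sum.inr b)) :
    y = ∑ j : Fin k ⊕ (Fin (n + 1) × Fin (m + 1)),
      (Sum.elim y.1 (fun p => y.2 (Sum.inl p.1) * y.2 (Sum.inr p.2) / ∑ a, y.2 (Sum.inl a)) j) •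
      (Sum.elim (fun z => ((Pi.single z (1 : ℝ) : Fin k → ℝ),
          (0 : (Fin (n + 1) ⊕ Fin (m + 1)) → ℝ)))
        (fun p => ((0 : Fin k → ℝ), Pi.single (Sum.inl p.1) (1 : ℝ) +
          Pi.single (Sum.inr p.2) (1 : ℝ))) j) := by
  rw [Fintype.sum_sum_type, Fintype.sum_prod_type]
  set T := ∑ a, y.2 (Sum.inl a) with hT
  apply Prod.ext
  · ext z
    simp [Prod.fst_sum, Finset.sum_apply, Pi.single_apply]
  · ext i
    rcases i with a | b
    · have h3 : ∑ b, y.2 (Sum.inl a) * y.2 (Sum.inr b) / T = y.2 (Sum.inl a) := by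
        rw [← Finset.sum_div, ← Finset.mul_sum, ← h]
        by_cases hT0 : T = 0
        · have := (Finset.sum_eq_zero_iff_of_nonneg fun a _ => h2 (Sum.inl a)).1 (hT ▸ hT0) a
            (Finset.mem_univ a)
          simp [this]
        · field_simp
      simp [Prod.snd_sum, Finset.sum_apply, Pi.single_apply]
      simp [h3]
    · have h3 : ∑ a, y.2 (Sum.inl a) * y.2 (Sum.inr b) / T = y.2 (Sum.inr b) := by
        rw [← Finset.sum_div, ← Finset.sum_mul, ← hT]
        by_cases hT0 : T = 0
        · have := (Finset.sum_eq_zero_iff_of_nonneg fun a _ => h2 (Sum.inr a)).1 (h ▸ hT0) b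
            (Finset.mem_univ b)
          simp [this]
        · field_simp
      simp [Prod.snd_sum, Finset.sum_apply, Pi.single_apply]
      simp [h3]

lemma sum_sign_split {ι : Type*} [Fintype ι] (c F : ι → ℝ) :
    ∑ a : {a // 0 < c a}, c a.1 * F a.1 + ∑ b : {b // c b < 0}, c b.1 * F b.1 =
      ∑ i, c i * F i := by
  classical
  rw [← Finset.sum_subtype (Finset.univ.filter fun a => 0 < c a) (by simp)
      (fun a => c a * F a),
    ← Finset.sum_subtype (Finset.univ.filter fun a => c a < 0) (by simp)
      (fun a => c a * F a), Finset.sum_filter, Finset.sum_filter, ← Finset.sum_add_distrib]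
  refine Finset.sum_congr rfl fun i _ => ?_
  rcases lt_trichotomy (c i) 0 with h | h | h
  · simp [h, h.not_gt]
  · simp [h]
  · simp [h, h.not_gt]

lemma core {d e : ℕ} (V : Finset (Fin d → ℝ)) (h01 : ∀ v ∈ V, ∀ i, v i = 0 ∨ v i = 1)
    (hW : Module.finrank ℝ (Submodule.span ℝ (V.image hmg : Set ((Fin d → ℝ) × ℝ))) = e + 1)
    (g : Fin (e + 2) → (((Fin d → ℝ) × ℝ) →ₗ[ℝ] ℝ))
    (hg0 : ∀ i, ∀ v ∈ V, 0 ≤ g i (hmg v))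
    (hg1 : ∀ i, ∃ v ∈ V, 0 < g i (hmg v))
    (hg2 : ∀ i j, (∀ v ∈ V, g i (hmg v) = 0 → g j (hmg v) = 0) → i = j)
    (hg3 : ∀ x ∈ Submodule.span ℝ (V.image hmg : Set ((Fin d → ℝ) × ℝ)), (∀ i, 0 ≤ g i x) →
        ∃ w : (Fin d → ℝ) → ℝ, (∀ v ∈ V, 0 ≤ w v) ∧ x = ∑ v ∈ V, w v • hmg v) :
    ∃ k n m : ℕ, 0 < n ∧ 0 < m ∧
      ∃ φ : ((Fin d → ℝ) × ℝ) →ₗ[ℝ] (Fin k → ℝ) × ((Fin (n + 1) ⊕ Fin (m + 1)) → ℝ),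
        Set.InjOn φ (Submodule.span ℝ (V.image hmg : Set ((Fin d → ℝ) × ℝ))) ∧
        φ '' (V.image hmg : Set ((Fin d → ℝ) × ℝ)) = fullGen k n m := by
  set W := Submodule.span ℝ (V.image hmg : Set ((Fin d → ℝ) × ℝ)) with hWdef
  have hVW : ∀ v ∈ V, hmg v ∈ W := fun v hv =>
    Submodule.subset_span (Finset.mem_coe.2 (Finset.mem_image_of_mem _ hv))
  -- injectivity
  have hinj0 : ∀ x ∈ W, (∀ i, g i x = 0) → x = 0 := by
    intro x hx h
    obtain ⟨w, hw, hxw⟩ := hg3 x hx fun i => (h i).ge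
    obtain ⟨w', hw', hxw'⟩ := hg3 (-x) (neg_mem hx) fun i => by simp [h i]
    have h1 : ∑ v ∈ V, (w v + w' v) = 0 := by
      have h1 := congrArg Prod.snd hxw
      have h2 := congrArg Prod.snd hxw'
      simp only [Prod.snd_sum, hmg, Prod.smul_mk, smul_eq_mul, mul_one, Prod.snd_neg] at h1 h2
      rw [Finset.sum_add_distrib, ← h1, ← h2]; ring
    rw [Finset.sum_eq_zero_iff_of_nonneg fun v hv => add_nonneg (hw v hv) (hw' v hv)] at h1
    rw [hxw]
    refine Finset.sum_eq_zero fun v hv => ?_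
    have : w v = 0 := by linarith [h1 v hv, hw v hv, hw' v hv]
    rw [this, zero_smul]
  have hinj : ∀ x ∈ W, ∀ y ∈ W, (∀ i, g i x = g i y) → x = y := by
    intro x hx y hy h
    exact sub_eq_zero.1 (hinj0 (x - y) (sub_mem hx hy) fun i => by rw [map_sub, h i, sub_self])
  obtain ⟨c, hc0, hc⟩ := exists_functional V hW g hinj0
  have hsum : ∀ v ∈ V, ∑ i, c i * g i (hmg v) = 0 := fun v hv =>
    (hc _).1 ⟨hmg v, hVW v hv, fun _ => rfl⟩
  let Y : V → Fin (e + 2) → ℝ := fun v i => g i (hmg v.1)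
  have hY0 : ∀ v i, 0 ≤ Y v i := fun v i => hg0 i v.1 v.2
  have hY1 : ∀ i, ∃ v, 0 < Y v i := fun i => by
    obtain ⟨v, hv, h⟩ := hg1 i
    exact ⟨⟨v, hv⟩, h⟩
  have hY2 : ∀ i j, (∀ v, Y v i = 0 → Y v j = 0) → i = j := fun i j h =>
    hg2 i j fun v hv => h ⟨v, hv⟩
  have hY3 : ∀ v, ∑ i, c i * Y v i = 0 := fun v => hsum v.1 v.2
  have hY3' : ∀ v, ∑ i, (-c) i * Y v i = 0 := fun v => by
    have := hY3 v
    simp [this]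
  obtain ⟨a0, ha0⟩ := exists_first_pos Y c hc0 hY0 hY1 hY3
  obtain ⟨b0, hb0⟩ := exists_first_pos Y (-c) (neg_ne_zero.2 hc0) hY0 hY1 hY3'
  have hA2 := exists_second_pos Y c hc0 hY0 hY1 hY2 hY3
  have hB2 := exists_second_pos Y (-c) (neg_ne_zero.2 hc0) hY0 hY1 hY2 hY3'
  -- rays
  have hray : ∀ y : Fin (e + 2) → ℝ, (∀ i, 0 ≤ y i) → y ≠ 0 → ∑ i, c i * y i = 0 →
      ∃ v ∈ V, ∀ i, y i = 0 → g i (hmg v) = 0 := by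
    intro y hy hy0 hcy
    obtain ⟨x, hx, hxy⟩ := (hc y).2 hcy
    obtain ⟨w, hw, hxw⟩ := hg3 x hx fun i => by rw [hxy]; exact hy i
    have hyw : ∀ i, y i = ∑ v ∈ V, w v * g i (hmg v) := by
      intro i
      rw [← hxy, hxw, map_sum]
      simp
    obtain ⟨v, hv, hwv⟩ : ∃ v ∈ V, w v ≠ 0 := by
      by_contra hcon
      push Not at hcon
      apply hy0
      ext i
      rw [hyw]
      exact Finset.sum_eq_zero fun v hv => by rw [hcon v hv, zero_mul]
    refine ⟨v, hv, fun i hi => ?_⟩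
    rw [hyw, Finset.sum_eq_zero_iff_of_nonneg fun v hv => mul_nonneg (hw v hv) (hg0 i v hv)] at hi
    exact (mul_eq_zero.1 (hi v hv)).resolve_left hwv
  have hne : ∀ v ∈ V, ∃ i, g i (hmg v) ≠ 0 := by
    intro v hv
    by_contra hcon
    push Not at hcon
    have := congrArg Prod.snd (hinj0 _ (hVW v hv) hcon)
    simp [hmg] at this
  have hZray : ∀ z : {z // c z = 0}, ∃ v ∈ V, ∃ u : ℝ, 0 < u ∧
      ∀ i, g i (hmg v) = if i = z.1 then u else 0 := by
    rintro ⟨z, hz⟩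
    obtain ⟨v, hv, h⟩ := hray (Pi.single z 1) (fun i => by
      rw [Pi.single_apply]; split_ifs <;> simp) (by simp) (by simp [Pi.single_apply, hz])
    have h' : ∀ i, i ≠ z → g i (hmg v) = 0 := fun i hi => h i (Pi.single_eq_of_ne hi _)
    refine ⟨v, hv, g z (hmg v), ?_, ?_⟩
    · refine lt_of_le_of_ne (hg0 z v hv) fun h0 => ?_
      obtain ⟨i, hi⟩ := hne v hv
      by_cases hiz : i = z
      · subst hiz; exact hi h0.symm
      · exact hi (h' i hiz)
    · intro i
      split_ifs with hi
      · rw [hi]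
      · exact h' i hi
  have hABray : ∀ (a : {a // 0 < c a}) (b : {b // c b < 0}), ∃ v ∈ V, ∃ t : ℝ, 0 < t ∧
      ∀ i, g i (hmg v) = t * ((if i = a.1 then (c a.1)⁻¹ else 0) +
        (if i = b.1 then (-c b.1)⁻¹ else 0)) := by
    rintro ⟨a, ha⟩ ⟨b, hb⟩
    have hab : a ≠ b := by rintro rfl; linarith
    have hb' : 0 < -c b := by linarith
    obtain ⟨v, hv, h⟩ := hray (fun i => (if i = a then (c a)⁻¹ else 0) +
        (if i = b then (-c b)⁻¹ else 0)) (fun i => by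
          have := inv_pos.2 ha
          have := inv_pos.2 hb'
          apply add_nonneg <;> split_ifs <;> first | exact le_rfl | exact le_of_lt (by assumption))
        (fun h => by
          have := congrFun h a
          simp [hab] at this
          linarith) (by
          have := ha.ne'
          have := hb.ne
          simp only [mul_add, Finset.sum_add_distrib, mul_ite, mul_zero, Finset.sum_ite_eq',
            Finset.mem_univ, if_true]
          rw [inv_neg]
          field_simp
          ring)
    have h' : ∀ i, i ≠ a → i ≠ b → g i (hmg v) = 0 := fun i h1 h2 => h i (by simp [h1, h2])
    have hs : c a * g a (hmg v) + c b * g b (hmg v) = 0 := by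
      rw [← hsum v hv, ← Finset.sum_subset (Finset.subset_univ {a, b}), Finset.sum_pair hab]
      intro i _ hi
      simp only [Finset.mem_insert, Finset.mem_singleton, not_or] at hi
      rw [h' i hi.1 hi.2, mul_zero]
    refine ⟨v, hv, c a * g a (hmg v), ?_, ?_⟩
    · refine lt_of_le_of_ne (mul_nonneg ha.le (hg0 a v hv)) fun h0 => ?_
      rw [← h0, zero_add] at hs
      have hga := (mul_eq_zero.1 h0.symm).resolve_left ha.ne'
      have hgb := (mul_eq_zero.1 hs).resolve_left hb.ne
      obtain ⟨i, hi⟩ := hne v hv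
      by_cases hia : i = a
      · subst hia; exact hi hga
      by_cases hib : i = b
      · subst hib; exact hi hgb
      exact hi (h' i hia hib)
    · intro i
      by_cases hia : i = a
      · subst hia
        have := ha.ne'
        simp only [if_true, if_neg hab, add_zero]
        field_simp
      by_cases hib : i = b
      · subst hib
        have h1 : c a * g a (hmg v) = -c i * g i (hmg v) := by linarith
        simp only [if_true, if_neg hia, zero_add]
        rw [h1, mul_comm (-c i) _, mul_inv_cancel_right₀ (neg_ne_zero.2 hb.ne)]
      · simp [hia, hib, h' i hia hib]
  choose r hrV u hu hr using hZray
  choose p hpV t ht hp using hABray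
  -- all `t a b` agree
  have hpa : ∀ a b, g a.1 (hmg (p a b)) ≠ 0 := by
    intro a b
    have hab : a.1 ≠ b.1 := by intro h; have := a.2; have := b.2; rw [h] at *; linarith
    rw [hp]
    simp [hab, a.2.ne', (ht a b).ne']
  have hpb : ∀ a b, g b.1 (hmg (p a b)) ≠ 0 := by
    intro a b
    have hab : b.1 ≠ a.1 := by intro h; have := a.2; have := b.2; rw [h] at *; linarith
    rw [hp]
    simp [hab, b.2.ne, (ht a b).ne']
  have hsq : ∀ a a' b b', a ≠ a' → b ≠ b' → t a b = t a b' ∧ t a b = t a' b := by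
    intro a a' b b' ha hb
    have hab : ∀ (a : {a // 0 < c a}) (b : {b // c b < 0}), a.1 ≠ b.1 := by
      intro a b h; have := a.2; have := b.2; rw [h] at *; linarith
    have ha1 : a.1 ≠ a'.1 := fun h => ha (Subtype.ext h)
    have hb1 : b.1 ≠ b'.1 := fun h => hb (Subtype.ext h)
    have heq : (t a b)⁻¹ • hmg (p a b) + (t a' b')⁻¹ • hmg (p a' b') =
        (t a b')⁻¹ • hmg (p a b') + (t a' b)⁻¹ • hmg (p a' b) := by
      apply hinj
      · exact add_mem (W.smul_mem _ (hVW _ (hpV _ _))) (W.smul_mem _ (hVW _ (hpV _ _)))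
      · exact add_mem (W.smul_mem _ (hVW _ (hpV _ _))) (W.smul_mem _ (hVW _ (hpV _ _)))
      · intro i
        simp only [map_add, map_smul, smul_eq_mul, hp]
        rw [inv_mul_cancel_left₀ (ht a b).ne', inv_mul_cancel_left₀ (ht a' b').ne',
          inv_mul_cancel_left₀ (ht a b').ne', inv_mul_cancel_left₀ (ht a' b).ne']
        ring
    have hn1 : p a b ≠ p a b' := by
      intro h
      apply hpb a b
      rw [h, hp]
      simp [hb1, (hab a b).symm]
    have hn2 : p a b ≠ p a' b := by
      intro h
      apply hpa a b
      rw [h, hp]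
      simp [ha1, hab a b]
    have e1 := four_aux _ _ _ _ _ _ _ _ (inv_pos.2 (ht a b)) (inv_pos.2 (ht a' b'))
      (inv_pos.2 (ht a b')) (inv_pos.2 (ht a' b)) (h01 _ (hpV _ _)) (h01 _ (hpV _ _))
      (h01 _ (hpV _ _)) (h01 _ (hpV _ _)) heq hn1
    rw [add_comm ((t a b')⁻¹ • _)] at heq
    have e2 := four_aux _ _ _ _ _ _ _ _ (inv_pos.2 (ht a b)) (inv_pos.2 (ht a' b'))
      (inv_pos.2 (ht a' b)) (inv_pos.2 (ht a b')) (h01 _ (hpV _ _)) (h01 _ (hpV _ _))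
      (h01 _ (hpV _ _)) (h01 _ (hpV _ _)) heq hn2
    exact ⟨inv_injective e2, inv_injective e1⟩
  have hA2' : ∀ a : {a // 0 < c a}, ∃ a' : {a // 0 < c a}, a ≠ a' := fun a => by
    obtain ⟨a', h1, h2⟩ := hA2 a.1 a.2
    exact ⟨⟨a', h2⟩, fun h => h1 (congrArg Subtype.val h).symm⟩
  have hB2' : ∀ b : {b // c b < 0}, ∃ b' : {b // c b < 0}, b ≠ b' := fun b => by
    obtain ⟨b', h1, h2⟩ := hB2 b.1 (by simpa using b.2)
    exact ⟨⟨b', by simpa using h2⟩, fun h => h1 (congrArg Subtype.val h).symm⟩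
  let A0 : {a // 0 < c a} := ⟨a0, ha0⟩
  let B0 : {b // c b < 0} := ⟨b0, by simpa using hb0⟩
  obtain ⟨t0, ht0, htt⟩ : ∃ t0 : ℝ, 0 < t0 ∧ ∀ a b, t a b = t0 := by
    refine ⟨t A0 B0, ht _ _, fun a b => ?_⟩
    have h1 : t a b = t a B0 := by
      by_cases hb : b = B0
      · rw [hb]
      · obtain ⟨a', ha'⟩ := hA2' a
        exact (hsq a a' b B0 ha' hb).1
    rw [h1]
    by_cases ha : a = A0
    · rw [ha]
    · obtain ⟨b', hb'⟩ := hB2' B0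
      exact (hsq a A0 B0 b' ha hb').2
  -- reindexing
  obtain ⟨n, hn, ⟨eA⟩⟩ : ∃ n : ℕ, 0 < n ∧ Nonempty (Fin (n + 1) ≃ {a // 0 < c a}) := by
    have : 1 < Fintype.card {a // 0 < c a} :=
      Fintype.one_lt_card_iff.2 ⟨A0, hA2' A0⟩
    refine ⟨Fintype.card {a // 0 < c a} - 1, by omega, ⟨Fintype.equivOfCardEq ?_⟩⟩
    rw [Fintype.card_fin]; omega
  obtain ⟨m, hm, ⟨eB⟩⟩ : ∃ n : ℕ, 0 < n ∧ Nonempty (Fin (n + 1) ≃ {b // c b < 0}) := by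
    have : 1 < Fintype.card {b // c b < 0} :=
      Fintype.one_lt_card_iff.2 ⟨B0, hB2' B0⟩
    refine ⟨Fintype.card {b // c b < 0} - 1, by omega, ⟨Fintype.equivOfCardEq ?_⟩⟩
    rw [Fintype.card_fin]; omega
  let k := Fintype.card {z // c z = 0}
  let eZ : Fin k ≃ {z // c z = 0} := (Fintype.equivFin _).symm
  let φ : ((Fin d → ℝ) × ℝ) →ₗ[ℝ] (Fin k → ℝ) × ((Fin (n + 1) ⊕ Fin (m + 1)) → ℝ) :=
    LinearMap.prod (LinearMap.pi fun z => (u (eZ z))⁻¹ • g (eZ z).1)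
      (LinearMap.pi (Sum.elim (fun i => (c (eA i).1 / t0) • g (eA i).1)
        (fun i => (-c (eB i).1 / t0) • g (eB i).1)))
  have hφ1 : ∀ x z, (φ x).1 z = (u (eZ z))⁻¹ * g (eZ z).1 x := fun _ _ => rfl
  have hφ2 : ∀ x i, (φ x).2 (Sum.inl i) = (c (eA i).1 / t0) * g (eA i).1 x := fun _ _ => rfl
  have hφ3 : ∀ x i, (φ x).2 (Sum.inr i) = (-c (eB i).1 / t0) * g (eB i).1 x := fun _ _ => rfl
  have hφinj : Set.InjOn φ W := by
    intro x hx y hy hxy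
    apply hinj x hx y hy
    intro i
    rcases lt_trichotomy (c i) 0 with h | h | h
    · have h1 := hφ3 x (eB.symm ⟨i, h⟩)
      rw [hxy, hφ3] at h1
      simp only [Equiv.apply_symm_apply] at h1
      exact (mul_left_cancel₀ (div_ne_zero (neg_ne_zero.2 h.ne) ht0.ne') h1).symm
    · have h1 := hφ1 x (eZ.symm ⟨i, h⟩)
      rw [hxy, hφ1] at h1
      simp only [Equiv.apply_symm_apply] at h1
      exact (mul_left_cancel₀ (inv_ne_zero (hu _).ne') h1).symm
    · have h1 := hφ2 x (eA.symm ⟨i, h⟩)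
      rw [hxy, hφ2] at h1
      simp only [Equiv.apply_symm_apply] at h1
      exact (mul_left_cancel₀ (div_ne_zero h.ne' ht0.ne') h1).symm
  have hφr : ∀ z, φ (hmg (r (eZ z))) = (Pi.single z 1, 0) := by
    intro z
    apply Prod.ext
    · ext w
      rw [hφ1, hr]
      show _ = (Pi.single z 1 : Fin k → ℝ) w
      rw [Pi.single_apply]
      by_cases hwz : w = z
      · subst hwz
        simp [(hu (eZ w)).ne']
      · have : (eZ w).1 ≠ (eZ z).1 := fun h => hwz (eZ.injective (Subtype.ext h))
        simp [this, hwz]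
    · ext i
      rcases i with i | i
      · rw [hφ2, hr]
        have : (eA i).1 ≠ (eZ z).1 := fun h => by
          have h1 := (eA i).2; have h2 := (eZ z).2; rw [h] at h1; linarith
        simp [this]
      · rw [hφ3, hr]
        have : (eB i).1 ≠ (eZ z).1 := fun h => by
          have h1 := (eB i).2; have h2 := (eZ z).2; rw [h] at h1; linarith
        simp [this]
  have hφp : ∀ i j, φ (hmg (p (eA i) (eB j))) =
      (0, Pi.single (Sum.inl i) 1 + Pi.single (Sum.inr j) 1) := by
    intro a b
    apply Prod.ext
    · ext z
      have h1 : (eZ z).1 ≠ (eA a).1 := fun h => by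
        have h1 := (eA a).2; have h2 := (eZ z).2; rw [h] at h2; linarith
      have h2 : (eZ z).1 ≠ (eB b).1 := fun h => by
        have h1 := (eB b).2; have h2 := (eZ z).2; rw [h] at h2; linarith
      rw [hφ1, hp]
      simp [h1, h2]
    · ext i
      rcases i with i | i
      · rw [hφ2, hp, htt]
        have h2 : (eA i).1 ≠ (eB b).1 := fun h => by
          have h1 := (eA i).2; have h2 := (eB b).2; rw [h] at h1; linarith
        by_cases hia : i = a
        · subst hia
          have := (eA i).2.ne'
          simp [h2]
          field_simp
        · have h1 : (eA i).1 ≠ (eA a).1 := fun h => hia (eA.injective (Subtype.ext h))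
          simp [h1, h2, Pi.single_apply, hia]
      · rw [hφ3, hp, htt]
        have h2 : (eB i).1 ≠ (eA a).1 := fun h => by
          have h1 := (eB i).2; have h2 := (eA a).2; rw [h] at h1; linarith
        by_cases hia : i = b
        · subst hia
          have := (eB i).2.ne
          simp [h2]
          field_simp
        · have h1 : (eB i).1 ≠ (eB b).1 := fun h => hia (eB.injective (Subtype.ext h))
          simp [h1, h2, Pi.single_apply, hia]
  refine ⟨k, n, m, hn, hm, φ, hφinj, ?_⟩
  -- every vertex is one of the listed ones
  have hall : ∀ v ∈ V, (∃ z, v = r (eZ z)) ∨ ∃ i j, v = p (eA i) (eB j) := by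
    intro v hv
    let pt : Fin k ⊕ (Fin (n + 1) × Fin (m + 1)) → Fin d → ℝ :=
      Sum.elim (fun z => r (eZ z)) (fun q => p (eA q.1) (eB q.2))
    have hpt : ∀ j, pt j ∈ V := by
      rintro (z | q)
      · exact hrV _
      · exact hpV _ _
    have hnn1 : ∀ z, 0 ≤ (φ (hmg v)).1 z := fun z => by
      rw [hφ1]; exact mul_nonneg (inv_nonneg.2 (hu _).le) (hg0 _ v hv)
    have hnn2 : ∀ z, 0 ≤ (φ (hmg v)).2 z := by
      rintro (i | i)
      · rw [hφ2]; exact mul_nonneg (div_nonneg (eA i).2.le ht0.le) (hg0 _ v hv)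
      · rw [hφ3]
        exact mul_nonneg (div_nonneg (neg_nonneg.2 (eB i).2.le) ht0.le) (hg0 _ v hv)
    have hbal : ∀ x ∈ W, ∑ a, (φ x).2 (Sum.inl a) = ∑ b, (φ x).2 (Sum.inr b) := by
      intro x hx
      have h0 : ∑ i, c i * g i x = 0 := (hc _).1 ⟨x, hx, fun _ => rfl⟩
      have h1 := sum_sign_split c (fun i => g i x)
      rw [h0] at h1
      simp_rw [hφ2, hφ3]
      rw [Equiv.sum_comp eA (fun a => c a.1 / t0 * g a.1 x),
        Equiv.sum_comp eB (fun a => -c a.1 / t0 * g a.1 x)]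
      have h2 : ∑ a : {a // 0 < c a}, c a.1 / t0 * g a.1 x =
          (∑ a : {a // 0 < c a}, c a.1 * g a.1 x) / t0 := by
        rw [Finset.sum_div]; exact Finset.sum_congr rfl fun _ _ => by ring
      have h3 : ∑ a : {a // c a < 0}, -c a.1 / t0 * g a.1 x =
          -(∑ a : {a // c a < 0}, c a.1 * g a.1 x) / t0 := by
        rw [← Finset.sum_neg_distrib, Finset.sum_div]
        exact Finset.sum_congr rfl fun _ _ => by ring
      rw [h2, h3, ← eq_neg_of_add_eq_zero_left h1]
    have hdec := full_real_decomp k n m (φ (hmg v)) hnn2 (hbal _ (hVW v hv))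
    have hpteq : ∀ j, (Sum.elim (fun z => ((Pi.single z (1 : ℝ) : Fin k → ℝ),
          (0 : (Fin (n + 1) ⊕ Fin (m + 1)) → ℝ)))
        (fun p => ((0 : Fin k → ℝ), Pi.single (Sum.inl p.1) (1 : ℝ) +
          Pi.single (Sum.inr p.2) (1 : ℝ))) j) = φ (hmg (pt j)) := by
      rintro (z | q)
      · exact (hφr z).symm
      · exact (hφp q.1 q.2).symm
    simp_rw [hpteq, ← map_smul, ← map_sum] at hdec
    have hv' := hφinj (hVW v hv) (sum_mem fun j _ => W.smul_mem _ (hVW _ (hpt j))) hdec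
    obtain ⟨j, hj⟩ := extreme01 pt _ (fun j => h01 _ (hpt j)) (by
      rintro (z | q)
      · exact hnn1 z
      · exact div_nonneg (mul_nonneg (hnn2 _) (hnn2 _)) (Finset.sum_nonneg fun _ _ => hnn2 _))
      v (h01 v hv) hv'
    rcases j with z | q
    · exact Or.inl ⟨z, hj⟩
    · exact Or.inr ⟨q.1, q.2, hj⟩
  ext y
  constructor
  · rintro ⟨s, hs, rfl⟩
    obtain ⟨v, hv, rfl⟩ := Finset.mem_image.1 (Finset.mem_coe.1 hs)
    rcases hall v hv with ⟨z, rfl⟩ | ⟨i, j, rfl⟩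
    · exact Or.inl ⟨z, (hφr z).symm⟩
    · exact Or.inr ⟨_, ⟨(i, j), rfl⟩, (hφp i j).symm⟩
  · rintro (⟨z, rfl⟩ | ⟨_, ⟨⟨i, j⟩, rfl⟩, rfl⟩)
    · exact ⟨_, Finset.mem_coe.2 (Finset.mem_image_of_mem _ (hrV (eZ z))), hφr z⟩
    · exact ⟨_, Finset.mem_coe.2 (Finset.mem_image_of_mem _ (hpV (eA i) (eB j))), hφp i j⟩

theorem stmt_10 (𝕜 : Type*) [Field 𝕜] (d e : ℕ)
    (V : Finset (Fin d → ℤ)) (hVne : V.Nonempty)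
    (h01 : ∀ v ∈ V, ∀ i, v i = 0 ∨ v i = 1)
    (P : Set (Fin d → ℝ)) (hP : P = convexHull ℝ (intCast '' (V : Set (Fin d → ℤ))))
    (hdim : Module.finrank ℝ (affineSpan ℝ P).direction = e)
    (hfacets : {F : Set (Fin d → ℝ) | IsFacet P F}.ncard = e + 2) :
    IsNormalPolytope (latticePts P) ∧
      ∃ n m l : ℕ, 0 < n ∧ 0 < m ∧ 0 < l ∧
        Nonempty (toricRing 𝕜 (latticePts P) ≃ₐ[𝕜]
          MvPolynomial (Fin (l - 1)) (toricRing 𝕜 (latticePts (simplexProd n m)))) := by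
  subst hP
  classical
  set V' : Finset (Fin d → ℝ) := V.image intCast with hV'
  have hcoe : (intCast '' (V : Set (Fin d → ℤ))) = (V' : Set (Fin d → ℝ)) := by
    rw [hV', Finset.coe_image]
  rw [hcoe] at hdim hfacets ⊢
  have hne : V'.Nonempty := hVne.image _
  have h01' : ∀ v ∈ V', ∀ i, v i = 0 ∨ v i = 1 := by
    intro v hv i
    obtain ⟨u, hu, rfl⟩ := Finset.mem_image.1 hv
    rcases h01 u hu i with h | h
    · left; simp [intCast, h]
    · right; simp [intCast, h]
  obtain ⟨g, hg0, hg1, hg2, hg3⟩ := facet_data V' hne hdim hfacets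
  have hW := finrank_W V' hne
  rw [hdim] at hW
  obtain ⟨k, n, m, hn, hm, φ, hinj, himg⟩ := core V' h01' hW g hg0 hg1 hg2 hg3
  have hset : prodCast '' latticeA (latticePts (convexHull ℝ (V' : Set (Fin d → ℝ)))) =
      (V'.image hmg : Set ((Fin d → ℝ) × ℝ)) := by
    ext y
    constructor
    · rintro ⟨_, ⟨v, hv, rfl⟩, rfl⟩
      have hv' : intCast v ∈ convexHull ℝ (V' : Set (Fin d → ℝ)) := hv
      obtain ⟨w, hw, hvw⟩ := (hmg_mem_hull V' _).1 hv'
      have hs : ∑ u ∈ V', w u = 1 := by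
        have := congrArg Prod.snd hvw
        simpa [Prod.snd_sum, hmg] using this.symm
      have hco : ∀ i, (v i : ℝ) = ∑ u ∈ V', w u * u i := by
        intro i
        have := congrFun (congrArg Prod.fst hvw) i
        simpa [Prod.fst_sum, hmg, Finset.sum_apply, intCast] using this
      have hv01 : ∀ i, intCast v i = 0 ∨ intCast v i = 1 := by
        intro i
        have hlo : (0 : ℝ) ≤ v i := by
          rw [hco]
          refine Finset.sum_nonneg fun u hu => mul_nonneg (hw u hu) ?_
          rcases h01' u hu i with h | h <;> rw [h] <;> norm_num
        have hhi : (v i : ℝ) ≤ 1 := by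
          rw [hco, ← hs]
          refine Finset.sum_le_sum fun u hu => mul_le_of_le_one_right (hw u hu) ?_
          rcases h01' u hu i with h | h <;> rw [h] <;> norm_num
        have h1 : 0 ≤ v i := by exact_mod_cast hlo
        have h2 : v i ≤ 1 := by exact_mod_cast hhi
        have h3 : v i = 0 ∨ v i = 1 := by omega
        rcases h3 with h | h
        · left; simp [intCast, h]
        · right; simp [intCast, h]
      obtain ⟨j, hj⟩ := extreme01 (fun j : V' => (j : Fin d → ℝ)) (fun j => w j)
        (fun j => h01' _ j.2) (fun j => hw _ j.2) (intCast v) hv01 (by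
          rw [hvw]
          exact (Finset.sum_coe_sort V' fun u => w u • hmg u).symm)
      refine Finset.mem_coe.2 (Finset.mem_image.2 ⟨j, j.2, ?_⟩)
      rw [← hj]
      simp [hmg, prodCast]
    · intro hy
      obtain ⟨u, hu, rfl⟩ := Finset.mem_image.1 (Finset.mem_coe.1 hy)
      obtain ⟨v, hv, rfl⟩ := Finset.mem_image.1 hu
      refine ⟨_, ⟨v, subset_convexHull ℝ _ (Finset.mem_coe.2 hu), rfl⟩, ?_⟩
      simp [hmg, prodCast]
  exact final_step 𝕜 d _ k n m hn hm φ (by rw [hset]; exact hinj) (by rw [hset]; exact himg)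

end
end

section
/- Let P ⊂ ℝ^d be a (0,1)-polytope whose lattice point set is partitioned as P ∩ ℤ^d = W ⊔ Z with W and Z nonempty, and suppose that every facet F of P satisfies W ⊆ F or Z ⊆ F. Then the toric ring of P decomposes as a tensor product: 𝕜[P] ≅ 𝕜[conv(W)] ⊗_𝕜 𝕜[conv(Z)] as 𝕜-algebras; equivalently, the toric ideal I_P equals the sum of the extensions to 𝕜[x_v : v ∈ P ∩ ℤ^d] of the toric ideals I_{conv(W)} ⊆ 𝕜[x_w : w ∈ W] and I_{conv(Z)} ⊆ 𝕜[x_z : z ∈ Z]. -/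
/-!
STATEMENT 11: if the lattice point set of a (0,1)-polytope `P` is partitioned
as `W ⊔ Z` (both nonempty) and every facet of `P` contains `W` or contains `Z`,
then `𝕜[P] ≅ 𝕜[conv W] ⊗_𝕜 𝕜[conv Z]`; equivalently the toric ideal `I_P` is
the sum of the extensions of `I_{conv W}` and `I_{conv Z}`.
-/

open scoped NNReal TensorProduct

noncomputable section

/-- The toric ideal of the integral polytope with lattice point set `L`:
the kernel of `𝕜[x_v : v ∈ L] → 𝕜[t₀, t₁^{±1}, …, t_d^{±1}]`, `x_v ↦ t^v t₀`. -/
def toricIdealOf (𝕜 : Type*) [Field 𝕜] {d : ℕ} (L : Set (Fin d → ℤ)) :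
    Ideal (MvPolynomial L 𝕜) :=
  RingHom.ker (MvPolynomial.aeval
    (fun v : L => AddMonoidAlgebra.single ((v : Fin d → ℤ), (1 : ℤ)) (1 : 𝕜)) :
      MvPolynomial L 𝕜 →ₐ[𝕜] AddMonoidAlgebra 𝕜 ((Fin d → ℤ) × ℤ))


/-- endpoint of the ray `l + t m` inside the dual cone -/
lemma exists_endpoint {E : Type*} [AddCommGroup E] [Module ℝ E] (V : Set E) (hV : V.Finite)
    (l m : E →ₗ[ℝ] ℝ) (hl : ∀ v ∈ V, 0 ≤ l v) (hlm : ∀ v ∈ V, l v = 0 → m v = 0)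
    (hneg : ∃ v ∈ V, m v < 0) :
    ∃ t : ℝ, 0 < t ∧ (∀ v ∈ V, 0 ≤ (l + t • m) v) ∧ ∃ v ∈ V, l v ≠ 0 ∧ (l + t • m) v = 0 := by
  have hfin : {v ∈ V | m v < 0}.Finite := hV.subset (Set.sep_subset _ _)
  obtain ⟨v, ⟨hvV, hvm⟩, hmin⟩ := hfin.exists_minimalFor (fun v => l v / (-m v)) _ hneg
  have hlv : l v ≠ 0 := fun h => by have := hlm v hvV h; linarith
  have hlv' : 0 < l v := lt_of_le_of_ne (hl v hvV) (Ne.symm hlv)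
  have hmv : 0 < - m v := by linarith
  refine ⟨l v / (-m v), by positivity, ?_, v, hvV, hlv, ?_⟩
  · intro x hx
    simp only [LinearMap.add_apply, LinearMap.smul_apply, smul_eq_mul]
    have hlx := hl x hx
    by_cases hmx : m x < 0
    · have h1 : l v / (-m v) ≤ l x / (-m x) := by
        rcases le_total (l v / (-m v)) (l x / (-m x)) with h | h
        · exact h
        · exact hmin ⟨hx, hmx⟩ h
      have hmx' : 0 < - m x := by linarith
      rw [le_div_iff₀ hmx'] at h1
      linarith
    · have : 0 ≤ l v / (-m v) := by positivity
      push Not at hmx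
      positivity
  · simp only [LinearMap.add_apply, LinearMap.smul_apply, smul_eq_mul]
    have : m v ≠ 0 := by linarith
    field_simp
    ring

lemma exists_facet_functional {E : Type*} [AddCommGroup E] [Module ℝ E] [FiniteDimensional ℝ E]
    (V : Set E) (hV : V.Finite) (u : E) (hu : u ∈ Submodule.span ℝ V)
    (h0 : ∃ l : E →ₗ[ℝ] ℝ, (∀ v ∈ V, 0 ≤ l v) ∧ l u ≠ 0) :
    ∃ l : E →ₗ[ℝ] ℝ, (∀ v ∈ V, 0 ≤ l v) ∧ l u ≠ 0 ∧
      Module.finrank ℝ (Submodule.span ℝ {v ∈ V | l v = 0}) + 1 =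
        Module.finrank ℝ (Submodule.span ℝ V) := by
  let S : Set (E →ₗ[ℝ] ℝ) := {l | (∀ v ∈ V, 0 ≤ l v) ∧ l u ≠ 0}
  let f : (E →ₗ[ℝ] ℝ) → Set E := fun l => {v ∈ V | l v = 0}
  have hfS : (f '' S).Finite := by
    refine hV.finite_subsets.subset ?_
    rintro _ ⟨l, _, rfl⟩
    exact Set.sep_subset _ _
  obtain ⟨l, hlS, hmax⟩ := Set.Finite.exists_maximalFor' f S hfS h0
  have key : ∀ l' : E →ₗ[ℝ] ℝ, (∀ v ∈ V, 0 ≤ l' v) → (∀ v ∈ V, l v = 0 → l' v = 0) →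
      (∃ v ∈ V, l v ≠ 0 ∧ l' v = 0) → l' u = 0 := by
    rintro l' h1 h2 ⟨v, hv, hv1, hv2⟩
    by_contra hne
    have := hmax (j := l') ⟨h1, hne⟩ (fun x hx => ⟨hx.1, h2 x hx.1 hx.2⟩)
    exact hv1 (this ⟨hv, hv2⟩).2
  refine ⟨l, hlS.1, hlS.2, ?_⟩
  obtain ⟨v0, hv0, hlv0⟩ : ∃ v ∈ V, l v ≠ 0 := by
    by_contra! h
    have : Submodule.span ℝ V ≤ LinearMap.ker l := Submodule.span_le.2 h
    exact hlS.2 (this hu)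
  have hker : Submodule.span ℝ (f l) ≤ LinearMap.ker l := Submodule.span_le.2 fun x hx => hx.2
  have hv0n : v0 ∉ Submodule.span ℝ (f l) := fun h => hlv0 (hker h)
  rw [← Submodule.finrank_sup_span_singleton hv0n]
  suffices h : Submodule.span ℝ (f l) ⊔ Submodule.span ℝ {v0} = Submodule.span ℝ V by rw [h]
  apply le_antisymm
  · refine sup_le (Submodule.span_mono (Set.sep_subset _ _)) (Submodule.span_mono ?_)
    simpa using hv0
  · rw [Submodule.span_le]
    by_contra hcon
    obtain ⟨v2, hv2, hv2n⟩ := Set.not_subset.1 hcon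
    obtain ⟨m, hm2, hm⟩ := Submodule.exists_le_ker_of_notMem hv2n
    have hm0 : m v0 = 0 := hm (Submodule.mem_sup_right (Submodule.mem_span_singleton_self v0))
    have hml : ∀ v ∈ V, l v = 0 → m v = 0 := fun v hv h =>
      hm (Submodule.mem_sup_left (Submodule.subset_span ⟨hv, h⟩))
    have step : ∀ m' : E →ₗ[ℝ] ℝ, m' v0 = 0 → (∀ v ∈ V, l v = 0 → m' v = 0) →
        (∃ t : ℝ, 0 < t ∧ l u + t * m' u = 0) ∨ m' u = 0 := by
      intro m' h0' hml'
      by_cases hneg : ∃ v ∈ V, m' v < 0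
      · left
        obtain ⟨t, ht, ht1, v, hv, hv1, hv2⟩ := exists_endpoint V hV l m' hlS.1 hml' hneg
        refine ⟨t, ht, ?_⟩
        have := key _ ht1 (fun x hx hx0 => by simp [hx0, hml' x hx hx0]) ⟨v, hv, hv1, hv2⟩
        simpa using this
      · right
        push Not at hneg
        exact key m' hneg hml' ⟨v0, hv0, hlv0, h0'⟩
    have hlu := hlS.2
    have neg1 : ∃ m' : E →ₗ[ℝ] ℝ, m' v0 = 0 ∧ (∀ v ∈ V, l v = 0 → m' v = 0) ∧
        ∃ v ∈ V, m' v < 0 := by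
      rcases lt_or_gt_of_ne hm2 with h | h
      · exact ⟨m, hm0, hml, v2, hv2, h⟩
      · exact ⟨-m, by simp [hm0], fun v hv h => by simp [hml v hv h], v2, hv2, by simpa using h⟩
    obtain ⟨m', h0', hml', hneg⟩ := neg1
    obtain ⟨t, ht, ht1, v, hv, hv1, hv2⟩ := exists_endpoint V hV l m' hlS.1 hml' hneg
    have e1 := key _ ht1 (fun x hx hx0 => by simp [hx0, hml' x hx hx0]) ⟨v, hv, hv1, hv2⟩
    simp only [LinearMap.add_apply, LinearMap.smul_apply, smul_eq_mul] at e1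
    rcases step (-m') (by simp [h0']) (fun v hv h => by simp [hml' v hv h]) with ⟨s, hs, e2⟩ | e2
    · simp only [LinearMap.neg_apply] at e2
      have : (s + t) * m' u = 0 := by linarith
      have : m' u = 0 := by
        rcases mul_eq_zero.1 this with h | h
        · linarith
        · exact h
      rw [this] at e1
      exact hlu (by linarith)
    · have : m' u = 0 := by simpa using e2
      rw [this] at e1
      exact hlu (by linarith)

lemma finrank_homog {E : Type*} [AddCommGroup E] [Module ℝ E] [FiniteDimensional ℝ E]
    (S : Set E) (hS : S.Nonempty) :
    Module.finrank ℝ (Submodule.span ℝ ((fun x => (x, (1 : ℝ))) '' S)) =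
      Module.finrank ℝ (vectorSpan ℝ S) + 1 := by
  obtain ⟨p, hp⟩ := hS
  let A : Set (E × ℝ) := (fun x => (x, (1 : ℝ))) '' S
  have h1 : Submodule.span ℝ A =
      (vectorSpan ℝ S).map (LinearMap.inl ℝ E ℝ) ⊔ Submodule.span ℝ {(p, (1 : ℝ))} := by
    apply le_antisymm
    · rw [Submodule.span_le]
      rintro _ ⟨x, hx, rfl⟩
      have : ((x, (1 : ℝ)) : E × ℝ) = LinearMap.inl ℝ E ℝ (x - p) + (p, 1) := by simp
      simp only [SetLike.mem_coe]
      rw [this]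
      exact Submodule.add_mem_sup (Submodule.mem_map_of_mem (vsub_mem_vectorSpan ℝ hx hp))
        (Submodule.mem_span_singleton_self _)
    · refine sup_le ?_ (Submodule.span_mono ?_)
      · rw [Submodule.map_le_iff_le_comap, vectorSpan_def, Submodule.span_le]
        rintro _ ⟨x, hx, y, hy, rfl⟩
        have : LinearMap.inl ℝ E ℝ (x - y) = (x, 1) - (y, 1) := by simp
        simp only [SetLike.mem_coe, Submodule.mem_comap, vsub_eq_sub]
        rw [this]
        exact Submodule.sub_mem _ (Submodule.subset_span ⟨x, hx, rfl⟩)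
          (Submodule.subset_span ⟨y, hy, rfl⟩)
      · rintro _ rfl
        exact ⟨p, hp, rfl⟩
  change Module.finrank ℝ (Submodule.span ℝ A) = _
  rw [h1, Submodule.finrank_sup_span_singleton]
  · rw [(Submodule.equivMapOfInjective (LinearMap.inl ℝ E ℝ) LinearMap.inl_injective (vectorSpan ℝ S)).finrank_eq]
  · rintro ⟨x, _, hx⟩
    simpa using congrArg Prod.snd hx

/-- homogenisation of an integer set -/
def homR {d : ℕ} (W : Set (Fin d → ℤ)) : Set ((Fin d → ℝ) × ℝ) :=
  (fun x => (x, (1 : ℝ))) '' (intCast '' W)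

lemma spans_disjoint (d : ℕ)
    (W Z : Set (Fin d → ℤ)) (hWne : W.Nonempty) (hZne : Z.Nonempty)
    (hdisj : Disjoint W Z) (hWZfin : (W ∪ Z).Finite)
    (h01 : ∀ v ∈ W ∪ Z, ∀ i, v i = 0 ∨ v i = 1)
    (P : Set (Fin d → ℝ)) (hP : P = convexHull ℝ (intCast '' (W ∪ Z)))
    (hfacet : ∀ F : Set (Fin d → ℝ), IsFacet P F →
      intCast '' W ⊆ F ∨ intCast '' Z ⊆ F)
    (u : (Fin d → ℝ) × ℝ) (huW : u ∈ Submodule.span ℝ (homR W))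
    (huZ : u ∈ Submodule.span ℝ (homR Z)) : u = 0 := by
  by_contra hu0
  have hfin : (homR (W ∪ Z)).Finite := (hWZfin.image _).image _
  have hWsub : homR W ⊆ homR (W ∪ Z) := by unfold homR; gcongr; simp
  have huV := Submodule.span_mono hWsub huW
  obtain ⟨l, hl, hlu, hrk⟩ := exists_facet_functional (homR (W ∪ Z)) hfin u huV (by
    by_cases h2 : u.2 = 0
    · have h1 : u.1 ≠ 0 := fun h => hu0 (Prod.ext h h2)
      obtain ⟨i, hi⟩ := Function.ne_iff.1 h1
      refine ⟨(LinearMap.proj i).comp (LinearMap.fst ℝ (Fin d → ℝ) ℝ), ?_, hi⟩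
      rintro _ ⟨_, ⟨v, hv, rfl⟩, rfl⟩
      rcases h01 v hv i with h | h <;> simp [intCast, h]
    · refine ⟨LinearMap.snd ℝ _ ℝ, ?_, h2⟩
      rintro _ ⟨_, ⟨v, hv, rfl⟩, rfl⟩
      simp)
  set V : Set (Fin d → ℝ) := intCast '' (W ∪ Z) with hVdef
  have hVne : V.Nonempty := (hWne.mono Set.subset_union_left).image _
  let g : (Fin d → ℝ) → ℝ := fun x => l (x, 1)
  have hg : ∀ x, g x = l (x, 0) + l (0, 1) := fun x => by
    change l (x, 1) = _
    rw [← map_add]; simp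
  have hgV : ∀ v ∈ V, 0 ≤ g v := fun v hv => hl _ ⟨v, hv, rfl⟩
  let Z0 : Set (Fin d → ℝ) := {v ∈ V | g v = 0}
  have hZ0 : {v ∈ homR (W ∪ Z) | l v = 0} = (fun x => (x, (1 : ℝ))) '' Z0 := by
    ext y; constructor
    · rintro ⟨⟨v, hv, rfl⟩, h⟩
      exact ⟨v, ⟨hv, h⟩, rfl⟩
    · rintro ⟨v, ⟨hv, h⟩, rfl⟩
      exact ⟨⟨v, hv, rfl⟩, h⟩
  rw [hZ0] at hrk
  have hrkV : Module.finrank ℝ (Submodule.span ℝ (homR (W ∪ Z))) =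
      Module.finrank ℝ (vectorSpan ℝ V) + 1 := finrank_homog V hVne
  have hposV : 0 < Module.finrank ℝ (vectorSpan ℝ V) := by
    obtain ⟨w, hw⟩ := hWne
    obtain ⟨z, hz⟩ := hZne
    have hwz : w ≠ z := fun h => Set.disjoint_left.1 hdisj hw (h ▸ hz)
    have hm : intCast w - intCast z ∈ vectorSpan ℝ V :=
      vsub_mem_vectorSpan ℝ ⟨w, Or.inl hw, rfl⟩ ⟨z, Or.inr hz, rfl⟩
    rw [Module.finrank_pos_iff_exists_ne_zero]
    refine ⟨⟨_, hm⟩, fun h => hwz ?_⟩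
    have h' : intCast w = intCast z := sub_eq_zero.1 (congrArg Subtype.val h)
    funext i
    have := congrFun h' i
    simpa [intCast] using this
  have hZ0ne : Z0.Nonempty := by
    by_contra h
    rw [Set.not_nonempty_iff_eq_empty] at h
    rw [h, hrkV, Set.image_empty, Submodule.span_empty, finrank_bot] at hrk
    omega
  rw [finrank_homog Z0 hZ0ne, hrkV] at hrk
  -- the facet
  let F : Set (Fin d → ℝ) := {x ∈ P | g x = 0}
  have hVP : V ⊆ P := hP ▸ subset_convexHull ℝ V
  have hgP : ∀ x ∈ P, 0 ≤ g x := by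
    have hc : Convex ℝ {x | 0 ≤ g x} := by
      have : {x | 0 ≤ g x} = {x | -l (0, 1) ≤ (l.comp (LinearMap.inl ℝ _ ℝ)) x} := by
        ext x; simp only [Set.mem_ofPred_eq, hg]; simp [neg_le_iff_add_nonneg]
      rw [this]
      exact convex_halfSpace_ge (LinearMap.isLinear _) _
    intro x hx
    rw [hP] at hx
    exact convexHull_min hgV hc hx
  obtain ⟨z0, hz0V, hz0⟩ := hZ0ne
  have hFne : F.Nonempty := ⟨z0, hVP hz0V, hz0⟩
  have hFexp : IsExposed ℝ P F := by
    intro _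
    refine ⟨-(LinearMap.toContinuousLinearMap (l.comp (LinearMap.inl ℝ _ ℝ))), ?_⟩
    ext x
    have e : ∀ y, (-(LinearMap.toContinuousLinearMap (l.comp (LinearMap.inl ℝ _ ℝ)))) y
        = - g y + l (0, 1) := fun y => by rw [hg]; simp
    simp only [F, Set.mem_ofPred_eq, e]
    constructor
    · rintro ⟨h1, h2⟩
      exact ⟨h1, fun y hy => by have := hgP y hy; linarith⟩
    · rintro ⟨h1, h2⟩
      refine ⟨h1, ?_⟩
      have := h2 z0 (hVP hz0V)
      have := hgP x h1
      linarith
  have hFhull : F ⊆ convexHull ℝ Z0 := by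
    rintro x ⟨hxP, hx0⟩
    have hVfin : V.Finite := hWZfin.image _
    rw [hP, ← hVfin.coe_toFinset, Finset.mem_convexHull'] at hxP
    obtain ⟨c, hc0, hc1, hcx⟩ := hxP
    have hgx : g x = ∑ v ∈ hVfin.toFinset, c v * g v := by
      simp only [hg, mul_add, Finset.sum_add_distrib, ← Finset.sum_mul, hc1, one_mul]
      congr 1
      have := map_sum (l.comp (LinearMap.inl ℝ (Fin d → ℝ) ℝ)) (fun v => c v • v) hVfin.toFinset
      rw [hcx] at this
      simpa using this
    have hterm : ∀ v ∈ hVfin.toFinset, c v * g v = 0 := by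
      rw [hx0] at hgx
      refine (Finset.sum_eq_zero_iff_of_nonneg ?_).1 hgx.symm
      intro v hv
      exact mul_nonneg (hc0 v hv) (hgV v (by simpa using hv))
    have hsum : ∀ {M : Type} [AddCommMonoid M] (φ : (Fin d → ℝ) → M),
        (∀ v, c v = 0 → φ v = 0) →
        ∑ v ∈ hVfin.toFinset.filter (fun v => g v = 0), φ v = ∑ v ∈ hVfin.toFinset, φ v := by
      intro M _ φ hφ
      refine Finset.sum_filter_of_ne ?_
      intro v hv hne
      by_contra hgv
      rcases mul_eq_zero.1 (hterm v hv) with h | h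
      · exact hne (hφ v h)
      · exact hgv h
    have hZ0e : Z0 = ↑(hVfin.toFinset.filter (fun v => g v = 0)) := by
      ext v; simp [Z0]
    rw [hZ0e, Finset.mem_convexHull']
    refine ⟨c, fun v hv => hc0 v (Finset.mem_filter.1 hv).1, ?_, ?_⟩
    · rw [hsum c (fun v h => h), hc1]
    · rw [hsum (fun v => c v • v) (fun v h => by simp [h]), hcx]
  have hFspan : affineSpan ℝ F = affineSpan ℝ Z0 := by
    apply le_antisymm
    · rw [← affineSpan_convexHull Z0]
      exact affineSpan_mono ℝ hFhull
    · exact affineSpan_mono ℝ fun x hx => ⟨hVP hx.1, hx.2⟩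
  have hF : IsFacet P F := by
    refine ⟨hFexp, hFne, ?_⟩
    rw [hFspan, hP, affineSpan_convexHull, direction_affineSpan, direction_affineSpan]
    omega
  have fin : ∀ (Y : Set (Fin d → ℤ)), intCast '' Y ⊆ F → u ∈ Submodule.span ℝ (homR Y) →
      l u = 0 := by
    intro Y hY huY
    have : Submodule.span ℝ (homR Y) ≤ LinearMap.ker l := by
      rw [Submodule.span_le]
      rintro _ ⟨v, hv, rfl⟩
      exact (hY hv).2
    exact this huY
  rcases hfacet F hF with h | h
  · exact hlu (fin W h huW)
  · exact hlu (fin Z h huZ)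

lemma aeval_monomial_single {𝕜 σ M : Type*} [Field 𝕜] [AddCommMonoid M] (c : σ → M)
    (a : σ →₀ ℕ) (r : 𝕜) :
    MvPolynomial.aeval (fun v => AddMonoidAlgebra.single (c v) (1 : 𝕜)) (MvPolynomial.monomial a r)
      = AddMonoidAlgebra.single (Finsupp.linearCombination ℕ c a) r := by
  have h1 : ∀ a : σ →₀ ℕ, MvPolynomial.aeval (fun v => AddMonoidAlgebra.single (c v) (1 : 𝕜))
      (MvPolynomial.monomial a (1 : 𝕜))
      = AddMonoidAlgebra.single (Finsupp.linearCombination ℕ c a) (1 : 𝕜) := by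
    intro a
    induction a using Finsupp.induction_linear with
    | zero => rw [← MvPolynomial.one_def, map_one, map_zero, AddMonoidAlgebra.one_def]
    | add f g hf hg =>
      have e : MvPolynomial.monomial (f + g) (1 : 𝕜) =
          MvPolynomial.monomial f 1 * MvPolynomial.monomial g 1 := by
        rw [MvPolynomial.monomial_mul, one_mul]
      rw [e, map_mul, hf, hg, map_add, AddMonoidAlgebra.single_mul_single, one_mul]
    | single v n =>
      rw [MvPolynomial.aeval_monomial]
      simp [AddMonoidAlgebra.single_pow]
  have : MvPolynomial.monomial a r = r • MvPolynomial.monomial a (1 : 𝕜) := by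
    simp [MvPolynomial.smul_monomial]
  rw [this, map_smul, h1]
  simp

lemma ker_aeval_le {𝕜 σ M : Type*} [Field 𝕜] [AddCommMonoid M] (c : σ → M)
    (J : Ideal (MvPolynomial σ 𝕜))
    (hJ : ∀ a b : σ →₀ ℕ, Finsupp.linearCombination ℕ c a = Finsupp.linearCombination ℕ c b →
      MvPolynomial.monomial a (1 : 𝕜) - MvPolynomial.monomial b 1 ∈ J)
    (f : MvPolynomial σ 𝕜)
    (hf : MvPolynomial.aeval (fun v => AddMonoidAlgebra.single (c v) (1 : 𝕜)) f = 0) : f ∈ J := by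
  let φ : (σ →₀ ℕ) → M := fun a => Finsupp.linearCombination ℕ c a
  let s : AddMonoidAlgebra 𝕜 M →ₗ[𝕜] MvPolynomial σ 𝕜 :=
    (Finsupp.linearCombination 𝕜
      (fun m => MvPolynomial.monomial (Function.invFun φ m) (1 : 𝕜))).comp
      (AddMonoidAlgebra.coeffLinearEquiv 𝕜).toLinearMap
  have hs : ∀ m r, s (AddMonoidAlgebra.single m r) =
      r • MvPolynomial.monomial (Function.invFun φ m) (1 : 𝕜) := by
    intro m r
    simp [s]
  have key : ∀ g : MvPolynomial σ 𝕜,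
      g - s (MvPolynomial.aeval (fun v => AddMonoidAlgebra.single (c v) (1 : 𝕜)) g) ∈ J := by
    intro g
    induction g using MvPolynomial.induction_on' with
    | monomial a r =>
      rw [aeval_monomial_single, hs]
      have : MvPolynomial.monomial a r = r • MvPolynomial.monomial a (1 : 𝕜) := by
        simp [MvPolynomial.smul_monomial]
      rw [this, ← smul_sub]
      refine Submodule.smul_of_tower_mem J r (hJ _ _ ?_)
      exact (Function.invFun_eq (f := φ) ⟨a, rfl⟩).symm
    | add p q hp hq =>
      rw [map_add, map_add, add_sub_add_comm]
      exact J.add_mem hp hq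
  have := key f
  rwa [hf, map_zero, sub_zero] at this

/-- casting homogenised integer vectors to real ones -/
def castHom (d : ℕ) : (Fin d → ℤ) × ℤ →+ (Fin d → ℝ) × ℝ where
  toFun x := (intCast x.1, (x.2 : ℝ))
  map_zero' := by ext <;> simp [intCast]
  map_add' x y := by ext <;> simp [intCast]

lemma castHom_injective (d : ℕ) : Function.Injective (castHom d) := by
  rintro ⟨x, a⟩ ⟨y, b⟩ h
  have h1 : intCast x = intCast y := congrArg Prod.fst h
  have h2 : (a : ℝ) = b := congrArg Prod.snd h
  refine Prod.ext ?_ (by exact_mod_cast h2)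
  funext i
  have := congrFun h1 i
  simpa [intCast] using this

lemma castHom_mem_span {d : ℕ} {W : Set (Fin d → ℤ)} {x : (Fin d → ℤ) × ℤ}
    (hx : x ∈ AddSubmonoid.closure (latticeA W)) :
    castHom d x ∈ Submodule.span ℝ (homR W) := by
  induction hx using AddSubmonoid.closure_induction with
  | mem x hx =>
    obtain ⟨v, hv, rfl⟩ := hx
    exact Submodule.subset_span ⟨_, ⟨v, hv, rfl⟩, by simp [castHom]⟩
  | zero => simp
  | add x y _ _ hx hy => rw [map_add]; exact add_mem hx hy

lemma linComb_mem_closure {d : ℕ} {W : Set (Fin d → ℤ)} (a : W →₀ ℕ) :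
    Finsupp.linearCombination ℕ (fun v : W => ((v : Fin d → ℤ), (1 : ℤ))) a ∈
      AddSubmonoid.closure (latticeA W) := by
  rw [Finsupp.linearCombination_apply]
  refine AddSubmonoid.sum_mem _ fun v _ => AddSubmonoid.nsmul_mem _ ?_ _
  exact AddSubmonoid.subset_closure ⟨v, v.2, rfl⟩

lemma finsupp_split {α : Type*} (W Z : Set α) (a : ↑(W ∪ Z) →₀ ℕ) :
    ∃ (b : W →₀ ℕ) (c : Z →₀ ℕ),
      a = Finsupp.mapDomain (Set.inclusion (Set.subset_union_left : W ⊆ W ∪ Z)) b +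
        Finsupp.mapDomain (Set.inclusion (Set.subset_union_right : Z ⊆ W ∪ Z)) c := by
  induction a using Finsupp.induction_linear with
  | zero => exact ⟨0, 0, by simp⟩
  | add f g hf hg =>
    obtain ⟨b, c, rfl⟩ := hf
    obtain ⟨b', c', rfl⟩ := hg
    refine ⟨b + b', c + c', ?_⟩
    rw [Finsupp.mapDomain_add, Finsupp.mapDomain_add]
    abel
  | single v n =>
    obtain ⟨v, hv | hv⟩ := v
    · exact ⟨Finsupp.single ⟨v, hv⟩ n, 0, by simp [Finsupp.mapDomain_single, Set.inclusion]⟩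
    · exact ⟨0, Finsupp.single ⟨v, hv⟩ n, by simp [Finsupp.mapDomain_single, Set.inclusion]⟩

/-- the tensor product of two monoid algebras, as algebras -/
def tensorAlgEquiv (𝕜 M N : Type*) [Field 𝕜] [AddCommMonoid M] [AddCommMonoid N] :
    AddMonoidAlgebra 𝕜 M ⊗[𝕜] AddMonoidAlgebra 𝕜 N ≃ₐ[𝕜] AddMonoidAlgebra 𝕜 (M × N) :=
  Algebra.TensorProduct.algEquivOfLinearEquivTensorProduct (AddMonoidAlgebra.tensorEquiv 𝕜)
    (by
      intro a₁ a₂ b₁ b₂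
      induction a₁ using AddMonoidAlgebra.induction_linear with
      | zero => simp
      | add x y hx hy => simp only [add_mul, TensorProduct.add_tmul, map_add, hx, hy]
      | single m r =>
      induction a₂ using AddMonoidAlgebra.induction_linear with
      | zero => simp
      | add x y hx hy => simp only [mul_add, TensorProduct.add_tmul, map_add, hx, hy]
      | single m' r' =>
      induction b₁ using AddMonoidAlgebra.induction_linear with
      | zero => simp
      | add x y hx hy => simp only [add_mul, TensorProduct.tmul_add, map_add, hx, hy]
      | single n s =>
      induction b₂ using AddMonoidAlgebra.induction_linear with
      | zero => simp
      | add x y hx hy => simp only [mul_add, TensorProduct.tmul_add, map_add, hx, hy]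
      | single n' s' =>
        simp only [AddMonoidAlgebra.single_mul_single, AddMonoidAlgebra.tensorEquiv_single_tmul_single,
          Prod.mk_add_mk]
        congr 1
        ring)
    (by simp [AddMonoidAlgebra.one_def, ← Prod.mk_zero_zero])

lemma latticeA_union {α : Type*} (W Z : Set (α → ℤ)) :
    latticeA (W ∪ Z) = latticeA W ∪ latticeA Z := Set.image_union ..

lemma nonempty_closure_equiv {G : Type*} [AddCommGroup G] (A B C : AddSubmonoid G)
    (hC : C = A ⊔ B)
    (h : ∀ a ∈ A, ∀ a' ∈ A, ∀ b ∈ B, ∀ b' ∈ B, a + b = a' + b' → a = a' ∧ b = b') :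
    Nonempty (C ≃+ A × B) := by
  subst hC
  let f : A × B →+ (A ⊔ B : AddSubmonoid G) :=
    AddMonoidHom.coprod (AddSubmonoid.inclusion le_sup_left) (AddSubmonoid.inclusion le_sup_right)
  have hf : ∀ x, (f x : G) = x.1 + x.2 := fun x => rfl
  refine ⟨(AddEquiv.ofBijective f ⟨?_, ?_⟩).symm⟩
  · rintro ⟨a, b⟩ ⟨a', b'⟩ hab
    have h1 := congrArg Subtype.val hab
    rw [hf, hf] at h1
    obtain ⟨h2, h3⟩ := h _ a.2 _ a'.2 _ b.2 _ b'.2 h1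
    exact Prod.ext (Subtype.ext h2) (Subtype.ext h3)
  · rintro ⟨x, hx⟩
    obtain ⟨a, ha, b, hb, rfl⟩ := AddSubmonoid.mem_sup.1 hx
    exact ⟨(⟨a, ha⟩, ⟨b, hb⟩), Subtype.ext rfl⟩

lemma map_toricIdeal_le (𝕜 : Type*) [Field 𝕜] {d : ℕ} {W V : Set (Fin d → ℤ)} (h : W ⊆ V) :
    Ideal.map (MvPolynomial.rename (Set.inclusion h)).toRingHom (toricIdealOf 𝕜 W) ≤
      toricIdealOf 𝕜 V := by
  rw [Ideal.map_le_iff_le_comap]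
  intro f hf
  rw [toricIdealOf, RingHom.mem_ker] at hf
  rw [Ideal.mem_comap, toricIdealOf, RingHom.mem_ker]
  change MvPolynomial.aeval _ (MvPolynomial.rename _ f) = 0
  rw [MvPolynomial.aeval_rename]
  exact hf

lemma monomial_sub_mem (𝕜 : Type*) [Field 𝕜] {d : ℕ} {W : Set (Fin d → ℤ)} (a b : W →₀ ℕ)
    (h : Finsupp.linearCombination ℕ (fun v : W => ((v : Fin d → ℤ), (1 : ℤ))) a =
      Finsupp.linearCombination ℕ (fun v : W => ((v : Fin d → ℤ), (1 : ℤ))) b) :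
    MvPolynomial.monomial a (1 : 𝕜) - MvPolynomial.monomial b 1 ∈ toricIdealOf 𝕜 W := by
  rw [toricIdealOf, RingHom.mem_ker, map_sub,
    aeval_monomial_single (fun v : W => ((v : Fin d → ℤ), (1 : ℤ))),
    aeval_monomial_single (fun v : W => ((v : Fin d → ℤ), (1 : ℤ))), h, sub_self]

theorem stmt_11 (𝕜 : Type*) [Field 𝕜] (d : ℕ)
    (W Z : Set (Fin d → ℤ)) (hWne : W.Nonempty) (hZne : Z.Nonempty)
    (hdisj : Disjoint W Z) (hWZfin : (W ∪ Z).Finite)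
    (h01 : ∀ v ∈ W ∪ Z, ∀ i, v i = 0 ∨ v i = 1)
    (P : Set (Fin d → ℝ)) (hP : P = convexHull ℝ (intCast '' (W ∪ Z)))
    (hlat : latticePts P = W ∪ Z)
    (hfacet : ∀ F : Set (Fin d → ℝ), IsFacet P F →
      intCast '' W ⊆ F ∨ intCast '' Z ⊆ F) :
    Nonempty (toricRing 𝕜 (W ∪ Z) ≃ₐ[𝕜] (toricRing 𝕜 W ⊗[𝕜] toricRing 𝕜 Z)) ∧
      toricIdealOf 𝕜 (W ∪ Z) =
        Ideal.map (MvPolynomial.rename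
            (Set.inclusion (Set.subset_union_left : W ⊆ W ∪ Z))).toRingHom
          (toricIdealOf 𝕜 W) ⊔
        Ideal.map (MvPolynomial.rename
            (Set.inclusion (Set.subset_union_right : Z ⊆ W ∪ Z))).toRingHom
          (toricIdealOf 𝕜 Z) := by
  have huniq : ∀ a ∈ AddSubmonoid.closure (latticeA W), ∀ a' ∈ AddSubmonoid.closure (latticeA W),
      ∀ b ∈ AddSubmonoid.closure (latticeA Z), ∀ b' ∈ AddSubmonoid.closure (latticeA Z),
      a + b = a' + b' → a = a' ∧ b = b' := by
    intro a ha a' ha' b hb b' hb' h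
    have h1 : a - a' = b' - b := by
      rw [sub_eq_sub_iff_add_eq_add, h, add_comm]
    have h2 : castHom d (a - a') = 0 := by
      refine spans_disjoint d W Z hWne hZne hdisj hWZfin h01 P hP hfacet _ ?_ ?_
      · rw [map_sub]
        exact sub_mem (castHom_mem_span ha) (castHom_mem_span ha')
      · rw [h1, map_sub]
        exact sub_mem (castHom_mem_span hb') (castHom_mem_span hb)
    have h3 : a - a' = 0 := castHom_injective d (by rw [h2, map_zero])
    have h4 : a = a' := sub_eq_zero.1 h3
    exact ⟨h4, by rw [h4] at h; exact add_left_cancel h⟩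
  constructor
  · obtain ⟨e⟩ := nonempty_closure_equiv _ _ (AddSubmonoid.closure (latticeA (W ∪ Z)))
      (by rw [latticeA_union, AddSubmonoid.closure_union]) huniq
    exact ⟨(AddMonoidAlgebra.domCongr 𝕜 𝕜 e).trans (tensorAlgEquiv 𝕜 _ _).symm⟩
  · apply le_antisymm
    · intro f hf
      refine ker_aeval_le
        (fun v : ↑(W ∪ Z) => ((v : Fin d → ℤ), (1 : ℤ))) _ ?_ f hf
      intro a b hab
      obtain ⟨a1, a2, rfl⟩ := finsupp_split W Z a
      obtain ⟨b1, b2, rfl⟩ := finsupp_split W Z b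
      simp only [map_add, Finsupp.linearCombination_mapDomain] at hab
      obtain ⟨h1, h2⟩ := huniq _ (linComb_mem_closure a1) _ (linComb_mem_closure b1)
        _ (linComb_mem_closure a2) _ (linComb_mem_closure b2) hab
      have m1 := Ideal.mem_map_of_mem (MvPolynomial.rename
            (Set.inclusion (Set.subset_union_left : W ⊆ W ∪ Z))).toRingHom
            (monomial_sub_mem 𝕜 a1 b1 h1)
      have m2 := Ideal.mem_map_of_mem (MvPolynomial.rename
            (Set.inclusion (Set.subset_union_right : Z ⊆ W ∪ Z))).toRingHom
            (monomial_sub_mem 𝕜 a2 b2 h2)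
      have split : ∀ x y : ↑(W ∪ Z) →₀ ℕ, MvPolynomial.monomial (x + y) (1 : 𝕜) =
          MvPolynomial.monomial x 1 * MvPolynomial.monomial y 1 := fun x y => by
        rw [MvPolynomial.monomial_mul, one_mul]
      rw [split, split]
      have e1 := Ideal.mul_mem_right (MvPolynomial.monomial (Finsupp.mapDomain (Set.inclusion
        (Set.subset_union_right : Z ⊆ W ∪ Z)) a2) (1 : 𝕜)) _ m1
      have e2 := Ideal.mul_mem_left _ (MvPolynomial.monomial (Finsupp.mapDomain (Set.inclusion
        (Set.subset_union_left : W ⊆ W ∪ Z)) b1) (1 : 𝕜)) m2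
      have e3 := Submodule.add_mem_sup e1 e2
      convert e3 using 1
      simp only [AlgHom.toRingHom_eq_coe, RingHom.coe_coe, map_sub, MvPolynomial.rename_monomial]
      ring
    · exact sup_le (map_toricIdeal_le 𝕜 _) (map_toricIdeal_le 𝕜 _)

end
end

section
/- Let Q1 = conv({(0,0,0,0), (1,1,0,0), (1,0,1,0), (0,1,1,0), (0,0,0,1), (1,1,1,1)}) ⊂ ℝ^4. For every integer m ≥ 0 the (0,1)-polytope Q1 × [0,1]^m ⊂ ℝ^{4+m} is not normal: the vector (1,1,1,0, 0,…,0, 2) ∈ ℤ^{5+m} (first three coordinates 1, last coordinate 2, all other coordinates 0) lies in ℤA(Q1 × [0,1]^m) ∩ ℝ≥0A(Q1 × [0,1]^m) but not in ℕA(Q1 × [0,1]^m). In particular Q1 itself (the case m = 0) is a non-normal (0,1)-polytope. -/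
/-!
STATEMENT 12: `Q1 = conv({0000, 1100, 1010, 0110, 0001, 1111}) ⊆ ℝ⁴`.  For every
`m ≥ 0` the polytope `Q1 × [0,1]^m` is not normal: the vector
`(1,1,1,0,0,…,0,2)` lies in `ℤA ∩ ℝ≥0A` but not in `ℕA`.
-/

open scoped NNReal

noncomputable section

/-- The six vertices (= lattice points) of `Q1`. -/
def V1 : Set (Fin 4 → ℤ) :=
  {![0,0,0,0], ![1,1,0,0], ![1,0,1,0], ![0,1,1,0], ![0,0,0,1], ![1,1,1,1]}

/-- The lattice points of `Q1 × [0,1]^m`: pairs `(v, w)` with `v` a vertex of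
`Q1` and `w ∈ {0,1}^m`. -/
def cubeProdLattice (m : ℕ) : Set ((Fin 4 ⊕ Fin m) → ℤ) :=
  {v | ∃ a ∈ V1, ∃ w : Fin m → ℤ, (∀ i, w i = 0 ∨ w i = 1) ∧ v = Sum.elim a w}

/-- The witness vector `(1,1,1,0,0,…,0,2) ∈ ℤ^{5+m}`. -/
def witness (m : ℕ) : ((Fin 4 ⊕ Fin m) → ℤ) × ℤ :=
  (Sum.elim ![1,1,1,0] 0, 2)

/-- The lattice point `(a, 0, 1)` for `a` a vertex of `Q1`. -/
theorem mem_latticeA_zero (m : ℕ) (a : Fin 4 → ℤ) (ha : a ∈ V1) :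
    ((Sum.elim a 0, 1) : ((Fin 4 ⊕ Fin m) → ℤ) × ℤ) ∈ latticeA (cubeProdLattice m) :=
  ⟨_, ⟨a, ha, 0, fun _ => Or.inl rfl, rfl⟩, rfl⟩

/-- On `ℕA` the fourth coordinate is nonnegative, and if it vanishes then the sum of the
first three coordinates is even. -/
theorem parity_of_mem (m : ℕ) (x : ((Fin 4 ⊕ Fin m) → ℤ) × ℤ)
    (hx : x ∈ AddSubmonoid.closure (latticeA (cubeProdLattice m))) :
    0 ≤ x.1 (Sum.inl 3) ∧ (x.1 (Sum.inl 3) = 0 →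
      (x.1 (Sum.inl 0) + x.1 (Sum.inl 1) + x.1 (Sum.inl 2)) % 2 = 0) := by
  induction hx using AddSubmonoid.closure_induction with
  | mem x hx =>
    obtain ⟨v, ⟨a, ha, w, -, rfl⟩, rfl⟩ := hx
    simp only [V1, Set.mem_insert_iff, Set.mem_singleton_iff] at ha
    rcases ha with rfl | rfl | rfl | rfl | rfl | rfl <;> simp
  | zero => simp
  | add x y _ _ hx hy =>
    simp only [Prod.fst_add, Pi.add_apply]
    omega

theorem witness_group (m : ℕ) :
    witness m ∈ AddSubgroup.closure (latticeA (cubeProdLattice m)) := by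
  have h0 := AddSubgroup.subset_closure (mem_latticeA_zero m ![0,0,0,0] (by simp [V1]))
  have h1 := AddSubgroup.subset_closure (mem_latticeA_zero m ![0,0,0,1] (by simp [V1]))
  have h2 := AddSubgroup.subset_closure (mem_latticeA_zero m ![1,1,1,1] (by simp [V1]))
  convert add_mem (sub_mem h2 h1) (add_mem h0 h0) using 1
  refine Prod.ext ?_ (by simp [witness])
  funext i
  rcases i with i | i
  · fin_cases i <;> simp [witness]
  · simp [witness]

theorem witness_cone (m : ℕ) :
    prodCast (witness m) ∈
      Submodule.span ℝ≥0 (prodCast '' latticeA (cubeProdLattice m)) := by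
  have key (a : Fin 4 → ℤ) (ha : a ∈ V1) :=
    Submodule.smul_mem _ (1/2 : ℝ≥0) (Submodule.subset_span (R := ℝ≥0)
      (Set.mem_image_of_mem prodCast (mem_latticeA_zero m a ha)))
  have h0 := key ![0,0,0,0] (by simp [V1])
  have h1 := key ![1,1,0,0] (by simp [V1])
  have h2 := key ![1,0,1,0] (by simp [V1])
  have h3 := key ![0,1,1,0] (by simp [V1])
  convert add_mem (add_mem h0 h1) (add_mem h2 h3) using 1
  refine Prod.ext ?_ ?_
  · funext i
    rcases i with i | i
    · fin_cases i <;> simp [witness, prodCast, intCast, NNReal.smul_def] <;> norm_num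
    · simp [witness, prodCast, intCast]
  · simp [witness, prodCast, NNReal.smul_def]
    norm_num

theorem witness_not_monoid (m : ℕ) :
    witness m ∉ AddSubmonoid.closure (latticeA (cubeProdLattice m)) := by
  intro h
  have := (parity_of_mem m _ h).2
  simp [witness] at this

theorem stmt_12 (m : ℕ) :
    (witness m ∈ AddSubgroup.closure (latticeA (cubeProdLattice m)) ∧
      prodCast (witness m) ∈
        Submodule.span ℝ≥0 (prodCast '' latticeA (cubeProdLattice m)) ∧
      witness m ∉ AddSubmonoid.closure (latticeA (cubeProdLattice m))) ∧
    ¬ IsNormalPolytope (cubeProdLattice m) := by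
  refine ⟨⟨witness_group m, witness_cone m, witness_not_monoid m⟩, fun h => ?_⟩
  exact witness_not_monoid m ((h _).2 ⟨witness_group m, witness_cone m⟩)

end
end
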